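/- If x ∈ (0,1) is an irrational algebraic number, then for every integer base q ≥ 2 the complexity function p(n) of its base-q digit sequence satisfies liminf_{n→∞} p(n)/n = +∞ (Adamczewski–Bugeaud). -/

import Mathlib

open Filter MeasureTheory Topology
open scoped Classical

/-- The `(n+1)`-st digit (i.e. `ε_{n+1}`, `0`-indexed by `n`) of the base-`q` expansion of `x`,
chosen as the greedy expansion (never eventually equal to `q - 1`). -/
noncomputable def qdigit (q : ℕ) (x : ℝ) (n : ℕ) : ℕ :=
  (⌊x * (q : ℝ) ^ (n + 1)⌋).toNat % q

/-- The complexity function of `x` to base `q`: the number of distinct words of length `n`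
occurring as blocks of consecutive digits in the base-`q` digit sequence of `x`. -/
noncomputable def qComplexity (q : ℕ) (x : ℝ) (n : ℕ) : ℕ :=
  Set.ncard {w : Fin n → ℕ | ∃ k : ℕ, ∀ i : Fin n, qdigit q x (k + (i : ℕ)) = w i}

namespace AB
open MvPolynomial

/-- Multi-index binomial coefficient. -/
def mb {m : ℕ} (A J : Fin m →₀ ℕ) : ℕ := ∏ i, (A i).choose (J i)

/-- Hasse derivative. -/
noncomputable def hd {m : ℕ} {R : Type*} [CommRing R] (J : Fin m →₀ ℕ) :
    MvPolynomial (Fin m) R →ₗ[R] MvPolynomial (Fin m) R :=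
  (MvPolynomial.basisMonomials (Fin m) R).constr R
    (fun A => monomial (A - J) ((mb A J : ℕ) : R))

lemma hd_monomial {m : ℕ} {R : Type*} [CommRing R] (J A : Fin m →₀ ℕ) (a : R) :
    hd J (monomial A a) = monomial (A - J) ((mb A J : R) * a) := by
  have h1 : (monomial A a : MvPolynomial (Fin m) R) = a • monomial A 1 := by
    rw [smul_monomial, smul_eq_mul, mul_one]
  have h2 : hd J (monomial A (1 : R)) = monomial (A - J) ((mb A J : ℕ) : R) := by
    have := (MvPolynomial.basisMonomials (Fin m) R).constr_basis R
      (fun A => monomial (A - J) ((mb A J : ℕ) : R)) A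
    rw [MvPolynomial.coe_basisMonomials] at this
    exact this
  rw [h1, map_smul, h2, smul_monomial, smul_eq_mul, mul_comm]

lemma mb_eq_zero {m : ℕ} {A J : Fin m →₀ ℕ} (h : ¬ J ≤ A) : mb A J = 0 := by
  rw [Finsupp.le_def] at h
  push Not at h
  obtain ⟨i, hi⟩ := h
  exact Finset.prod_eq_zero (Finset.mem_univ i) (Nat.choose_eq_zero_of_lt hi)

lemma coeff_hd {m : ℕ} {R : Type*} [CommRing R] (J B : Fin m →₀ ℕ)
    (P : MvPolynomial (Fin m) R) :
    coeff B (hd J P) = (mb (B + J) J : R) * coeff (B + J) P := by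
  induction P using MvPolynomial.induction_on' with
  | add p q hp hq => rw [map_add, coeff_add, hp, hq, coeff_add]; ring
  | monomial A a =>
    rw [hd_monomial, coeff_monomial, coeff_monomial]
    by_cases h : J ≤ A
    · have : A - J = B ↔ A = B + J := by
        constructor
        · rintro rfl; exact (tsub_add_cancel_of_le h).symm
        · rintro rfl; simp
      by_cases h2 : A = B + J
      · rw [if_pos (this.2 h2), if_pos h2, h2]
      · rw [if_neg (fun h3 => h2 (this.1 h3)), if_neg h2, mul_zero]
    · have : A ≠ B + J := by
        rintro rfl; exact h (by simp)
      rw [mb_eq_zero h, if_neg this]; simp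

lemma mb_add_single {m : ℕ} (A J : Fin m →₀ ℕ) (i : Fin m) :
    mb (A + Finsupp.single i 1) J = mb A J + if i ∈ J.support then mb A (J - Finsupp.single i 1)
      else 0 := by
  unfold mb
  have key : ∀ (F : Fin m → ℕ), ∏ j, F j = F i * ∏ j ∈ Finset.univ.erase i, F j := fun F =>
    (Finset.mul_prod_erase _ _ (Finset.mem_univ i)).symm
  have e1 : ∏ j ∈ Finset.univ.erase i, ((A + Finsupp.single i 1 : Fin m →₀ ℕ) j).choose (J j)
      = ∏ j ∈ Finset.univ.erase i, (A j).choose (J j) := by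
    apply Finset.prod_congr rfl
    intro j hj
    have : j ≠ i := (Finset.mem_erase.1 hj).1
    simp [this.symm]
  have e2 : ∏ j ∈ Finset.univ.erase i, (A j).choose ((J - Finsupp.single i 1 : Fin m →₀ ℕ) j)
      = ∏ j ∈ Finset.univ.erase i, (A j).choose (J j) := by
    apply Finset.prod_congr rfl
    intro j hj
    have : j ≠ i := (Finset.mem_erase.1 hj).1
    simp [this.symm]
  rw [key, key, key (fun j => (A j).choose ((J - Finsupp.single i 1 : Fin m →₀ ℕ) j)), e1, e2]
  by_cases h : i ∈ J.support
  · rw [if_pos h]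
    have h0 : J i ≠ 0 := Finsupp.mem_support_iff.1 h
    obtain ⟨c, hc⟩ := Nat.exists_eq_succ_of_ne_zero h0
    simp only [Finsupp.add_apply, Finsupp.single_eq_same, Finsupp.tsub_apply, hc]
    rw [Nat.succ_eq_add_one, Nat.choose_succ_succ]
    simp; ring
  · rw [if_neg h]
    have h0 : J i = 0 := by simpa using h
    simp [h0]

lemma hd_mul_X {m : ℕ} {R : Type*} [CommRing R] (J : Fin m →₀ ℕ) (i : Fin m)
    (P : MvPolynomial (Fin m) R) :
    hd J (P * X i) = hd J P * X i + if i ∈ J.support then hd (J - Finsupp.single i 1) P else 0 := by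
  induction P using MvPolynomial.induction_on' with
  | add p q hp hq =>
    rw [add_mul, map_add, hp, hq, map_add, map_add]
    split_ifs <;> ring
  | monomial A a =>
    have hX : ∀ (B : Fin m →₀ ℕ) (b : R), monomial B b * X i
        = monomial (B + Finsupp.single i 1) b := by
      intro B b
      rw [X, monomial_mul, mul_one]
    rw [hX, hd_monomial, hd_monomial, hX, hd_monomial, mb_add_single]
    have f1 : (monomial (A + Finsupp.single i 1 - J) ((mb A J : R) * a) : MvPolynomial (Fin m) R)
        = monomial (A - J + Finsupp.single i 1) ((mb A J : R) * a) := by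
      by_cases h : J ≤ A
      · rw [tsub_add_eq_add_tsub h]
      · rw [mb_eq_zero h]; simp
    by_cases h : i ∈ J.support
    · have hle : Finsupp.single i 1 ≤ J := by
        rw [Finsupp.single_le_iff]
        exact Nat.one_le_iff_ne_zero.2 (Finsupp.mem_support_iff.1 h)
      have f2 : A + Finsupp.single i 1 - J = A - (J - Finsupp.single i 1) := by
        ext j
        have := (Finsupp.le_def.1 hle) j
        simp only [Finsupp.tsub_apply, Finsupp.add_apply]
        omega
      rw [if_pos h, if_pos h, ← f1, ← f2, ← map_add]
      push_cast; ring_nf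
    · rw [if_neg h, if_neg h, add_zero, add_zero, f1]

/-- `P(X) ↦ P(X+Y)`. -/
noncomputable def Phi {m : ℕ} {R : Type*} [CommRing R] :
    MvPolynomial (Fin m) R →ₐ[R] MvPolynomial (Fin m) (MvPolynomial (Fin m) R) :=
  aeval (fun i => X i + C (X i))

lemma coeff_Phi {m : ℕ} {R : Type*} [CommRing R] (P : MvPolynomial (Fin m) R) :
    ∀ J : Fin m →₀ ℕ, coeff J (Phi P) = hd J P := by
  induction P using MvPolynomial.induction_on with
  | C a =>
    intro J
    have : Phi (C a : MvPolynomial (Fin m) R) = C (C a) := by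
      unfold Phi
      rw [aeval_C]; rfl
    rw [this, coeff_C, ← monomial_zero', hd_monomial]
    split_ifs with h
    · subst h; simp [mb]
    · rw [mb_eq_zero]
      · simp
      · intro h2
        exact h (le_antisymm h2 (zero_le)).symm
  | add p q hp hq => intro J; rw [map_add, coeff_add, hp, hq, map_add]
  | mul_X p i hp =>
    intro J
    have : Phi (p * X i) = Phi p * X i + C (X i) * Phi p := by
      rw [map_mul]
      have : Phi (X i : MvPolynomial (Fin m) R) = X i + C (X i) := by
        unfold Phi; rw [aeval_X]
      rw [this, mul_add, mul_comm _ (C (X i))]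
    rw [this, coeff_add, coeff_C_mul, coeff_mul_X', hd_mul_X, hp]
    split_ifs with h
    · rw [hp]; ring
    · rw [hp]; ring

lemma hd_mul {m : ℕ} {R : Type*} [CommRing R] (J : Fin m →₀ ℕ)
    (P Q : MvPolynomial (Fin m) R) :
    hd J (P * Q) = ∑ x ∈ Finset.HasAntidiagonal.antidiagonal J, hd x.1 P * hd x.2 Q := by
  rw [← coeff_Phi, map_mul, coeff_mul]
  simp_rw [coeff_Phi]

lemma mb_comp {m : ℕ} (B I J : Fin m →₀ ℕ) :
    mb (B + J) J * mb (B + J + I) I = mb (I + J) I * mb (B + (I + J)) (I + J) := by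
  unfold mb
  rw [← Finset.prod_mul_distrib, ← Finset.prod_mul_distrib]
  apply Finset.prod_congr rfl
  intro i _
  simp only [Finsupp.add_apply]
  have := Nat.choose_mul (n := B i + J i + I i) (k := I i + J i) (s := I i) (by omega)
  have e1 : B i + J i + I i - I i = B i + J i := by omega
  have e2 : I i + J i - I i = J i := by omega
  rw [e1, e2] at this
  have e3 : B i + (I i + J i) = B i + J i + I i := by omega
  rw [e3]
  linarith

lemma hd_hd {m : ℕ} {R : Type*} [CommRing R] (I J : Fin m →₀ ℕ)
    (P : MvPolynomial (Fin m) R) :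
    hd J (hd I P) = (mb (I + J) I : R) • hd (I + J) P := by
  ext B
  rw [coeff_hd, coeff_hd, coeff_smul, coeff_hd, smul_eq_mul, ← mul_assoc, ← mul_assoc]
  have h := mb_comp B I J
  have e3 : B + J + I = B + (I + J) := by abel
  rw [e3] at h ⊢
  rw [← Nat.cast_mul, h]; push_cast; ring

lemma hd_map {m : ℕ} {R S : Type*} [CommRing R] [CommRing S] (f : R →+* S) (J : Fin m →₀ ℕ)
    (P : MvPolynomial (Fin m) R) : hd J (map f P) = map f (hd J P) := by
  ext B
  rw [coeff_hd, coeff_map, coeff_map, coeff_hd, map_mul, map_natCast]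

lemma hd_support {m : ℕ} {R : Type*} [CommRing R] (J : Fin m →₀ ℕ)
    (P : MvPolynomial (Fin m) R) (i : Fin m) : (hd J P).degreeOf i ≤ P.degreeOf i := by
  rw [degreeOf_le_iff]
  intro B hB
  rw [mem_support_iff, coeff_hd] at hB
  have h2 : B + J ∈ P.support := by
    rw [mem_support_iff]; exact right_ne_zero_of_mul hB
  have := (degreeOf_le_iff (n := i) (f := P)).1 le_rfl _ h2
  simp only [Finsupp.add_apply] at this
  omega

/-- The `ℓ¹` norm of coefficients. -/
noncomputable def n1 {σ R : Type*} [SeminormedCommRing R] (P : MvPolynomial σ R) : ℝ :=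
  ∑ A ∈ P.support, ‖coeff A P‖

section n1
variable {σ R : Type*} [SeminormedCommRing R]

lemma n1_nonneg (P : MvPolynomial σ R) : 0 ≤ n1 P := Finset.sum_nonneg fun _ _ => norm_nonneg _

lemma n1_eq (P : MvPolynomial σ R) {S : Finset (σ →₀ ℕ)} (h : P.support ⊆ S) :
    n1 P = ∑ A ∈ S, ‖coeff A P‖ := by
  apply Finset.sum_subset h
  intro A _ hA
  rw [notMem_support_iff.1 hA, norm_zero]

lemma norm_coeff_le_n1 (P : MvPolynomial σ R) (A : σ →₀ ℕ) : ‖coeff A P‖ ≤ n1 P := by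
  rw [n1_eq P (S := insert A P.support) (Finset.subset_insert _ _)]
  exact Finset.single_le_sum (f := fun A => ‖coeff A P‖) (fun _ _ => norm_nonneg _)
    (Finset.mem_insert_self _ _)

lemma n1_add_le (P Q : MvPolynomial σ R) : n1 (P + Q) ≤ n1 P + n1 Q := by
  rw [n1_eq P (S := P.support ∪ Q.support) Finset.subset_union_left,
    n1_eq Q (S := P.support ∪ Q.support) Finset.subset_union_right,
    n1_eq (P + Q) (S := P.support ∪ Q.support) support_add, ← Finset.sum_add_distrib]
  apply Finset.sum_le_sum
  intro A _
  rw [coeff_add]; exact norm_add_le _ _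

lemma n1_zero : n1 (0 : MvPolynomial σ R) = 0 := by simp [n1]

lemma n1_sum_le {ι : Type*} (S : Finset ι) (f : ι → MvPolynomial σ R) :
    n1 (∑ i ∈ S, f i) ≤ ∑ i ∈ S, n1 (f i) := by
  induction S using Finset.induction_on with
  | empty => simp [n1_zero]
  | insert a S ha ih =>
    rw [Finset.sum_insert ha, Finset.sum_insert ha]
    exact (n1_add_le _ _).trans (by linarith)

lemma n1_monomial_le (A : σ →₀ ℕ) (a : R) : n1 (monomial A a) ≤ ‖a‖ := by
  rw [n1_eq (monomial A a) (S := {A}) support_monomial_subset]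
  simp

lemma n1_mul_le (P Q : MvPolynomial σ R) : n1 (P * Q) ≤ n1 P * n1 Q := by
  have : P * Q = ∑ A ∈ P.support, ∑ B ∈ Q.support,
      monomial (A + B) (coeff A P * coeff B Q) := by
    conv_lhs => rw [P.as_sum, Q.as_sum, Finset.sum_mul_sum]
    simp_rw [monomial_mul]
  have e : n1 P * n1 Q = ∑ A ∈ P.support, ∑ B ∈ Q.support, ‖coeff A P‖ * ‖coeff B Q‖ := by
    unfold n1; rw [Finset.sum_mul_sum]
  rw [this, e]
  refine (n1_sum_le _ _).trans (Finset.sum_le_sum fun A _ => ?_)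
  refine (n1_sum_le _ _).trans (Finset.sum_le_sum fun B _ => ?_)
  exact (n1_monomial_le _ _).trans (norm_mul_le _ _)

lemma n1_C_le (a : R) : n1 (C a : MvPolynomial σ R) ≤ ‖a‖ := n1_monomial_le _ _

lemma n1_one_le [NormOneClass R] : n1 (1 : MvPolynomial σ R) ≤ 1 := by
  have := n1_C_le (σ := σ) (1 : R)
  rwa [C_1, norm_one] at this

lemma n1_prod_le [NormOneClass R] {ι : Type*} (S : Finset ι) (f : ι → MvPolynomial σ R) :
    n1 (∏ i ∈ S, f i) ≤ ∏ i ∈ S, n1 (f i) := by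
  induction S using Finset.induction_on with
  | empty => simpa using n1_one_le
  | insert a S ha ih =>
    rw [Finset.prod_insert ha, Finset.prod_insert ha]
    exact (n1_mul_le _ _).trans (mul_le_mul_of_nonneg_left ih (n1_nonneg _))

lemma n1_pow_le [NormOneClass R] (P : MvPolynomial σ R) (n : ℕ) : n1 (P ^ n) ≤ n1 P ^ n := by
  have := n1_prod_le (Finset.range n) (fun _ => P)
  simpa using this

lemma n1_neg (P : MvPolynomial σ R) : n1 (-P) = n1 P := by
  simp [n1]

lemma n1_det_le [NormOneClass R] {k : ℕ} (M : Matrix (Fin k) (Fin k) (MvPolynomial σ R)) (E : ℝ)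
    (h : ∀ i j, n1 (M i j) ≤ E) : n1 M.det ≤ (k.factorial : ℝ) * E ^ k := by
  rw [Matrix.det_apply]
  refine (n1_sum_le _ _).trans ?_
  have : ∀ p ∈ (Finset.univ : Finset (Equiv.Perm (Fin k))),
      n1 (Equiv.Perm.sign p • ∏ i, M (p i) i) ≤ E ^ k := by
    intro p _
    have h1 : n1 (Equiv.Perm.sign p • ∏ i, M (p i) i) = n1 (∏ i, M (p i) i) := by
      rcases Int.units_eq_one_or (Equiv.Perm.sign p) with h | h
      · rw [h, one_smul]
      · rw [h, Units.neg_smul, one_smul, n1_neg]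
    rw [h1]
    refine (n1_prod_le _ _).trans ?_
    calc ∏ i, n1 (M (p i) i) ≤ ∏ _i : Fin k, E :=
          Finset.prod_le_prod (fun _ _ => n1_nonneg _) (fun _ _ => h _ _)
      _ = E ^ k := by simp
  refine (Finset.sum_le_sum this).trans ?_
  rw [Finset.sum_const, Finset.card_univ, Fintype.card_perm, Fintype.card_fin, nsmul_eq_mul]
end n1

lemma degreeOf_det_le {σ R : Type*} [CommRing R] {k : ℕ}
    (M : Matrix (Fin k) (Fin k) (MvPolynomial σ R)) (l : σ) (e : ℕ)
    (h : ∀ i j, (M i j).degreeOf l ≤ e) : M.det.degreeOf l ≤ k * e := by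
  rw [Matrix.det_apply]
  refine (degreeOf_sum_le _ _ _).trans (Finset.sup_le fun p _ => ?_)
  have h1 : degreeOf l (Equiv.Perm.sign p • ∏ i, M (p i) i) ≤ degreeOf l (∏ i, M (p i) i) := by
    rw [degreeOf_le_iff]
    intro A hA
    apply (degreeOf_le_iff (n := l) (f := ∏ i, M (p i) i)).1 le_rfl
    rcases Int.units_eq_one_or (Equiv.Perm.sign p) with h | h
    · rwa [h, one_smul] at hA
    · rwa [h, Units.neg_smul, one_smul, support_neg] at hA
  refine h1.trans ((degreeOf_prod_le _ _ _).trans ?_)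
  calc ∑ i, (M (p i) i).degreeOf l ≤ ∑ _i : Fin k, e := Finset.sum_le_sum fun _ _ => h _ _
    _ = k * e := by simp

lemma n1_hd_le {m : ℕ} (J : Fin m →₀ ℕ) (P : MvPolynomial (Fin m) ℤ) (d : Fin m → ℕ)
    (hd' : ∀ i, P.degreeOf i ≤ d i) : n1 (hd J P) ≤ 2 ^ (∑ i, d i) * n1 P := by
  conv_lhs => rw [P.as_sum, map_sum]
  refine (n1_sum_le _ _).trans ?_
  rw [n1, Finset.mul_sum]
  apply Finset.sum_le_sum
  intro A hA
  rw [hd_monomial]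
  refine (n1_monomial_le _ _).trans ((norm_mul_le _ _).trans ?_)
  apply mul_le_mul_of_nonneg_right _ (norm_nonneg _)
  have : mb A J ≤ 2 ^ (∑ i, d i) := by
    rw [← Finset.prod_pow_eq_pow_sum]
    apply Finset.prod_le_prod' 
    intro i _
    exact (Nat.choose_le_two_pow _ _).trans
      (Nat.pow_le_pow_right (by norm_num) (degreeOf_le_iff.1 (hd' i) A hA))
  simp only [Int.norm_eq_abs, Int.cast_natCast, Nat.abs_cast]
  exact_mod_cast this

end AB

namespace AB
open MvPolynomial

lemma mb_mul_apply {r : ℕ} (A I : Fin r →₀ ℕ) (h : Fin r) :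
    (mb A I : ℚ) * (A h : ℚ) = ((I h : ℚ) + 1) * mb A (I + Finsupp.single h 1) + (I h : ℚ) * mb A I := by
  unfold mb
  have key : ∀ (F : Fin r → ℕ), ∏ j, F j = F h * ∏ j ∈ Finset.univ.erase h, F j := fun F =>
    (Finset.mul_prod_erase _ _ (Finset.mem_univ h)).symm
  have e1 : ∏ j ∈ Finset.univ.erase h, (A j).choose ((I + Finsupp.single h 1 : Fin r →₀ ℕ) j)
      = ∏ j ∈ Finset.univ.erase h, (A j).choose (I j) := by
    apply Finset.prod_congr rfl
    intro j hj
    have : j ≠ h := (Finset.mem_erase.1 hj).1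
    simp [this.symm]
  rw [key, key (fun j => (A j).choose ((I + Finsupp.single h 1 : Fin r →₀ ℕ) j)), e1]
  simp only [Finsupp.add_apply, Finsupp.single_eq_same]
  have h1 := Nat.choose_succ_right_eq (A h) (I h)
  have h2 : ((A h).choose (I h + 1) : ℚ) * ((I h : ℚ) + 1) = (A h).choose (I h) * ((A h : ℚ) - I h) := by
    by_cases hle : I h ≤ A h
    · rw [← Nat.cast_sub hle]; exact_mod_cast h1
    · push Not at hle
      rw [Nat.choose_eq_zero_of_lt hle, Nat.choose_eq_zero_of_lt (by omega)]; simp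
  push_cast
  linear_combination (-(∏ j ∈ Finset.univ.erase h, ((A j).choose (I j) : ℚ))) * h2

lemma interp {r : ℕ} {ι : Type*} (S : Finset ι) (A : ι → Fin r →₀ ℕ) (hA : Set.InjOn A S)
    (c : ι → ℚ) (k : ℕ) (hk : S.card ≤ k)
    (h : ∀ I : Fin r →₀ ℕ, I.degree < k → ∑ i ∈ S, c i * mb (A i) I = 0) : ∀ i ∈ S, c i = 0 := by
  intro i0 hi0
  rcases isEmpty_or_nonempty (Fin r) with hr | hr
  · have hS : S = {i0} := by
      ext i
      rw [Finset.mem_singleton]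
      constructor
      · intro hi; exact hA hi hi0 (Subsingleton.elim _ _)
      · rintro rfl; exact hi0
    have := h 0 (by rw [hS] at hk; simp at hk ⊢; omega)
    rw [hS] at this
    simpa [mb] using this
  have hex : ∀ i : ι, ∃ t : Fin r, i ∈ S.erase i0 → A i t ≠ A i0 t := by
    intro i
    by_cases hi : i ∈ S.erase i0
    · rw [Finset.mem_erase] at hi
      have : A i ≠ A i0 := fun e => hi.1 (hA hi.2 hi0 e)
      obtain ⟨t, ht⟩ := DFunLike.ne_iff.1 this
      exact ⟨t, fun _ => ht⟩
    · exact ⟨hr.some, fun h => absurd h hi⟩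
  choose t ht using hex
  have claim : ∀ T : Finset ι, T ⊆ S.erase i0 → ∀ I : Fin r →₀ ℕ, I.degree + T.card < k →
      ∑ i ∈ S, c i * (∏ j ∈ T, ((A i (t j) : ℚ) - A j (t j))) * mb (A i) I = 0 := by
    intro T
    induction T using Finset.induction_on with
    | empty => intro _ I hI; simpa using h I (by simpa using hI)
    | insert a T ha ih =>
      intro hT I hI
      rw [Finset.card_insert_of_notMem ha] at hI
      have hT' := (Finset.insert_subset_iff.1 hT).2
      have i1 := ih hT' I (by omega)
      have i2 := ih hT' (I + Finsupp.single (t a) 1) (by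
        rw [map_add, Finsupp.degree_single]; omega)
      have : ∑ i ∈ S, c i * (∏ j ∈ insert a T, ((A i (t j) : ℚ) - A j (t j))) * mb (A i) I
          = ((I (t a) : ℚ) + 1) * (∑ i ∈ S, c i * (∏ j ∈ T, ((A i (t j) : ℚ) - A j (t j))) *
              mb (A i) (I + Finsupp.single (t a) 1))
            + ((I (t a) : ℚ) - A a (t a)) *
              (∑ i ∈ S, c i * (∏ j ∈ T, ((A i (t j) : ℚ) - A j (t j))) * mb (A i) I) := by
        rw [Finset.mul_sum, Finset.mul_sum, ← Finset.sum_add_distrib]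
        apply Finset.sum_congr rfl
        intro i _
        rw [Finset.prod_insert ha]
        have := mb_mul_apply (A i) I (t a)
        linear_combination (c i * ∏ j ∈ T, ((A i (t j) : ℚ) - A j (t j))) * this
      rw [this, i1, i2]; ring
  have hc := Finset.card_erase_of_mem hi0
  have hpos : 0 < S.card := Finset.card_pos.2 ⟨i0, hi0⟩
  have := claim (S.erase i0) subset_rfl 0 (by rw [hc]; simp; omega)
  rw [Finset.sum_eq_single_of_mem i0 hi0] at this
  · have h1 : (mb (A i0) 0 : ℚ) = 1 := by simp [mb]
    rw [h1, mul_one] at this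
    rcases mul_eq_zero.1 this with h | h
    · exact h
    · exfalso
      rw [Finset.prod_eq_zero_iff] at h
      obtain ⟨j, hj, hj2⟩ := h
      apply ht j hj
      have := sub_eq_zero.1 hj2
      exact_mod_cast this.symm
  · intro j hj hne
    rw [Finset.prod_eq_zero (i := j) (Finset.mem_erase.2 ⟨hne, hj⟩) (sub_self _)]; simp

lemma coeff_monomial_mul_hd {r : ℕ} (I B : Fin r →₀ ℕ) (P : MvPolynomial (Fin r) ℚ) :
    coeff B (monomial I 1 * hd I P) = (mb B I : ℚ) * coeff B P := by
  rw [coeff_monomial_mul', coeff_hd]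
  split_ifs with h
  · rw [tsub_add_cancel_of_le h, one_mul]
  · rw [mb_eq_zero h]; simp

lemma wr_core {r k : ℕ} (φ : Fin k → MvPolynomial (Fin r) ℚ) (hφ : LinearIndependent ℚ φ)
    (g : Fin k → MvPolynomial (Fin r) ℚ) (hg : g ≠ 0) :
    ∃ I : Fin r →₀ ℕ, I.degree < k ∧ ∑ l, g l * hd I (φ l) ≠ 0 := by
  by_contra hcon
  push Not at hcon
  set ord : MonomialOrder (Fin r) := MonomialOrder.lex with hord
  set Bs : Finset (Fin r →₀ ℕ) := Finset.univ.biUnion (fun l => (g l).support) with hBs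
  set F : (Fin r →₀ ℕ) → MvPolynomial (Fin r) ℚ := fun B => ∑ l, (coeff B (g l)) • φ l with hF
  have hF0 : ∀ B ∈ Bs, F B ≠ 0 := by
    intro B hB h0
    rw [hBs, Finset.mem_biUnion] at hB
    obtain ⟨l, _, hl⟩ := hB
    exact (mem_support_iff.1 hl) (Fintype.linearIndependent_iff.1 hφ _ h0 l)
  have hg_eq : ∀ l, g l = ∑ B ∈ Bs, monomial B (coeff B (g l)) := by
    intro l
    conv_lhs => rw [(g l).as_sum]
    apply Finset.sum_subset
    · exact Finset.subset_biUnion_of_mem (fun l => (g l).support) (Finset.mem_univ l)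
    · intro B _ hB
      rw [notMem_support_iff.1 hB]; simp
  have hsum : ∀ I : Fin r →₀ ℕ, ∑ l, g l * hd I (φ l) = ∑ B ∈ Bs, monomial B 1 * hd I (F B) := by
    intro I
    have : ∀ l, g l * hd I (φ l) = ∑ B ∈ Bs, monomial B 1 * hd I ((coeff B (g l)) • φ l) := by
      intro l
      conv_lhs => rw [hg_eq l, Finset.sum_mul]
      apply Finset.sum_congr rfl
      intro B _
      rw [map_smul, mul_smul_comm, ← smul_mul_assoc, smul_monomial, smul_eq_mul, mul_one]
    simp_rw [this]
    rw [Finset.sum_comm]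
    apply Finset.sum_congr rfl
    intro B _
    rw [← Finset.mul_sum, hF, map_sum]
  have hne : Bs.Nonempty := by
    obtain ⟨l, hl⟩ := Function.ne_iff.1 hg
    have : (g l).support.Nonempty := by
      rw [Finset.nonempty_iff_ne_empty, Ne, MvPolynomial.support_eq_empty]; exact hl
    obtain ⟨B, hB⟩ := this
    exact ⟨B, Finset.mem_biUnion.2 ⟨l, Finset.mem_univ l, hB⟩⟩
  obtain ⟨B0, hB0, hmax⟩ := Finset.exists_max_image Bs
    (fun B => ord.toSyn (B + ord.degree (F B))) hne
  set E := B0 + ord.degree (F B0) with hE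
  set S := Bs.filter (fun B => B + ord.degree (F B) = E) with hS
  have hinj : Set.InjOn (fun B => ord.degree (F B)) (S : Set (Fin r →₀ ℕ)) := by
    intro B hB B' hB' hEq
    rw [Finset.mem_coe, hS, Finset.mem_filter] at hB hB'
    have h1 := hB.2.trans hB'.2.symm
    simp only at hEq
    rw [hEq] at h1
    exact add_right_cancel h1
  have hcard : S.card ≤ k := by
    have hli : LinearIndependent ℚ (fun B : S => (fun l => coeff B.1 (g l) : Fin k → ℚ)) := by
      rw [Fintype.linearIndependent_iff]
      intro c hc
      have hc2 : ∑ B : S, c B • F B.1 = 0 := by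
        have : ∀ B : S, c B • F B.1 = ∑ l, (c B * coeff B.1 (g l)) • φ l := by
          intro B; rw [hF, Finset.smul_sum]; simp_rw [smul_smul]
        simp_rw [this]
        rw [Finset.sum_comm]
        apply Finset.sum_eq_zero
        intro l _
        rw [← Finset.sum_smul]
        have := congrFun hc l
        simp only [Finset.sum_apply, Pi.smul_apply, smul_eq_mul, Pi.zero_apply] at this
        rw [this, zero_smul]
      by_contra hex
      push Not at hex
      have hne : (Finset.univ.filter (fun B : S => c B ≠ 0)).Nonempty := by
        obtain ⟨B, hB⟩ := hex
        exact ⟨B, by simpa using hB⟩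
      obtain ⟨B1, hB1, hm1⟩ := Finset.exists_max_image _
        (fun B : S => ord.toSyn (ord.degree (F B.1))) hne
      have hco := congrArg (coeff (ord.degree (F B1.1))) hc2
      rw [coeff_sum, Finset.sum_eq_single B1] at hco
      · rw [coeff_smul, coeff_zero, smul_eq_mul] at hco
        rcases mul_eq_zero.1 hco with h | h
        · exact (Finset.mem_filter.1 hB1).2 h
        · exact hF0 B1.1 (Finset.mem_filter.1 B1.2).1 (ord.coeff_degree_eq_zero_iff.1 h)
      · intro B _ hBne
        rw [coeff_smul, smul_eq_mul]
        by_cases hcB : c B = 0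
        · rw [hcB, zero_mul]
        · have hle := hm1 B (by simpa using hcB)
          have hlt := lt_of_le_of_ne hle (fun e => hBne (Subtype.ext (hinj B.2 B1.2
            (ord.toSyn.injective e))))
          rw [ord.coeff_eq_zero_of_lt hlt, mul_zero]
      · intro h; exact absurd (Finset.mem_univ _) h
    have := hli.fintype_card_le_finrank
    simpa using this
  have hzero := interp S (fun B => ord.degree (F B)) hinj
    (fun B => coeff (ord.degree (F B)) (F B)) k hcard (by
    intro I hI
    have h0 := hcon I hI
    rw [hsum] at h0
    have h1 := congrArg (fun P => coeff E (monomial I 1 * P)) h0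
    simp only [mul_zero, coeff_zero] at h1
    rw [Finset.mul_sum, coeff_sum] at h1
    rw [hS, Finset.sum_filter]
    refine Eq.trans (Finset.sum_congr rfl ?_) h1
    intro B hB
    rw [mul_left_comm, coeff_monomial_mul', coeff_monomial_mul_hd]
    by_cases hBE : B + ord.degree (F B) = E
    · rw [if_pos hBE, if_pos (by rw [← hBE]; exact le_self_add)]
      have : E - B = ord.degree (F B) := by rw [← hBE]; simp
      rw [this]; ring
    · rw [if_neg hBE]
      split_ifs with hle
      · have hlt := lt_of_le_of_ne (hmax B hB) (fun e => hBE (ord.toSyn.injective e))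
        have hE2 : E = B + (E - B) := (add_tsub_cancel_of_le hle).symm
        have : ord.toSyn (ord.degree (F B)) < ord.toSyn (E - B) := by
          change ord.toSyn (B + ord.degree (F B)) < ord.toSyn E at hlt
          rw [hE2, map_add, map_add] at hlt
          exact lt_of_add_lt_add_left hlt
        rw [ord.coeff_eq_zero_of_lt this]; simp
      · rfl)
  exact hF0 B0 hB0 (ord.coeff_degree_eq_zero_iff.1 (hzero B0 (Finset.mem_filter.2 ⟨hB0, rfl⟩)))

lemma wronskian {r : ℕ} : ∀ {k : ℕ} (φ : Fin k → MvPolynomial (Fin r) ℚ),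
    LinearIndependent ℚ φ → ∃ I : Fin k → (Fin r →₀ ℕ), (∀ i, (I i).degree < k) ∧
      (Matrix.of (fun i l => hd (I i) (φ l))).det ≠ 0 := by
  intro k
  induction k with
  | zero => intro φ _; exact ⟨fun i => 0, fun i => i.elim0, by simp⟩
  | succ k ih =>
    intro φ hφ
    obtain ⟨I', hI', hdet⟩ := ih (fun l => φ l.succ) (hφ.comp _ (Fin.succ_injective k))
    obtain ⟨I0, hI0, h0⟩ := wr_core φ hφ (fun j => (-1) ^ (j : ℕ) *
      (Matrix.of (fun (i : Fin k) (l : Fin k) => hd (I' i) (φ (j.succAbove l)))).det) (by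
        intro h
        have := congrFun h 0
        simp at this
        exact hdet this)
    refine ⟨Fin.cons I0 I', ?_, ?_⟩
    · intro i
      refine Fin.cases ?_ ?_ i
      · simpa using hI0
      · intro i; simp only [Fin.cons_succ]; exact (hI' i).trans (Nat.lt_succ_self _)
    · rw [Matrix.det_succ_row_zero]
      convert h0 using 1
      apply Finset.sum_congr rfl
      intro j _
      simp only [Matrix.of_apply, Fin.cons_zero]
      have : (Matrix.of (fun i l => hd ((Fin.cons I0 I' : Fin (k+1) → (Fin r →₀ ℕ)) i) (φ l))).submatrix
          Fin.succ j.succAbove = Matrix.of (fun (i : Fin k) (l : Fin k) => hd (I' i) (φ (j.succAbove l))) := by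
        ext1 i l; simp
      rw [this]; ring

/-- one variable to `Polynomial` -/
noncomputable def toP (V : MvPolynomial (Fin 1) ℤ) : Polynomial ℤ := aeval (fun _ => Polynomial.X) V

lemma toP_monomial (A : Fin 1 →₀ ℕ) (a : ℤ) : toP (monomial A a) = Polynomial.monomial (A 0) a := by
  unfold toP
  rw [aeval_monomial, ← Polynomial.C_mul_X_pow_eq_monomial]
  simp [Finsupp.prod_fintype]

lemma coeff_toP (V : MvPolynomial (Fin 1) ℤ) (n : ℕ) :
    (toP V).coeff n = coeff (Finsupp.single 0 n) V := by
  induction V using MvPolynomial.induction_on' with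
  | add p q hp hq =>
    rw [coeff_add, ← hp, ← hq, ← Polynomial.coeff_add]
    unfold toP; rw [map_add]
  | monomial A a =>
    rw [toP_monomial, Polynomial.coeff_monomial, coeff_monomial]
    have : A 0 = n ↔ A = Finsupp.single 0 n := by
      constructor
      · rintro rfl; refine Finsupp.ext fun i => ?_; fin_cases i; simp
      · rintro rfl; simp
    simp [this]

lemma toP_hd (V : MvPolynomial (Fin 1) ℤ) (j : ℕ) :
    toP (hd (Finsupp.single 0 j) V) = Polynomial.hasseDeriv j (toP V) := by
  ext n
  rw [coeff_toP, coeff_hd, Polynomial.hasseDeriv_coeff, coeff_toP, ← Finsupp.single_add]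
  simp [mb]

lemma aeval_toP (V : MvPolynomial (Fin 1) ℤ) (ξ : ℚ) :
    aeval (fun _ => ξ) V = Polynomial.aeval ξ (toP V) := by
  unfold toP
  rw [← AlgHom.comp_apply, comp_aeval]
  simp

lemma one_var (V : MvPolynomial (Fin 1) ℤ) (hV : V ≠ 0) (ξ : ℚ) (ℓ : ℕ)
    (h : ∀ j < ℓ, aeval (fun _ => ξ) (hd (Finsupp.single 0 j) V) = 0) :
    (ξ.den : ℝ) ^ ℓ ≤ n1 V := by
  set p := toP V with hp
  have hp0 : p ≠ 0 := by
    intro h0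
    apply hV
    ext A
    have : A = Finsupp.single 0 (A 0) := by refine Finsupp.ext fun i => ?_; fin_cases i; simp
    rw [this, ← coeff_toP, ← hp, h0]; simp
  have hdvd : (Polynomial.X - Polynomial.C ξ) ^ ℓ ∣ p.map (Int.castRingHom ℚ) := by
    rw [Polynomial.X_sub_C_pow_dvd_iff, ← Polynomial.taylor_apply, Polynomial.X_pow_dvd_iff]
    intro j hj
    have := h j hj
    rw [aeval_toP, toP_hd, Polynomial.aeval_def] at this
    rw [Polynomial.taylor_coeff]
    rw [← Polynomial.eval_map] at this
    have e : Polynomial.hasseDeriv j (p.map (Int.castRingHom ℚ))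
        = (Polynomial.hasseDeriv j (toP V)).map (algebraMap ℤ ℚ) := by
      ext n
      simp [Polynomial.hasseDeriv_coeff, hp]
    rw [e]; exact this
  set q : Polynomial ℤ := Polynomial.C (ξ.den : ℤ) * Polynomial.X - Polynomial.C ξ.num with hq
  have hden : (ξ.den : ℚ) ≠ 0 := by exact_mod_cast ξ.den_nz
  have hqmap : q.map (Int.castRingHom ℚ) = Polynomial.C (ξ.den : ℚ) * (Polynomial.X - Polynomial.C ξ) := by
    rw [hq, mul_sub, ← Polynomial.C_mul, mul_comm (ξ.den : ℚ) ξ, Rat.mul_den_eq_num]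
    simp
  have hqprim : q.IsPrimitive := by
    rw [Polynomial.isPrimitive_iff_isUnit_of_C_dvd]
    intro r hr
    rw [Polynomial.C_dvd_iff_dvd_coeff] at hr
    have h0 := hr 0
    have h1 := hr 1
    simp [hq] at h0
    simp [hq, Polynomial.coeff_C, -eq_intCast, -Polynomial.C_eq_intCast, -map_intCast] at h1
    have := Int.isCoprime_iff_gcd_eq_one.2 (by
      have := ξ.reduced; unfold Nat.Coprime at this
      rwa [Int.gcd, Int.natAbs_natCast] : Int.gcd ξ.num (ξ.den : ℤ) = 1)
    exact this.isUnit_of_dvd' h0 h1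
  have hqpow : (q ^ ℓ).IsPrimitive := by
    clear h hdvd
    induction ℓ with
    | zero => simpa using Polynomial.isPrimitive_one
    | succ n ih => rw [pow_succ]; exact ih.mul hqprim
  have hdvd2 : q ^ ℓ ∣ p := by
    rw [Polynomial.IsPrimitive.Int.dvd_iff_map_cast_dvd_map_cast _ _ hqpow, Polynomial.map_pow, hqmap,
      mul_pow, ← Polynomial.C_pow]
    exact (Polynomial.C_mul_dvd (pow_ne_zero _ hden)).2 hdvd
  obtain ⟨r, hr⟩ := hdvd2
  have hlc : p.leadingCoeff = (ξ.den : ℤ) ^ ℓ * r.leadingCoeff := by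
    rw [hr, Polynomial.leadingCoeff_mul, Polynomial.leadingCoeff_pow]
    congr 2
    have : (ξ.den : ℤ) ≠ 0 := by exact_mod_cast ξ.den_nz
    rw [hq, sub_eq_add_neg, ← Polynomial.C_neg]
    exact Polynomial.leadingCoeff_linear this
  have hr0 : r.leadingCoeff ≠ 0 := by
    intro h0; rw [h0, mul_zero] at hlc
    exact hp0 (Polynomial.leadingCoeff_eq_zero.1 hlc)
  have h1 : ‖p.leadingCoeff‖ ≤ n1 V := by
    rw [Polynomial.leadingCoeff, hp, coeff_toP]; exact norm_coeff_le_n1 _ _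
  refine le_trans ?_ h1
  rw [hlc, norm_mul, norm_pow]
  have h2 : (1 : ℝ) ≤ ‖r.leadingCoeff‖ := by
    rw [Int.norm_eq_abs]; exact_mod_cast Int.one_le_abs hr0
  have h3 : ‖(ξ.den : ℤ)‖ = (ξ.den : ℝ) := by simp
  rw [h3]
  exact le_mul_of_one_le_right (by positivity) h2

end AB

namespace AB
open MvPolynomial

lemma n1_le_of_inj {σ σ' R : Type*} [SeminormedCommRing R] (P : MvPolynomial σ R)
    (Q : MvPolynomial σ' R) (f : (σ →₀ ℕ) → (σ' →₀ ℕ)) (hf : Function.Injective f)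
    (h : ∀ B, coeff B P ≠ 0 → coeff B P = coeff (f B) Q) : n1 P ≤ n1 Q := by
  unfold n1
  calc ∑ A ∈ P.support, ‖coeff A P‖ = ∑ A ∈ P.support, ‖coeff (f A) Q‖ := by
        apply Finset.sum_congr rfl
        intro A hA
        rw [h A (mem_support_iff.1 hA)]
    _ = ∑ B ∈ P.support.image f, ‖coeff B Q‖ := by
        rw [Finset.sum_image (fun a _ b _ e => hf e)]
    _ ≤ ∑ A ∈ Q.support, ‖coeff A Q‖ := by
        apply Finset.sum_le_sum_of_subset_of_nonneg
        · intro B hB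
          obtain ⟨A, hA, rfl⟩ := Finset.mem_image.1 hB
          rw [mem_support_iff] at hA ⊢
          rwa [← h A hA]
        · intros; exact norm_nonneg _

/-- separated product -/
noncomputable def tens {m : ℕ} {R : Type*} [CommRing R] (φ : MvPolynomial (Fin m) R)
    (ψ : MvPolynomial (Fin 1) R) : MvPolynomial (Fin (m + 1)) R :=
  rename Fin.succ φ * rename (fun _ => (0 : Fin (m + 1))) ψ

lemma cons_add' {m : ℕ} (n n' : ℕ) (A A' : Fin m →₀ ℕ) :
    Finsupp.cons (n + n') (A + A') = Finsupp.cons n A + Finsupp.cons n' A' := by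
  refine Finsupp.ext fun i => ?_
  refine Fin.cases ?_ (fun i => ?_) i <;> simp

lemma mb_cons {m : ℕ} (n j : ℕ) (A I : Fin m →₀ ℕ) :
    mb (Finsupp.cons n A) (Finsupp.cons j I) = n.choose j * mb A I := by
  unfold mb; rw [Fin.prod_univ_succ]; simp

lemma tens_monomial {m : ℕ} {R : Type*} [CommRing R] (A : Fin m →₀ ℕ) (B : Fin 1 →₀ ℕ) (a b : R) :
    tens (monomial A a) (monomial B b) = monomial (Finsupp.cons (B 0) A) (a * b) := by
  unfold tens
  rw [rename_monomial, rename_monomial, monomial_mul]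
  congr 2
  have hB : B = Finsupp.single 0 (B 0) := by refine Finsupp.ext fun i => ?_; fin_cases i; simp
  refine Finsupp.ext fun i => ?_
  rw [hB, Finsupp.mapDomain_single, Finsupp.add_apply]
  refine Fin.cases ?_ (fun i => ?_) i
  · rw [Finsupp.mapDomain_of_notMem_range]
    · simp
    · rintro ⟨x, hx⟩; exact Fin.succ_ne_zero x hx
  · rw [Finsupp.mapDomain_apply (Fin.succ_injective m)]
    simp

lemma coeff_tens {m : ℕ} {R : Type*} [CommRing R] (n : ℕ) (A : Fin m →₀ ℕ)
    (φ : MvPolynomial (Fin m) R) (ψ : MvPolynomial (Fin 1) R) :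
    coeff (Finsupp.cons n A) (tens φ ψ) = coeff A φ * coeff (Finsupp.single 0 n) ψ := by
  induction φ using MvPolynomial.induction_on' with
  | add p q hp hq =>
    have : tens (p + q) ψ = tens p ψ + tens q ψ := by unfold tens; rw [map_add, add_mul]
    rw [this, coeff_add, hp, hq, coeff_add, add_mul]
  | monomial B b =>
    induction ψ using MvPolynomial.induction_on' with
    | add p q hp hq =>
      have : tens (monomial B b) (p + q) = tens (monomial B b) p + tens (monomial B b) q := by
        unfold tens; rw [map_add, mul_add]
      rw [this, coeff_add, hp, hq, coeff_add, mul_add]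
    | monomial E e =>
      rw [tens_monomial, coeff_monomial, coeff_monomial, coeff_monomial]
      have h1 : Finsupp.cons (E 0) B = Finsupp.cons n A ↔ B = A ∧ E = Finsupp.single 0 n := by
        constructor
        · intro h
          constructor
          · have := congrArg Finsupp.tail h; simpa using this
          · have := DFunLike.congr_fun h 0
            simp at this
            refine Finsupp.ext fun i => ?_; fin_cases i; simp [this]
        · rintro ⟨rfl, rfl⟩; simp
      simp only [h1]
      by_cases hB : B = A <;> by_cases hE : E = Finsupp.single 0 n <;> simp [hB, hE]

lemma ext_cons {m : ℕ} {R : Type*} [CommRing R] {P Q : MvPolynomial (Fin (m + 1)) R}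
    (h : ∀ n A, coeff (Finsupp.cons n A) P = coeff (Finsupp.cons n A) Q) : P = Q := by
  ext B
  rw [← Finsupp.cons_tail B]; exact h _ _

lemma hd_tens {m : ℕ} {R : Type*} [CommRing R] (j : ℕ) (I : Fin m →₀ ℕ)
    (φ : MvPolynomial (Fin m) R) (ψ : MvPolynomial (Fin 1) R) :
    hd (Finsupp.cons j I) (tens φ ψ) = tens (hd I φ) (hd (Finsupp.single 0 j) ψ) := by
  apply ext_cons
  intro n A
  rw [coeff_hd, coeff_tens, ← cons_add', coeff_tens, mb_cons, coeff_hd, coeff_hd,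
    ← Finsupp.single_add]
  have : mb (Finsupp.single (0 : Fin 1) (n + j)) (Finsupp.single 0 j) = (n + j).choose j := by
    simp [mb]
  rw [this]; push_cast; ring

lemma aeval_tens {m : ℕ} (φ : MvPolynomial (Fin m) ℚ) (ψ : MvPolynomial (Fin 1) ℚ)
    (ξ : Fin (m + 1) → ℚ) :
    aeval ξ (tens φ ψ) = aeval (fun i => ξ i.succ) φ * aeval (fun _ => ξ 0) ψ := by
  unfold tens
  rw [map_mul, aeval_rename, aeval_rename]; rfl

lemma aeval_map_int {m : ℕ} (P : MvPolynomial (Fin m) ℤ) (ξ : Fin m → ℚ) :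
    aeval ξ (map (Int.castRingHom ℚ) P) = aeval ξ P := by
  have := aeval_map_algebraMap (R := ℤ) ℚ ξ P
  exact this

/-- index at least `θ` -/
def IndGe {m : ℕ} (s : Fin m → ℕ) (ξ : Fin m → ℚ) (P : MvPolynomial (Fin m) ℤ) (θ : ℝ) : Prop :=
  ∀ J : Fin m →₀ ℕ, ∑ i, (s i : ℝ) * J i < θ → aeval ξ (hd J P) = 0

section ind
variable {m : ℕ} {s : Fin m → ℕ} {ξ : Fin m → ℚ}

lemma IndGe.nonpos (P : MvPolynomial (Fin m) ℤ) {θ : ℝ} (h : θ ≤ 0) : IndGe s ξ P θ := by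
  intro J hJ
  have : 0 ≤ ∑ i, (s i : ℝ) * J i := Finset.sum_nonneg fun _ _ => by positivity
  linarith

lemma IndGe.mul {P Q : MvPolynomial (Fin m) ℤ} {a b : ℝ} (hP : IndGe s ξ P a)
    (hQ : IndGe s ξ Q b) : IndGe s ξ (P * Q) (a + b) := by
  intro J hJ
  rw [hd_mul, map_sum]
  apply Finset.sum_eq_zero
  intro x hx
  rw [Finset.HasAntidiagonal.mem_antidiagonal] at hx
  rw [← hx] at hJ
  simp only [Finsupp.add_apply, Nat.cast_add, mul_add, Finset.sum_add_distrib] at hJ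
  rw [map_mul]
  by_cases h : ∑ i, (s i : ℝ) * x.1 i < a
  · rw [hP _ h, zero_mul]
  · rw [hQ x.2 (by linarith), mul_zero]

lemma IndGe.prod {ι : Type*} (S : Finset ι) (P : ι → MvPolynomial (Fin m) ℤ) (a : ι → ℝ)
    (h : ∀ i ∈ S, IndGe s ξ (P i) (a i)) : IndGe s ξ (∏ i ∈ S, P i) (∑ i ∈ S, a i) := by
  induction S using Finset.induction_on with
  | empty => exact IndGe.nonpos _ (by simp)
  | insert x S hx ih =>
    rw [Finset.prod_insert hx, Finset.sum_insert hx]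
    exact (h x (Finset.mem_insert_self _ _)).mul
      (ih fun i hi => h i (Finset.mem_insert_of_mem hi))

lemma IndGe.det {k : ℕ} (M : Matrix (Fin k) (Fin k) (MvPolynomial (Fin m) ℤ)) (a : Fin k → ℝ)
    (h : ∀ i j, IndGe s ξ (M i j) (a j)) : IndGe s ξ M.det (∑ j, a j) := by
  intro J hJ
  rw [Matrix.det_apply', map_sum, map_sum]
  apply Finset.sum_eq_zero
  intro p _
  have h1 := IndGe.prod (s := s) (ξ := ξ) Finset.univ (fun j => M (p j) j) a (fun j _ => h _ _) J hJ
  have : ((Equiv.Perm.sign p : ℤ) : MvPolynomial (Fin m) ℤ) * ∏ i, M (p i) i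
      = (Equiv.Perm.sign p : ℤ) • ∏ i, M (p i) i := by
    rw [zsmul_eq_mul]
  rw [this, map_smul, map_smul, h1, smul_zero]

lemma IndGe.hd {P : MvPolynomial (Fin m) ℤ} {a : ℝ} (hP : IndGe s ξ P a) (I : Fin m →₀ ℕ) :
    IndGe s ξ (AB.hd I P) (a - ∑ i, (s i : ℝ) * I i) := by
  intro J hJ
  rw [hd_hd, map_smul, hP, smul_zero]
  simp only [Finsupp.add_apply, Nat.cast_add, mul_add, Finset.sum_add_distrib]
  linarith

lemma IndGe.mono {P : MvPolynomial (Fin m) ℤ} {a b : ℝ} (hP : IndGe s ξ P a) (h : b ≤ a) :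
    IndGe s ξ P b := fun J hJ => hP J (hJ.trans_le h)
end ind

lemma decomp {m : ℕ} (P : MvPolynomial (Fin (m + 1)) ℚ) (d : ℕ) (hdeg : P.degreeOf 0 ≤ d) :
    ∃ (k : ℕ) (φ : Fin k → MvPolynomial (Fin m) ℚ) (ψ : Fin k → MvPolynomial (Fin 1) ℚ),
      k ≤ d + 1 ∧ LinearIndependent ℚ φ ∧ LinearIndependent ℚ ψ ∧ P = ∑ l, tens (φ l) (ψ l) := by
  set sl : Fin (d + 1) → MvPolynomial (Fin m) ℚ := fun j => (finSuccEquiv ℚ m P).coeff j with hsl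
  have hco : ∀ j A, coeff A (sl j) = coeff (Finsupp.cons (j : ℕ) A) P := fun j A =>
    finSuccEquiv_coeff_coeff _ _ _
  set S := Submodule.span ℚ (Set.range sl) with hS
  have hmem : ∀ j, sl j ∈ S := fun j => Submodule.subset_span ⟨j, rfl⟩
  have : Module.Finite ℚ S := FiniteDimensional.span_of_finite ℚ (Set.finite_range sl)
  set b := Module.finBasis ℚ S with hb
  set c : Fin (Module.finrank ℚ S) → Fin (d + 1) → ℚ := fun l j => b.repr ⟨sl j, hmem j⟩ l with hc
  set ψ : Fin (Module.finrank ℚ S) → MvPolynomial (Fin 1) ℚ := fun l =>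
    ∑ j : Fin (d + 1), monomial (Finsupp.single 0 (j : ℕ)) (c l j) with hψ
  have hψco : ∀ l (j : Fin (d + 1)), coeff (Finsupp.single 0 (j : ℕ)) (ψ l) = c l j := by
    intro l j
    rw [hψ, coeff_sum, Finset.sum_eq_single j]
    · simp
    · intro j' _ hne
      rw [coeff_monomial, if_neg]
      intro h
      apply hne
      have := DFunLike.congr_fun h 0
      simp at this
      exact Fin.ext this
    · simp
  have hψco2 : ∀ l (n : ℕ), d < n → coeff (Finsupp.single 0 n) (ψ l) = 0 := by
    intro l n hn
    rw [hψ, coeff_sum]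
    apply Finset.sum_eq_zero
    intro j' _
    rw [coeff_monomial, if_neg]
    intro h
    have := DFunLike.congr_fun h 0
    simp at this
    have := j'.2
    omega
  refine ⟨Module.finrank ℚ S, fun l => (b l : MvPolynomial (Fin m) ℚ), ψ, ?_, ?_, ?_, ?_⟩
  · have := finrank_range_le_card (R := ℚ) sl
    simpa [Set.finrank] using this
  · exact b.linearIndependent.map' S.subtype (Submodule.ker_subtype S)
  · rw [Fintype.linearIndependent_iff]
    intro a ha
    set f : S →ₗ[ℚ] ℚ := ∑ l, a l • b.coord l with hf
    have hfz : ∀ j, f ⟨sl j, hmem j⟩ = 0 := by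
      intro j
      have := congrArg (coeff (Finsupp.single 0 (j : ℕ))) ha
      rw [coeff_sum] at this
      simp only [coeff_smul, hψco, coeff_zero] at this
      simpa [hf] using this
    have hf0 : ∀ x : S, f x = 0 := by
      rintro ⟨x, hx⟩
      induction hx using Submodule.span_induction with
      | mem x h => obtain ⟨j, rfl⟩ := h; exact hfz j
      | zero => exact map_zero f
      | add x y hx hy h1 h2 =>
        have : (⟨x + y, Submodule.add_mem _ hx hy⟩ : S) = ⟨x, hx⟩ + ⟨y, hy⟩ := rfl
        rw [this, map_add, h1, h2, add_zero]
      | smul r x hx h1 =>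
        have : (⟨r • x, Submodule.smul_mem _ r hx⟩ : S) = r • ⟨x, hx⟩ := rfl
        rw [this, map_smul, h1, smul_zero]
    intro l
    have := hf0 (b l)
    simpa [hf, Finsupp.single_apply] using this
  · apply ext_cons
    intro n A
    rw [coeff_sum]
    simp_rw [coeff_tens]
    by_cases hn : n ≤ d
    · have hj := hco ⟨n, Nat.lt_succ_of_le hn⟩ A
      simp only at hj
      have h2 : ∀ l, coeff (Finsupp.single 0 n) (ψ l) = c l ⟨n, Nat.lt_succ_of_le hn⟩ := fun l =>
        hψco l ⟨n, Nat.lt_succ_of_le hn⟩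
      simp_rw [h2]
      rw [← hj]
      have h3 := congrArg (fun x : S => coeff A (x : MvPolynomial (Fin m) ℚ))
        (b.sum_repr ⟨sl ⟨n, Nat.lt_succ_of_le hn⟩, hmem _⟩)
      simp only [Submodule.coe_sum, Submodule.coe_smul, coeff_sum, coeff_smul, smul_eq_mul] at h3
      rw [← h3]
      apply Finset.sum_congr rfl
      intro l _
      rw [mul_comm]
    · push Not at hn
      simp_rw [hψco2 _ n hn]
      rw [Finset.sum_eq_zero (by simp)]
      by_contra hne
      have := degreeOf_le_iff.1 hdeg _ (mem_support_iff.2 hne)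
      simp at this
      omega

lemma count_bound (k s0 : ℕ) (hk : 0 < k) (D t : ℝ) (hD : 0 < D) (ht : 0 < t) (ht1 : t ≤ 1)
    (hs : (s0 : ℝ) * ((k : ℝ) - 1) ≤ D) :
    k * D * t ^ 2 / 8 ≤ ∑ j ∈ Finset.range k, max (t * D - s0 * j) 0 := by
  set N := ⌊((k : ℝ) - 1) * t / 2⌋₊ + 1 with hN
  have hk1 : (1 : ℝ) ≤ k := by exact_mod_cast hk
  have h0 : 0 ≤ ((k : ℝ) - 1) * t / 2 := by
    have : 0 ≤ (k : ℝ) - 1 := by linarith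
    positivity
  have hNk : N ≤ k := by
    have : ⌊((k : ℝ) - 1) * t / 2⌋₊ ≤ k - 1 := by
      apply Nat.floor_le_of_le
      rw [Nat.cast_sub hk]; push_cast
      nlinarith
    omega
  have hNt : (k : ℝ) * t / 4 ≤ N := by
    have h1 := Nat.lt_floor_add_one (((k : ℝ) - 1) * t / 2)
    have h2 : (1 : ℝ) ≤ N := by rw [hN]; push_cast; have := Nat.cast_nonneg (α := ℝ) ⌊((k : ℝ) - 1) * t / 2⌋₊; linarith
    have h3 : ((k : ℝ) - 1) * t / 2 ≤ N := by rw [hN]; push_cast; linarith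
    rcases Nat.lt_or_ge 1 k with h | h
    · have : (2 : ℝ) ≤ k := by exact_mod_cast h
      nlinarith
    · have : (k : ℝ) ≤ 1 := by exact_mod_cast h
      nlinarith
  calc k * D * t ^ 2 / 8 = (k * t / 4) * (t * D / 2) := by ring
    _ ≤ N * (t * D / 2) := mul_le_mul_of_nonneg_right hNt (by positivity)
    _ = ∑ j ∈ Finset.range N, (t * D / 2) := by simp
    _ ≤ ∑ j ∈ Finset.range N, max (t * D - s0 * j) 0 := by
        apply Finset.sum_le_sum
        intro j hj
        refine le_trans ?_ (le_max_left _ _)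
        have hj' : j ≤ ⌊((k : ℝ) - 1) * t / 2⌋₊ := by
          have := Finset.mem_range.1 hj; omega
        have hj2 : (j : ℝ) ≤ ((k : ℝ) - 1) * t / 2 := (Nat.le_floor_iff h0).1 hj'
        have : (s0 : ℝ) * j ≤ s0 * (((k : ℝ) - 1) * t / 2) := mul_le_mul_of_nonneg_left hj2 (by positivity)
        nlinarith
    _ ≤ ∑ j ∈ Finset.range k, max (t * D - s0 * j) 0 := by
        apply Finset.sum_le_sum_of_subset_of_nonneg
        · exact Finset.range_subset_range.2 hNk
        · intros; exact le_max_right _ _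

end AB

namespace AB
open MvPolynomial

lemma map_int_ne {σ : Type*} {P : MvPolynomial σ ℤ} (h : P ≠ 0) : map (Int.castRingHom ℚ) P ≠ 0 := by
  intro h0
  exact h (map_injective _ (RingHom.injective_int _) (by rw [h0, map_zero]))

lemma roth_det {m : ℕ} (P : MvPolynomial (Fin (m + 1)) ℤ) (hP : P ≠ 0) (d0 : ℕ)
    (hdeg : P.degreeOf 0 ≤ d0) :
    ∃ (k : ℕ) (I : Fin k → (Fin m →₀ ℕ)) (N : Fin k → ℕ) (U : MvPolynomial (Fin m) ℚ)
      (V : MvPolynomial (Fin 1) ℚ), 0 < k ∧ k ≤ d0 + 1 ∧ (∀ i, (I i).degree < k) ∧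
      Function.Injective N ∧ (∀ j, N j < k) ∧ U ≠ 0 ∧ V ≠ 0 ∧
      map (Int.castRingHom ℚ) (Matrix.of (fun i j => hd (Finsupp.cons (N j) (I i)) P)).det
        = tens U V := by
  set PQ := map (Int.castRingHom ℚ) P with hPQ
  have hPQ0 : PQ ≠ 0 := map_int_ne hP
  have hdegQ : PQ.degreeOf 0 ≤ d0 := by
    rw [degreeOf_le_iff] at hdeg ⊢
    intro A hA
    apply hdeg
    rw [mem_support_iff, hPQ, coeff_map] at hA
    rw [mem_support_iff]
    intro h; rw [h] at hA; simp at hA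
  obtain ⟨k, φ, ψ, hk, hφ, hψ, hdec⟩ := decomp PQ d0 hdegQ
  have hk0 : 0 < k := by
    rcases Nat.eq_zero_or_pos k with h | h
    · subst h; simp at hdec; exact absurd hdec hPQ0
    · exact h
  obtain ⟨I, hI, hU⟩ := wronskian φ hφ
  obtain ⟨I', hI', hV⟩ := wronskian ψ hψ
  have hsing : ∀ j, I' j = Finsupp.single 0 (I' j 0) := by
    intro j; refine Finsupp.ext fun i => ?_; fin_cases i; simp
  refine ⟨k, I, fun j => I' j 0, _, _, hk0, hk, hI, ?_, ?_, hU, hV, ?_⟩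
  · intro j j' hjj
    by_contra hne
    apply hV
    apply Matrix.det_zero_of_row_eq hne
    ext1 l
    simp only [Matrix.of_apply]
    rw [hsing j, hsing j', show I' j 0 = I' j' 0 from hjj]
  · intro j
    refine lt_of_le_of_lt ?_ (hI' j)
    exact Finsupp.le_degree 0 (I' j)
  · have e1 : map (Int.castRingHom ℚ) (Matrix.of (fun i j => hd (Finsupp.cons (I' j 0) (I i)) P)).det
        = (Matrix.of (fun i j => hd (Finsupp.cons (I' j 0) (I i)) PQ)).det := by
      rw [RingHom.map_det]
      congr 1
      ext1 i j
      simp [hPQ, hd_map]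
    rw [e1]
    have e2 : Matrix.of (fun i j => hd (Finsupp.cons (I' j 0) (I i)) PQ)
        = ((rename (Fin.succ : Fin m → Fin (m+1))).mapMatrix (Matrix.of (fun i l => hd (I i) (φ l)))) *
          ((rename (fun _ : Fin 1 => (0 : Fin (m + 1)))).mapMatrix
            (Matrix.of (fun j l => hd (I' j) (ψ l)))).transpose := by
      ext1 i j
      rw [Matrix.mul_apply]
      simp only [Matrix.of_apply, AlgHom.mapMatrix_apply, Matrix.map_apply, Matrix.transpose_apply]
      rw [hdec, map_sum]
      apply Finset.sum_congr rfl
      intro l _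
      rw [hd_tens, ← hsing]; rfl
    rw [e2, Matrix.det_mul, Matrix.det_transpose, ← AlgHom.map_det, ← AlgHom.map_det]
    rfl

lemma roth_slices {m : ℕ} (W : MvPolynomial (Fin (m + 1)) ℤ) (U : MvPolynomial (Fin m) ℚ)
    (V : MvPolynomial (Fin 1) ℚ) (hU : U ≠ 0) (hV : V ≠ 0)
    (hW : map (Int.castRingHom ℚ) W = tens U V) :
    ∃ (U' : MvPolynomial (Fin m) ℤ) (V' : MvPolynomial (Fin 1) ℤ), U' ≠ 0 ∧ V' ≠ 0 ∧
      n1 U' ≤ n1 W ∧ n1 V' ≤ n1 W ∧ (∀ i, U'.degreeOf i ≤ W.degreeOf i.succ) ∧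
      ∀ (ξ : Fin (m + 1) → ℚ) (j : ℕ) (J : Fin m →₀ ℕ), aeval (fun i => ξ i.succ) (hd J U') ≠ 0 →
        aeval (fun _ => ξ 0) (hd (Finsupp.single 0 j) V') ≠ 0 →
        aeval ξ (hd (Finsupp.cons j J) W) ≠ 0 := by
  have hco : ∀ n A, ((coeff (Finsupp.cons n A) W : ℤ) : ℚ) = coeff A U * coeff (Finsupp.single 0 n) V := by
    intro n A
    rw [← coeff_tens, ← hW, coeff_map]; simp
  obtain ⟨A0, hA0⟩ := MvPolynomial.ne_zero_iff.1 hU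
  obtain ⟨B0, hB0⟩ := MvPolynomial.ne_zero_iff.1 hV
  have hB0' : B0 = Finsupp.single 0 (B0 0) := by refine Finsupp.ext fun i => ?_; fin_cases i; simp
  set j0 := B0 0 with hj0
  rw [hB0'] at hB0
  set U' := (finSuccEquiv ℤ m W).coeff j0 with hU'
  have hU'co : ∀ A, coeff A U' = coeff (Finsupp.cons j0 A) W := fun A => finSuccEquiv_coeff_coeff _ _ _
  set V' : MvPolynomial (Fin 1) ℤ := ∑ n ∈ Finset.range (W.degreeOf 0 + 1),
    monomial (Finsupp.single 0 n) (coeff (Finsupp.cons n A0) W) with hV'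
  have hV'co : ∀ n, coeff (Finsupp.single 0 n) V' = coeff (Finsupp.cons n A0) W := by
    intro n
    rw [hV', coeff_sum]
    have : ∀ x ∈ Finset.range (W.degreeOf 0 + 1), coeff (Finsupp.single (0 : Fin 1) n)
        (monomial (Finsupp.single 0 x) (coeff (Finsupp.cons x A0) W))
          = if x = n then coeff (Finsupp.cons n A0) W else 0 := by
      intro x _
      rw [coeff_monomial]
      by_cases h : x = n
      · subst h; simp
      · rw [if_neg h, if_neg]
        intro h2
        have := DFunLike.congr_fun h2 0
        simp at this
        exact h this
    rw [Finset.sum_congr rfl this, Finset.sum_ite_eq']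
    split_ifs with h
    · rfl
    · symm
      by_contra hne
      have := degreeOf_le_iff.1 (le_refl (W.degreeOf 0)) _ (mem_support_iff.2 hne)
      simp at this h
      omega
  have hsing : ∀ B : Fin 1 →₀ ℕ, B = Finsupp.single 0 (B 0) := by
    intro B; refine Finsupp.ext fun i => ?_; fin_cases i; simp
  have mU : map (Int.castRingHom ℚ) U' = (coeff (Finsupp.single 0 j0) V) • U := by
    ext A
    rw [coeff_map, hU'co, coeff_smul, smul_eq_mul, mul_comm]
    exact hco _ _
  have mV : map (Int.castRingHom ℚ) V' = (coeff A0 U) • V := by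
    ext B
    rw [hsing B, coeff_map, hV'co, coeff_smul, smul_eq_mul]
    exact hco _ _
  refine ⟨U', V', ?_, ?_, ?_, ?_, ?_, ?_⟩
  · intro h0
    rw [h0, map_zero] at mU
    exact (smul_ne_zero hB0 hU) mU.symm
  · intro h0
    rw [h0, map_zero] at mV
    exact (smul_ne_zero hA0 hV) mV.symm
  · exact n1_le_of_inj _ _ (Finsupp.cons j0) (Finsupp.cons_right_injective j0) (fun B _ => hU'co B)
  · apply n1_le_of_inj _ _ (fun B => Finsupp.cons (B 0) A0)
    · intro B B' h
      have := DFunLike.congr_fun h 0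
      simp at this
      rw [hsing B, hsing B', this]
    · intro B _
      conv_lhs => rw [hsing B]
      exact hV'co _
  · intro i
    rw [degreeOf_le_iff]
    intro A hA
    rw [mem_support_iff, hU'co, ← mem_support_iff] at hA
    have := degreeOf_le_iff.1 (le_refl (W.degreeOf i.succ)) _ hA
    simpa using this
  · intro ξ j J h1 h2
    rw [← aeval_map_int, ← hd_map, mU, map_smul, map_smul, smul_eq_mul] at h1
    rw [← aeval_map_int, ← hd_map, mV, map_smul, map_smul, smul_eq_mul] at h2
    rw [← aeval_map_int, ← hd_map, hW, hd_tens, aeval_tens]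
    exact mul_ne_zero (right_ne_zero_of_mul h1) (right_ne_zero_of_mul h2)

theorem roth_lemma (m : ℕ) : ∀ τ : ℝ, 0 < τ → ∃ δ : ℝ, 0 < δ ∧ ∀ (s d : Fin m → ℕ) (D A : ℝ)
    (ξ : Fin m → ℚ) (P : MvPolynomial (Fin m) ℤ), (∀ i, 0 < s i) → 0 < D → P ≠ 0 →
    (∀ i, P.degreeOf i ≤ d i) → (∀ i, (s i : ℝ) * d i ≤ D) → ((∑ i, d i : ℕ) : ℝ) ≤ A →
    n1 P ≤ Real.exp A → (∀ i j, i < j → (s j : ℝ) ≤ δ * s i) →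
    (∀ i, (s i : ℝ) * A ≤ δ * D * Real.log (ξ i).den) → (∀ i, 1 < (ξ i).den) →
    ∃ J : Fin m →₀ ℕ, ∑ i, (s i : ℝ) * J i ≤ τ * D ∧ aeval ξ (hd J P) ≠ 0 := by
  induction m with
  | zero =>
    intro τ hτ
    refine ⟨1, one_pos, ?_⟩
    intro s d D A ξ P _ hD hP _ _ _ _ _ _ _
    refine ⟨0, by simpa using by positivity, ?_⟩
    have h0 : hd 0 P = P := by ext B; rw [coeff_hd]; simp [mb]
    rw [h0, P.eq_C_of_isEmpty, aeval_C]
    rw [P.eq_C_of_isEmpty] at hP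
    intro h
    apply hP
    have : coeff 0 P = 0 := by simpa using h
    rw [this]; simp
  | succ m ih =>
    intro τ₁ hτ₁
    set τ := min τ₁ 1 with hτdef
    have hτ : 0 < τ := lt_min hτ₁ one_pos
    have hτ1 : τ ≤ 1 := min_le_right _ _
    set τ' := τ ^ 2 / 128 with hτ'
    have hτ'0 : 0 < τ' := by positivity
    obtain ⟨δ', hδ', IH⟩ := ih τ' hτ'0
    refine ⟨min (min (δ' / 3) (τ' / 3)) (min (τ / 2) δ'), by positivity, ?_⟩
    set δ := min (min (δ' / 3) (τ' / 3)) (min (τ / 2) δ') with hδdef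
    have hδ0 : 0 < δ := by positivity
    have hδ1 : δ ≤ δ' / 3 := (min_le_left _ _).trans (min_le_left _ _)
    have hδ2 : δ ≤ τ' / 3 := (min_le_left _ _).trans (min_le_right _ _)
    have hδ3 : δ ≤ τ / 2 := (min_le_right _ _).trans (min_le_left _ _)
    have hδ4 : δ ≤ δ' := (min_le_right _ _).trans (min_le_right _ _)
    intro s d D A ξ P hs hD hP hdeg hsd hdA hn1 hss hA hden
    by_contra hcon
    push Not at hcon
    have hInd : IndGe s ξ P (τ * D) := by
      intro J hJ
      apply hcon J
      exact hJ.le.trans (mul_le_mul_of_nonneg_right (min_le_left _ _) hD.le)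
    obtain ⟨k, I, N, U, V, hk0, hk, hI, hNinj, hN, hU, hV, hW⟩ := roth_det P hP (d 0) (hdeg 0)
    set W := (Matrix.of (fun i j => hd (Finsupp.cons (N j) (I i)) P)).det with hWdef
    obtain ⟨U', V', hU', hV', hnU, hnV, hdegU, hev⟩ := roth_slices W U V hU hV hW
    have hA0 : 0 ≤ A := le_trans (by positivity) hdA
    have hkR : (0 : ℝ) < k := by exact_mod_cast hk0
    -- size of W
    have hnW : n1 W ≤ Real.exp (3 * k * A) := by
      have h1 : ∀ i j, n1 (Matrix.of (fun i j => hd (Finsupp.cons (N j) (I i)) P) i j)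
          ≤ Real.exp (2 * A) := by
        intro i j
        refine (n1_hd_le _ _ d hdeg).trans ?_
        have : (2 : ℝ) ^ (∑ i, d i) ≤ Real.exp A := by
          calc (2 : ℝ) ^ (∑ i, d i) ≤ (Real.exp 1) ^ (∑ i, d i) := by
                apply pow_le_pow_left₀ (by norm_num)
                have := Real.add_one_le_exp (1 : ℝ)
                linarith
            _ = Real.exp ((∑ i, d i : ℕ) : ℝ) := by rw [← Real.exp_nat_mul, mul_one]
            _ ≤ Real.exp A := Real.exp_le_exp.2 hdA
        calc _ ≤ Real.exp A * Real.exp A := mul_le_mul this hn1 (n1_nonneg _) (Real.exp_pos _).le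
          _ = Real.exp (2 * A) := by rw [← Real.exp_add]; ring_nf
      refine (n1_det_le _ _ h1).trans ?_
      have h2 : (k.factorial : ℝ) ≤ (Real.exp A) ^ k := by
        have : (k.factorial : ℝ) ≤ (k : ℝ) ^ k := by exact_mod_cast Nat.factorial_le_pow k
        refine this.trans (pow_le_pow_left₀ hkR.le ?_ k)
        have hd0 : (d 0 : ℝ) ≤ A := by
          refine le_trans ?_ hdA
          exact_mod_cast Finset.single_le_sum (f := d) (fun _ _ => Nat.zero_le _) (Finset.mem_univ 0)
        have hk' : (k : ℝ) ≤ d 0 + 1 := by exact_mod_cast hk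
        have := Real.add_one_le_exp A
        linarith
      calc (k.factorial : ℝ) * Real.exp (2 * A) ^ k ≤ Real.exp A ^ k * Real.exp (2 * A) ^ k :=
            mul_le_mul_of_nonneg_right h2 (by positivity)
        _ = Real.exp (3 * k * A) := by
            rw [← mul_pow, ← Real.exp_add, ← Real.exp_nat_mul]; ring_nf
    -- IH
    obtain ⟨J', hJ'w, hJ'⟩ := IH (fun i => s i.succ) (fun i => k * d i.succ) (k * D) (3 * k * A)
      (fun i => ξ i.succ) U' (fun i => hs _) (by positivity) hU'
      (by
        intro i
        refine (hdegU i).trans (degreeOf_det_le _ _ _ ?_)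
        intro a b
        exact (hd_support _ _ _).trans (hdeg _))
      (by
        intro i
        have := hsd i.succ
        push_cast
        nlinarith)
      (by
        rw [← Finset.mul_sum]; push_cast
        have h1 : ((∑ i : Fin m, d i.succ : ℕ) : ℝ) ≤ A := by
          refine le_trans ?_ hdA
          rw [Fin.sum_univ_succ]
          push_cast
          have : (0 : ℝ) ≤ d 0 := by positivity
          linarith
        push_cast at h1
        have : (k : ℝ) * ∑ i : Fin m, (d i.succ : ℝ) ≤ k * A := mul_le_mul_of_nonneg_left h1 hkR.le
        have : 0 ≤ (k : ℝ) * A := by positivity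
        linarith)
      (hnU.trans hnW)
      (by
        intro i j hij
        exact (hss i.succ j.succ (Fin.succ_lt_succ_iff.2 hij)).trans
          (mul_le_mul_of_nonneg_right hδ4 (by positivity)))
      (by
        intro i
        have h1 := hA i.succ
        have h2 : 0 ≤ D * Real.log (ξ i.succ).den := by
          have : 0 ≤ Real.log (ξ i.succ).den := Real.log_natCast_nonneg _
          positivity
        have h3 : δ * D * Real.log (ξ i.succ).den ≤ δ' / 3 * (D * Real.log (ξ i.succ).den) := by
          rw [mul_assoc]; exact mul_le_mul_of_nonneg_right hδ1 h2
        have h4 : (3 * k : ℝ) * ((s i.succ : ℝ) * A) ≤ 3 * k * (δ' / 3 * (D * Real.log (ξ i.succ).den)) :=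
          mul_le_mul_of_nonneg_left (h1.trans h3) (by positivity)
        calc _ = (3 * k : ℝ) * ((s i.succ : ℝ) * A) := by ring
          _ ≤ _ := h4
          _ = _ := by ring)
      (fun i => hden _)
    -- one variable
    have hs0 : (0 : ℝ) < s 0 := by exact_mod_cast hs 0
    obtain ⟨j, hjw, hj⟩ : ∃ j : ℕ, (s 0 : ℝ) * j ≤ τ' * (k * D) ∧
        aeval (fun _ => ξ 0) (hd (Finsupp.single 0 j) V') ≠ 0 := by
      by_contra hno
      push Not at hno
      set ℓ := ⌊τ' * (k * D) / s 0⌋₊ + 1 with hℓ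
      have hnn : 0 ≤ τ' * (k * D) / s 0 := by positivity
      have h1 := one_var V' hV' (ξ 0) ℓ (by
        intro j hj
        apply hno
        have : j ≤ ⌊τ' * (k * D) / s 0⌋₊ := by omega
        have := (Nat.le_floor_iff hnn).1 this
        rw [le_div_iff₀ hs0] at this
        linarith)
      have hden1 : (1 : ℝ) < (ξ 0).den := by exact_mod_cast hden 0
      have hlog : 0 < Real.log (ξ 0).den := Real.log_pos hden1
      have h2 : ℓ * Real.log (ξ 0).den ≤ 3 * k * A := by
        have := Real.log_le_log (by positivity) (h1.trans (hnV.trans hnW))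
        rwa [Real.log_exp, Real.log_pow] at this
      have h3 : τ' * (k * D) / s 0 < ℓ := by
        rw [hℓ]; push_cast; exact Nat.lt_floor_add_one _
      have h4 : τ' * (k * D) / s 0 * Real.log (ξ 0).den < 3 * k * A :=
        lt_of_lt_of_le (mul_lt_mul_of_pos_right h3 hlog) h2
      have h5 := hA 0
      have h6 : δ * D * Real.log (ξ 0).den ≤ τ' / 3 * (D * Real.log (ξ 0).den) := by
        rw [mul_assoc]; exact mul_le_mul_of_nonneg_right hδ2 (by positivity)
      have h7 : τ' * (k * D) / s 0 * Real.log (ξ 0).den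
          = 3 * k * ((τ' / 3 * (D * Real.log (ξ 0).den)) / s 0) := by field_simp
      have h8 : A ≤ (τ' / 3 * (D * Real.log (ξ 0).den)) / s 0 := by
        rw [le_div_iff₀ hs0]; linarith
      have h9 : 3 * (k : ℝ) * A ≤ 3 * k * ((τ' / 3 * (D * Real.log (ξ 0).den)) / s 0) :=
        mul_le_mul_of_nonneg_left h8 (by positivity)
      linarith
    -- index of W
    have hsk : (s 0 : ℝ) * ((k : ℝ) - 1) ≤ D := by
      have hk' : (k : ℝ) ≤ d 0 + 1 := by exact_mod_cast hk
      exact (mul_le_mul_of_nonneg_left (by linarith) hs0.le).trans (hsd 0)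
    have hIndW : IndGe s ξ W (∑ j : Fin k, max (τ / 2 * D - s 0 * N j) 0) := by
      apply IndGe.det
      intro i j
      rcases le_total (τ / 2 * D - s 0 * N j) 0 with h | h
      · rw [max_eq_right h]; exact IndGe.nonpos _ le_rfl
      · rw [max_eq_left h]
        apply (hInd.hd _).mono
        rw [Fin.sum_univ_succ]
        simp only [Finsupp.cons_zero, Finsupp.cons_succ]
        have h1 : ∑ i' : Fin m, (s i'.succ : ℝ) * (I i i' : ℝ) ≤ ∑ i' : Fin m, (δ * s 0) * (I i i' : ℝ) := by
          apply Finset.sum_le_sum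
          intro i' _
          exact mul_le_mul_of_nonneg_right (hss 0 i'.succ (Fin.succ_pos _)) (by positivity)
        rw [← Finset.mul_sum] at h1
        have h2 : ∑ i' : Fin m, (I i i' : ℝ) ≤ k - 1 := by
          have := hI i
          rw [Finsupp.degree_eq_sum] at this
          have h3 : (∑ i', I i i') + 1 ≤ k := this
          have h4 : (((∑ i', I i i') + 1 : ℕ) : ℝ) ≤ k := by exact_mod_cast h3
          push_cast at h4
          linarith
        have h3 : (δ * s 0) * ∑ i' : Fin m, (I i i' : ℝ) ≤ δ * D := by
          calc _ ≤ (δ * s 0) * ((k : ℝ) - 1) := mul_le_mul_of_nonneg_left h2 (by positivity)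
            _ = δ * (s 0 * ((k : ℝ) - 1)) := by ring
            _ ≤ δ * D := mul_le_mul_of_nonneg_left hsk hδ0.le
        have h4 : δ * D ≤ τ / 2 * D := mul_le_mul_of_nonneg_right hδ3 hD.le
        linarith
    have hperm : ∑ j : Fin k, max (τ / 2 * D - s 0 * N j) 0
        = ∑ n ∈ Finset.range k, max (τ / 2 * D - s 0 * n) 0 := by
      have himg : Finset.univ.image N = Finset.range k := by
        apply Finset.eq_of_subset_of_card_le
        · intro n hn
          obtain ⟨j, _, rfl⟩ := Finset.mem_image.1 hn
          exact Finset.mem_range.2 (hN j)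
        · rw [Finset.card_image_of_injective _ hNinj]; simp
      rw [← himg, Finset.sum_image (fun a _ b _ e => hNinj e)]
    have hcb := count_bound k (s 0) hk0 D (τ / 2) hD (by positivity) (by linarith) hsk
    apply hev ξ j J' hJ' hj
    apply hIndW
    rw [hperm]
    refine lt_of_lt_of_le ?_ hcb
    rw [Fin.sum_univ_succ]
    simp only [Finsupp.cons_zero, Finsupp.cons_succ]
    have hkD : 0 < k * D := by positivity
    calc _ ≤ τ' * (k * D) + τ' * (k * D) := add_le_add hjw hJ'w
      _ = (k * D) * (τ ^ 2 / 64) := by rw [hτ']; ring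
      _ < (k * D) * (τ ^ 2 / 32) := by
          apply mul_lt_mul_of_pos_left _ hkD
          have : 0 < τ ^ 2 := by positivity
          linarith
      _ = k * D * (τ / 2) ^ 2 / 8 := by ring

end AB

namespace AB
open MvPolynomial

section
attribute [local instance] Matrix.seminormedAddCommGroup

lemma siegel {ρ κ : Type*} [Fintype ρ] [Fintype κ] (M : ρ → κ → ℤ) (B : ℝ) (hB : 1 ≤ B)
    (h : ∀ r k, |(M r k : ℝ)| ≤ B) (hc : 2 * Fintype.card ρ ≤ Fintype.card κ)
    (hκ : 0 < Fintype.card κ) :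
    ∃ p : κ → ℤ, p ≠ 0 ∧ (∀ r, ∑ k, M r k * p k = 0) ∧
      ∀ k, |(p k : ℝ)| ≤ Fintype.card κ * B := by
  have hκ1 : (1 : ℝ) ≤ Fintype.card κ := by exact_mod_cast hκ
  rcases Nat.eq_zero_or_pos (Fintype.card ρ) with h0 | hpos
  · haveI := Fintype.card_eq_zero_iff.1 h0
    haveI : Nonempty κ := Fintype.card_pos_iff.1 hκ
    refine ⟨fun _ => 1, ?_, fun r => isEmptyElim r, fun k => ?_⟩
    · intro h
      have := congrFun h (Classical.arbitrary κ)
      simp at this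
    · simp; nlinarith
  · obtain ⟨t, ht0, ht, hn⟩ := Int.Matrix.exists_ne_zero_int_vec_norm_le
      (Matrix.of M) (by omega) hpos
    refine ⟨t, ht0, fun r => congrFun ht r, fun k => ?_⟩
    have h1 : |(t k : ℝ)| ≤ ‖t‖ := by
      rw [← Int.norm_eq_abs]; exact norm_le_pi_norm t k
    have hA : ‖Matrix.of M‖ ≤ B := by
      rw [Matrix.norm_le_iff (by linarith)]
      intro i j; rw [Int.norm_eq_abs]; exact h i j
    have hm : max 1 ‖Matrix.of M‖ ≤ B := max_le hB hA
    refine h1.trans (hn.trans ?_)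
    have hbase : 1 ≤ (Fintype.card κ : ℝ) * max 1 ‖Matrix.of M‖ := by
      have := le_max_left 1 ‖Matrix.of M‖
      nlinarith
    have hcR : 2 * (Fintype.card ρ : ℝ) ≤ Fintype.card κ := by exact_mod_cast hc
    have hposR : (0 : ℝ) < Fintype.card ρ := by exact_mod_cast hpos
    calc _ ≤ ((Fintype.card κ : ℝ) * max 1 ‖Matrix.of M‖) ^ (1 : ℝ) := by
          apply Real.rpow_le_rpow_of_exponent_le hbase
          rw [div_le_one (by linarith)]; linarith
      _ = (Fintype.card κ : ℝ) * max 1 ‖Matrix.of M‖ := Real.rpow_one _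
      _ ≤ _ := mul_le_mul_of_nonneg_left hm (by positivity)
end

lemma alpha_lemma (α : ℝ) (hα : IsAlgebraic ℚ α) : ∃ (g : ℕ) (w : Fin g → ℝ) (ℓ : ℤ) (C : ℝ),
    ℓ ≠ 0 ∧ 1 ≤ C ∧ ∀ N n : ℕ, n ≤ N → 1 ≤ N → ∃ E : Fin g → ℤ,
      (ℓ : ℝ) ^ N * α ^ n = ∑ i, (E i : ℝ) * w i ∧ ∀ i, |(E i : ℝ)| ≤ C ^ N := by
  have hα' : IsAlgebraic ℤ α := (IsFractionRing.isAlgebraic_iff ℤ ℚ ℝ).2 hα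
  obtain ⟨ℓ, hℓ, hintg⟩ := hα'.exists_integral_multiple
  set β : ℝ := ℓ • α with hβ
  have hβ' : β = ℓ * α := by rw [hβ, zsmul_eq_mul]
  obtain ⟨g, w, hw⟩ := Submodule.fg_iff_exists_fin_generating_family.1 hintg.fg_adjoin_singleton
  have hmemw : ∀ i, w i ∈ Subalgebra.toSubmodule (Algebra.adjoin ℤ {β}) := by
    intro i; rw [← hw]; exact Submodule.subset_span ⟨i, rfl⟩
  have hrep : ∀ x ∈ Algebra.adjoin ℤ {β}, ∃ c : Fin g → ℤ, ∑ i, c i • w i = x := by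
    intro x hx
    have : x ∈ Submodule.span ℤ (Set.range w) := by rw [hw]; exact hx
    exact (Submodule.mem_span_range_iff_exists_fun ℤ).1 this
  have hM : ∀ i, ∃ c : Fin g → ℤ, ∑ j, c j • w j = β * w i := fun i =>
    hrep _ (Subalgebra.mul_mem _ (Algebra.self_mem_adjoin_singleton ℤ β) (hmemw i))
  choose M hM using hM
  obtain ⟨e0, he0⟩ := hrep 1 (Subalgebra.one_mem _)
  set C0 : ℝ := 1 + ∑ i, |(e0 i : ℝ)| + ∑ i, ∑ j, |(M i j : ℝ)| + |(ℓ : ℝ)| with hC0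
  have nn1 : 0 ≤ ∑ i, |(e0 i : ℝ)| := Finset.sum_nonneg fun _ _ => abs_nonneg _
  have nn2 : 0 ≤ ∑ i, ∑ j, |(M i j : ℝ)| := Finset.sum_nonneg fun _ _ => Finset.sum_nonneg fun _ _ => abs_nonneg _
  have hC01 : 1 ≤ C0 := by have := abs_nonneg (ℓ : ℝ); linarith
  have key : ∀ n : ℕ, ∃ E : Fin g → ℤ, β ^ n = ∑ i, (E i : ℝ) * w i ∧
      ∑ i, |(E i : ℝ)| ≤ C0 ^ (n + 1) := by
    intro n
    induction n with
    | zero =>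
      refine ⟨e0, ?_, ?_⟩
      · rw [pow_zero, ← he0]; simp
      · rw [zero_add, pow_one]; have := abs_nonneg (ℓ : ℝ); linarith
    | succ n ih =>
      obtain ⟨E, hE, hE2⟩ := ih
      refine ⟨fun j => ∑ i, E i * M i j, ?_, ?_⟩
      · rw [pow_succ, hE, Finset.sum_mul]
        have : ∀ i, (E i : ℝ) * w i * β = ∑ j, (E i : ℝ) * (M i j : ℝ) * w j := by
          intro i
          rw [mul_assoc, mul_comm (w i), ← hM i, Finset.mul_sum]
          apply Finset.sum_congr rfl
          intro j _
          rw [zsmul_eq_mul]; ring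
        simp_rw [this]
        rw [Finset.sum_comm]
        apply Finset.sum_congr rfl
        intro j _
        push_cast
        rw [Finset.sum_mul]
      · have h1 : ∀ j, |((∑ i, E i * M i j : ℤ) : ℝ)| ≤ ∑ i, |(E i : ℝ)| * |(M i j : ℝ)| := by
          intro j
          push_cast
          refine (Finset.abs_sum_le_sum_abs _ _).trans (le_of_eq ?_)
          simp_rw [abs_mul]
        refine (Finset.sum_le_sum fun j _ => h1 j).trans ?_
        rw [Finset.sum_comm]
        simp_rw [← Finset.mul_sum]
        have h2 : ∀ i, ∑ j, |(M i j : ℝ)| ≤ C0 := by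
          intro i
          have : ∑ j, |(M i j : ℝ)| ≤ ∑ i, ∑ j, |(M i j : ℝ)| :=
            Finset.single_le_sum (f := fun i => ∑ j, |(M i j : ℝ)|)
              (fun _ _ => Finset.sum_nonneg fun _ _ => abs_nonneg _) (Finset.mem_univ i)
          have := abs_nonneg (ℓ : ℝ)
          linarith
        calc _ ≤ ∑ i, |(E i : ℝ)| * C0 :=
              Finset.sum_le_sum fun i _ => mul_le_mul_of_nonneg_left (h2 i) (abs_nonneg _)
          _ = (∑ i, |(E i : ℝ)|) * C0 := by rw [Finset.sum_mul]
          _ ≤ C0 ^ (n + 1) * C0 := mul_le_mul_of_nonneg_right hE2 (by linarith)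
          _ = C0 ^ (n + 1 + 1) := by rw [pow_succ C0 (n + 1)]
  refine ⟨g, w, ℓ, C0 ^ 2, hℓ, one_le_pow₀ hC01, ?_⟩
  intro N n hn hN
  obtain ⟨E, hE, hE2⟩ := key n
  refine ⟨fun i => ℓ ^ (N - n) * E i, ?_, ?_⟩
  · have : (ℓ : ℝ) ^ N * α ^ n = (ℓ : ℝ) ^ (N - n) * β ^ n := by
      rw [hβ', mul_pow, ← mul_assoc, ← pow_add, Nat.sub_add_cancel hn]
    rw [this, hE, Finset.mul_sum]
    apply Finset.sum_congr rfl
    intro i _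
    push_cast; ring
  · intro i
    push_cast
    rw [abs_mul, abs_pow]
    have h1 : |(ℓ : ℝ)| ≤ C0 := by linarith
    have h2 : |(E i : ℝ)| ≤ C0 ^ (n + 1) := le_trans
      (Finset.single_le_sum (f := fun i => |(E i : ℝ)|) (fun _ _ => abs_nonneg _) (Finset.mem_univ i)) hE2
    calc _ ≤ C0 ^ (N - n) * C0 ^ (n + 1) :=
          mul_le_mul (pow_le_pow_left₀ (abs_nonneg _) h1 _) h2 (abs_nonneg _) (by positivity)
      _ = C0 ^ (N + 1) := by rw [← pow_add]; congr 1; omega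
      _ ≤ C0 ^ (2 * N) := pow_le_pow_right₀ hC01 (by omega)
      _ = (C0 ^ 2) ^ N := by rw [pow_mul]

/-- second moment bound -/
lemma second_moment {m : ℕ} {X : Type*} (S : Fin m → Finset X) (f : Fin m → X → ℝ)
    (h0 : ∀ i, ∑ x ∈ S i, f i x = 0) (h1 : ∀ i, ∀ x ∈ S i, |f i x| ≤ 1) :
    ∑ t ∈ Fintype.piFinset S, (∑ i, f i (t i)) ^ 2 ≤ m * (Fintype.piFinset S).card := by
  have hoff : ∀ i j, i ≠ j → ∑ t ∈ Fintype.piFinset S, f i (t i) * f j (t j) = 0 := by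
    intro i j hij
    have h2 := Finset.prod_univ_sum S (fun k x => (if k = i then f i x else 1) * (if k = j then f j x else 1))
    have h3 : ∏ k, ∑ x ∈ S k, ((if k = i then f i x else 1) * (if k = j then f j x else 1)) = 0 := by
      apply Finset.prod_eq_zero (Finset.mem_univ i)
      simp [hij, h0]
    rw [h3] at h2
    rw [h2]
    apply Finset.sum_congr rfl
    intro t _
    rw [Finset.prod_mul_distrib]
    simp
  have : ∀ t : Fin m → X, (∑ i, f i (t i)) ^ 2 = ∑ i, ∑ j, f i (t i) * f j (t j) := by
    intro t; rw [sq, Finset.sum_mul_sum]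
  simp_rw [this]
  rw [Finset.sum_comm]
  have : ∀ i, ∑ t ∈ Fintype.piFinset S, ∑ j, f i (t i) * f j (t j) ≤ (Fintype.piFinset S).card := by
    intro i
    rw [Finset.sum_comm, Finset.sum_eq_single i (fun j _ hj => hoff i j hj.symm) (by simp)]
    calc _ ≤ ∑ t ∈ Fintype.piFinset S, (1 : ℝ) := by
          apply Finset.sum_le_sum
          intro t ht
          have := h1 i (t i) (Fintype.mem_piFinset.1 ht i)
          rw [← sq, ← sq_abs]
          exact pow_le_one₀ (abs_nonneg _) this
      _ = _ := by simp
  calc _ ≤ ∑ i : Fin m, ((Fintype.piFinset S).card : ℝ) := Finset.sum_le_sum fun i _ => this i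
    _ = _ := by simp

lemma chebyshev {m : ℕ} {X : Type*} (S : Fin m → Finset X) (f : Fin m → X → ℝ)
    (h0 : ∀ i, ∑ x ∈ S i, f i x = 0) (h1 : ∀ i, ∀ x ∈ S i, |f i x| ≤ 1) (ε : ℝ) (hε : 0 < ε)
    (hm : 0 < m) :
    (((Fintype.piFinset S).filter (fun t => ∑ i, f i (t i) < - (m * ε))).card : ℝ) * (m * ε ^ 2)
      ≤ (Fintype.piFinset S).card := by
  have hmR : (0 : ℝ) < m := by exact_mod_cast hm
  have h2 := second_moment S f h0 h1
  have h3 : (((Fintype.piFinset S).filter (fun t => ∑ i, f i (t i) < - (m * ε))).card : ℝ) * (m * ε) ^ 2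
      ≤ ∑ t ∈ Fintype.piFinset S, (∑ i, f i (t i)) ^ 2 := by
    calc _ = ∑ t ∈ (Fintype.piFinset S).filter (fun t => ∑ i, f i (t i) < - (m * ε)), (m * ε) ^ 2 := by
          simp
      _ ≤ ∑ t ∈ (Fintype.piFinset S).filter (fun t => ∑ i, f i (t i) < - (m * ε)), (∑ i, f i (t i)) ^ 2 := by
          apply Finset.sum_le_sum
          intro t ht
          have := (Finset.mem_filter.1 ht).2
          have h5 : 0 < m * ε := by positivity
          nlinarith
      _ ≤ _ := Finset.sum_le_sum_of_subset_of_nonneg (Finset.filter_subset _ _)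
          (fun _ _ _ => sq_nonneg _)
  have h4 := h3.trans h2
  have : (m : ℝ) * ((((Fintype.piFinset S).filter (fun t => ∑ i, f i (t i) < - (m * ε))).card : ℝ) * (m * ε ^ 2))
      ≤ m * (Fintype.piFinset S).card := by
    calc _ = (((Fintype.piFinset S).filter (fun t => ∑ i, f i (t i) < - (m * ε))).card : ℝ) * (m * ε) ^ 2 := by ring
      _ ≤ _ := h4
  exact le_of_mul_le_mul_left this hmR

/-- triangle -/
def Tri (n : ℕ) : Finset (ℕ × ℕ) :=
  (Finset.range (n + 1) ×ˢ Finset.range (n + 1)).filter (fun x => x.1 + x.2 ≤ n)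

lemma mem_Tri {n : ℕ} {x : ℕ × ℕ} : x ∈ Tri n ↔ x.1 + x.2 ≤ n := by
  unfold Tri
  simp only [Finset.mem_filter, Finset.mem_product, Finset.mem_range]
  omega

lemma Tri_card_le (n : ℕ) : (Tri n).card ≤ 4 ^ n := by
  have h1 : (Tri n).card ≤ (n + 1) * (n + 1) := by
    refine (Finset.card_filter_le _ _).trans ?_
    simp
  have h2 : n + 1 ≤ 2 ^ n := Nat.lt_two_pow_self
  calc _ ≤ _ := h1
    _ ≤ 2 ^ n * 2 ^ n := Nat.mul_le_mul h2 h2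
    _ = 4 ^ n := by rw [← mul_pow]; norm_num

lemma Tri_sum_swap (n : ℕ) : ∑ x ∈ Tri n, (x.2 : ℝ) = ∑ x ∈ Tri n, (x.1 : ℝ) := by
  refine Finset.sum_nbij' (fun x => (x.2, x.1)) (fun x => (x.2, x.1)) ?_ ?_ ?_ ?_ ?_
  · intro x hx; rw [mem_Tri] at hx ⊢; simp only; omega
  · intro x hx; rw [mem_Tri] at hx ⊢; simp only; omega
  · intros; rfl
  · intros; rfl
  · intros; rfl

lemma Tri_sum_third (n : ℕ) : ∑ x ∈ Tri n, ((n - x.1 - x.2 : ℕ) : ℝ) = ∑ x ∈ Tri n, (x.1 : ℝ) := by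
  refine Finset.sum_nbij' (fun x => (n - x.1 - x.2, x.2)) (fun x => (n - x.1 - x.2, x.2)) ?_ ?_ ?_ ?_ ?_
  · intro x hx; rw [mem_Tri] at hx ⊢; simp only; omega
  · intro x hx; rw [mem_Tri] at hx ⊢; simp only; omega
  · rintro ⟨a, b⟩ hx; rw [mem_Tri] at hx; simp only at hx ⊢; ext <;> simp only <;> omega
  · rintro ⟨a, b⟩ hx; rw [mem_Tri] at hx; simp only at hx ⊢; ext <;> simp only <;> omega
  · intros; rfl

lemma Tri_sum_total (n : ℕ) : 3 * ∑ x ∈ Tri n, (x.1 : ℝ) = n * (Tri n).card := by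
  have : ∑ x ∈ Tri n, (x.1 : ℝ) + ∑ x ∈ Tri n, (x.2 : ℝ) + ∑ x ∈ Tri n, ((n - x.1 - x.2 : ℕ) : ℝ)
      = n * (Tri n).card := by
    rw [← Finset.sum_add_distrib, ← Finset.sum_add_distrib]
    calc _ = ∑ x ∈ Tri n, (n : ℝ) := by
          apply Finset.sum_congr rfl
          intro x hx
          rw [mem_Tri] at hx
          have : x.1 + x.2 + (n - x.1 - x.2) = n := by omega
          exact_mod_cast this
      _ = _ := by simp [mul_comm]
  rw [Tri_sum_swap, Tri_sum_third] at this
  linarith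

end AB

namespace AB
open MvPolynomial

/-- weighted coordinates -/
noncomputable def wt {m : ℕ} (s : Fin m → ℕ) (u : Fin m → ℕ) : ℝ := ∑ i, (s i : ℝ) * (u i : ℝ)

lemma one_bad {m : ℕ} (hm : 0 < m) (s d : Fin m → ℕ) (D ε : ℝ) (hd : ∀ i, 0 < d i)
    (hD : 0 < D) (hsd : ∀ i, (s i : ℝ) * d i = D) (hε : 0 < ε) (u : ℕ → ℕ × ℕ → ℕ)
    (hu : ∀ n, ∀ x ∈ Tri n, u n x ≤ n)
    (hs : ∀ n, 3 * ∑ x ∈ Tri n, (u n x : ℝ) = n * (Tri n).card) :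
    (((Fintype.piFinset (fun i => Tri (d i))).filter
      (fun t => wt s (fun i => u (d i) (t i)) < m * D * (1 / 3 - ε))).card : ℝ) * (m * ε ^ 2)
      ≤ (Fintype.piFinset (fun i => Tri (d i))).card := by
  have hdR : ∀ i, (0 : ℝ) < d i := fun i => by exact_mod_cast hd i
  have key := chebyshev (fun i => Tri (d i)) (fun i x => (u (d i) x : ℝ) / d i - 1 / 3) ?_ ?_ ε hε hm
  · refine le_trans (mul_le_mul_of_nonneg_right ?_ (by positivity)) key
    apply Nat.cast_le.2
    apply Finset.card_le_card
    intro t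
    simp only [Finset.mem_filter]
    rintro ⟨h1, h2⟩
    refine ⟨h1, ?_⟩
    have : wt s (fun i => u (d i) (t i)) = D * ∑ i, (u (d i) (t i) : ℝ) / d i := by
      unfold wt
      rw [Finset.mul_sum]
      apply Finset.sum_congr rfl
      intro i _
      rw [← hsd i]
      field_simp [(hdR i).ne']
    rw [this] at h2
    rw [Finset.sum_sub_distrib]
    simp only [Finset.sum_const, Finset.card_univ, Fintype.card_fin, nsmul_eq_mul]
    have : D * (∑ i, (u (d i) (t i) : ℝ) / d i) < D * (m * (1/3 - ε)) := by linarith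
    have := lt_of_mul_lt_mul_left this hD.le
    linarith
  · intro i
    rw [Finset.sum_sub_distrib, ← Finset.sum_div]
    simp only [Finset.sum_const, nsmul_eq_mul]
    have := hs (d i)
    have h3 := (hdR i).ne'
    field_simp
    linarith
  · intro i x hx
    have h1 : (u (d i) x : ℝ) / d i ≤ 1 := by
      rw [div_le_one (hdR i)]
      exact_mod_cast hu _ x hx
    have h2 : 0 ≤ (u (d i) x : ℝ) / d i := by positivity
    rw [abs_le]
    constructor <;> linarith

/-- balanced exponent vectors -/
noncomputable def BalS {m : ℕ} (s d : Fin m → ℕ) (D ε : ℝ) : Finset (Fin m → ℕ × ℕ) :=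
  (Fintype.piFinset (fun i => Tri (d i))).filter (fun t =>
    m * D * (1 / 3 - ε) ≤ wt s (fun i => (t i).1) ∧ m * D * (1 / 3 - ε) ≤ wt s (fun i => (t i).2) ∧
    m * D * (1 / 3 - ε) ≤ wt s (fun i => d i - (t i).1 - (t i).2))

lemma bal_count {m : ℕ} (hm : 0 < m) (s d : Fin m → ℕ) (D ε : ℝ) (hd : ∀ i, 0 < d i)
    (hD : 0 < D) (hsd : ∀ i, (s i : ℝ) * d i = D) (hε : 0 < ε) (g : ℕ)
    (hg : 3 * (2 * (g : ℝ) + 2) ≤ m * ε ^ 2) :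
    2 * (g * ((Fintype.piFinset (fun i => Tri (d i))) \ BalS s d D ε).card) ≤ (BalS s d D ε).card ∧
    0 < (BalS s d D ε).card := by
  set T := Fintype.piFinset (fun i => Tri (d i)) with hT
  have b1 := one_bad hm s d D ε hd hD hsd hε (fun _ x => x.1)
    (fun n x hx => by rw [mem_Tri] at hx; omega) (fun n => Tri_sum_total n)
  have b2 := one_bad hm s d D ε hd hD hsd hε (fun _ x => x.2)
    (fun n x hx => by rw [mem_Tri] at hx; omega)
    (fun n => by simp only [Tri_sum_swap]; exact Tri_sum_total n)
  have b3 := one_bad hm s d D ε hd hD hsd hε (fun n x => n - x.1 - x.2)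
    (fun n x hx => by omega)
    (fun n => by simp only [Tri_sum_third]; exact Tri_sum_total n)
  rw [← hT] at b1 b2 b3
  have hsub : T \ BalS s d D ε ⊆
      (T.filter (fun t => wt s (fun i => (t i).1) < m * D * (1 / 3 - ε)) ∪
      T.filter (fun t => wt s (fun i => (t i).2) < m * D * (1 / 3 - ε))) ∪
      T.filter (fun t => wt s (fun i => d i - (t i).1 - (t i).2) < m * D * (1 / 3 - ε)) := by
    intro t
    simp only [BalS, Finset.mem_sdiff, Finset.mem_union, Finset.mem_filter, not_and, not_le]
    rintro ⟨h1, h2⟩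
    by_contra hcon
    push Not at hcon
    exact absurd (h2 h1 (hcon.1.1 h1) (hcon.1.2 h1)) (not_lt.2 (hcon.2 h1))
  have hc1 := Finset.card_le_card hsub
  have hc2 := hc1.trans ((Finset.card_union_le _ _).trans
    (Nat.add_le_add_right (Finset.card_union_le _ _) _))
  have hc3 : ((T \ BalS s d D ε).card : ℝ) * (m * ε ^ 2) ≤ 3 * T.card := by
    have : ((T \ BalS s d D ε).card : ℝ) ≤ _ := Nat.cast_le.2 hc2
    push_cast at this
    have := mul_le_mul_of_nonneg_right this (show (0:ℝ) ≤ m * ε ^ 2 by positivity)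
    linarith
  have hBT : BalS s d D ε ⊆ T := Finset.filter_subset _ _
  have hc4 : (T \ BalS s d D ε).card + (BalS s d D ε).card = T.card := Finset.card_sdiff_add_card_eq_card hBT
  have hc5 : ((T \ BalS s d D ε).card : ℝ) * (2 * g + 2) ≤ T.card := by
    have := mul_le_mul_of_nonneg_left hg (Nat.cast_nonneg (α := ℝ) (T \ BalS s d D ε).card)
    linarith
  have hc6 : (T \ BalS s d D ε).card * (2 * g + 2) ≤ T.card := by exact_mod_cast hc5
  have hTpos : 0 < T.card := by
    rw [Finset.card_pos]
    refine ⟨fun _ => (0, 0), ?_⟩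
    rw [hT, Fintype.mem_piFinset]
    intro i
    rw [mem_Tri]; simp
  constructor
  · nlinarith
  · by_contra h0
    have h0 : (BalS s d D ε).card = 0 := by omega
    rw [h0, add_zero] at hc4
    rw [hc4] at hc6
    nlinarith

/-- product of binomials -/
def mbin {m : ℕ} (t t' : Fin m → ℕ × ℕ) : ℕ :=
  ∏ i, ((t i).1.choose (t' i).1 * (t i).2.choose (t' i).2)
/-- exponent of alpha -/
def ex {m : ℕ} (t t' : Fin m → ℕ × ℕ) : ℕ :=
  ∑ i, (((t i).1 - (t' i).1) + ((t i).2 - (t' i).2))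

lemma mbin_le {m : ℕ} (d : Fin m → ℕ) (t t' : Fin m → ℕ × ℕ) (ht : ∀ i, (t i).1 + (t i).2 ≤ d i) :
    mbin t t' ≤ 2 ^ (∑ i, d i) := by
  unfold mbin
  rw [← Finset.prod_pow_eq_pow_sum]
  apply Finset.prod_le_prod' 
  intro i _
  calc _ ≤ 2 ^ (t i).1 * 2 ^ (t i).2 := Nat.mul_le_mul (Nat.choose_le_two_pow _ _) (Nat.choose_le_two_pow _ _)
    _ = 2 ^ ((t i).1 + (t i).2) := (pow_add _ _ _).symm
    _ ≤ _ := Nat.pow_le_pow_right (by norm_num) (ht i)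

lemma ex_le {m : ℕ} (d : Fin m → ℕ) (t t' : Fin m → ℕ × ℕ) (ht : ∀ i, (t i).1 + (t i).2 ≤ d i) :
    ex t t' ≤ ∑ i, d i := by
  unfold ex
  apply Finset.sum_le_sum
  intro i _
  have := ht i
  omega

lemma T_card_le {m : ℕ} (d : Fin m → ℕ) :
    (Fintype.piFinset (fun i => Tri (d i))).card ≤ 4 ^ (∑ i, d i) := by
  rw [Fintype.card_piFinset, ← Finset.prod_pow_eq_pow_sum]
  exact Finset.prod_le_prod' fun i _ => Tri_card_le _

lemma siegel_step {m : ℕ} (d : Fin m → ℕ) (α : ℝ) (g : ℕ) (w : Fin g → ℝ) (ℓ : ℤ) (C : ℝ)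
    (hℓ : ℓ ≠ 0) (hC : 1 ≤ C)
    (hw : ∀ N n : ℕ, n ≤ N → 1 ≤ N → ∃ E : Fin g → ℤ,
      (ℓ : ℝ) ^ N * α ^ n = ∑ i, (E i : ℝ) * w i ∧ ∀ i, |(E i : ℝ)| ≤ C ^ N)
    (hd : 1 ≤ ∑ i, d i) (Bal Bad : Finset (Fin m → ℕ × ℕ))
    (hBal : Bal ⊆ Fintype.piFinset (fun i => Tri (d i)))
    (hc : 2 * (g * Bad.card) ≤ Bal.card) (hpos : 0 < Bal.card) :
    ∃ p : (Fin m → ℕ × ℕ) → ℤ, (∃ t ∈ Bal, p t ≠ 0) ∧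
      (∀ t, |(p t : ℝ)| ≤ (8 * C) ^ (∑ i, d i)) ∧
      ∀ t' ∈ Bad, ∑ t ∈ Bal, (p t : ℝ) * ((mbin t t' : ℝ) * α ^ (ex t t')) = 0 := by
  set N := ∑ i, d i with hN
  have hmem : ∀ t ∈ Bal, ∀ i, (t i).1 + (t i).2 ≤ d i := by
    intro t ht i
    have := Fintype.mem_piFinset.1 (hBal ht) i
    exact mem_Tri.1 this
  have hE : ∀ t ∈ Bal, ∀ t', ∃ E : Fin g → ℤ,
      (ℓ : ℝ) ^ N * α ^ (ex t t') = ∑ i, (E i : ℝ) * w i ∧ ∀ i, |(E i : ℝ)| ≤ C ^ N :=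
    fun t ht t' => hw N _ (ex_le d t t' (hmem t ht)) hd
  choose! E hE1 hE2 using hE
  obtain ⟨p, hp0, hp1, hp2⟩ := siegel (ρ := Bad × Fin g) (κ := Bal)
    (fun r k => (mbin k.1 r.1.1 : ℤ) * E k.1 r.1.1 r.2) ((2 * C) ^ N)
    (one_le_pow₀ (by linarith)) (by
      intro r k
      push_cast
      rw [abs_mul, Nat.abs_cast, mul_pow]
      apply mul_le_mul _ (hE2 _ k.2 _ _) (abs_nonneg _) (by positivity)
      exact_mod_cast mbin_le d _ _ (hmem _ k.2))
    (by simp only [Fintype.card_prod, Fintype.card_coe, Fintype.card_fin]; rw [mul_comm Bad.card]; exact hc)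
    (by simpa using Finset.card_pos.1 hpos)
  refine ⟨fun t => if h : t ∈ Bal then p ⟨t, h⟩ else 0, ?_, ?_, ?_⟩
  · by_contra hcon
    push Not at hcon
    apply hp0
    funext k
    have := hcon k.1 k.2
    simpa using this
  · intro t
    have hcard : ((Fintype.card Bal : ℕ) : ℝ) * (2 * C) ^ N ≤ (8 * C) ^ N := by
      have : (Fintype.card Bal : ℝ) ≤ 4 ^ N := by
        rw [Fintype.card_coe]
        exact_mod_cast (Finset.card_le_card hBal).trans (T_card_le d)
      calc _ ≤ 4 ^ N * (2 * C) ^ N := mul_le_mul_of_nonneg_right this (by positivity)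
        _ = _ := by rw [← mul_pow]; ring_nf
    by_cases h : t ∈ Bal
    · simp only [h, dif_pos]
      exact (hp2 _).trans hcard
    · simp only [h, dif_neg, not_false_iff, Int.cast_zero, abs_zero]
      positivity
  · intro t' ht'
    have hl : (ℓ : ℝ) ^ N ≠ 0 := pow_ne_zero _ (by exact_mod_cast hℓ)
    apply mul_left_cancel₀ hl
    rw [mul_zero, Finset.mul_sum]
    calc _ = ∑ t ∈ Bal, ∑ i, (((mbin t t' : ℤ) * E t t' i * (if h : t ∈ Bal then p ⟨t, h⟩ else 0) : ℤ) : ℝ) * w i := by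
          apply Finset.sum_congr rfl
          intro t ht
          have h1 := hE1 t ht t'
          calc _ = (((if h : t ∈ Bal then p ⟨t, h⟩ else 0) : ℤ) : ℝ) * (mbin t t' : ℝ) * ((ℓ : ℝ) ^ N * α ^ (ex t t')) := by ring
            _ = _ := by
              rw [h1, Finset.mul_sum]
              apply Finset.sum_congr rfl
              intro i _
              push_cast
              ring
      _ = ∑ i, ((∑ t ∈ Bal, ((mbin t t' : ℤ) * E t t' i * (if h : t ∈ Bal then p ⟨t, h⟩ else 0) : ℤ) : ℤ) : ℝ) * w i := by
          rw [Finset.sum_comm]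
          apply Finset.sum_congr rfl
          intro i _
          rw [Int.cast_sum, Finset.sum_mul]
      _ = 0 := by
          apply Finset.sum_eq_zero
          intro i _
          have h2 := hp1 (⟨t', ht'⟩, i)
          have h3 : (∑ t ∈ Bal, ((mbin t t' : ℤ) * E t t' i * (if h : t ∈ Bal then p ⟨t, h⟩ else 0) : ℤ) : ℤ) = 0 := by
            rw [← h2, ← Finset.sum_coe_sort Bal]
            apply Finset.sum_congr rfl
            rintro ⟨k, hk⟩ _
            simp [hk]
          rw [h3]; simp

lemma choose_taylor {R : Type*} [CommRing R] (a J n : ℕ) (hn : a ≤ n) (x v : R) :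
    (a.choose J : R) * (x + v) ^ (a - J) = ∑ k ∈ Finset.range (n + 1),
      (a.choose k : R) * (k.choose J : R) * x ^ (k - J) * v ^ (a - k) := by
  have hext : ∑ k ∈ Finset.range (n + 1), (a.choose k : R) * (k.choose J : R) * x ^ (k - J) * v ^ (a - k)
      = ∑ k ∈ Finset.range (a + 1), (a.choose k : R) * (k.choose J : R) * x ^ (k - J) * v ^ (a - k) := by
    symm
    apply Finset.sum_subset (Finset.range_mono (by omega))
    intro k _ hk
    rw [Finset.mem_range, not_lt] at hk
    rw [Nat.choose_eq_zero_of_lt (by omega)]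
    simp
  rw [hext]
  by_cases hJ : J ≤ a
  · obtain ⟨b, rfl⟩ := Nat.exists_eq_add_of_le hJ
    rw [show J + b + 1 = J + (b + 1) by ring, Finset.sum_range_add]
    rw [Finset.sum_eq_zero, zero_add, Nat.add_sub_cancel_left, add_pow, Finset.mul_sum]
    · apply Finset.sum_congr rfl
      intro k hk
      rw [Finset.mem_range] at hk
      have h1 := Nat.choose_mul (n := J + b) (k := J + k) (s := J) (by omega)
      rw [Nat.add_sub_cancel_left, Nat.add_sub_cancel_left] at h1
      have h2 : ((J + b).choose (J + k) : R) * ((J + k).choose J : R) = ((J + b).choose J : R) * (b.choose k : R) := by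
        exact_mod_cast congrArg (Nat.cast (R := R)) h1
      rw [h2, Nat.add_sub_cancel_left, show J + b - (J + k) = b - k by omega]
      ring
    · intro k hk
      rw [Finset.mem_range] at hk
      rw [Nat.choose_eq_zero_of_lt hk]; simp
  · rw [Nat.choose_eq_zero_of_lt (by omega)]
    rw [Finset.sum_eq_zero]
    · simp
    · intro k hk
      rw [Finset.mem_range] at hk
      rw [Nat.choose_eq_zero_of_lt (show k < J by omega)]; simp

lemma single_taylor {R : Type*} [CommRing R] (d J : ℕ) (t : ℕ × ℕ) (ht : t ∈ Tri d) (α x y z : R) :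
    (t.1.choose J : R) * x ^ (t.1 - J) * y ^ t.2 * z ^ (d - t.1 - t.2) =
    ∑ t' ∈ Tri d, ((t.1.choose t'.1 * t.2.choose t'.2 : ℕ) : R) * α ^ ((t.1 - t'.1) + (t.2 - t'.2)) *
      ((t'.1.choose J : R) * (x - α * z) ^ (t'.1 - J) * (y - α * z) ^ t'.2 * z ^ (d - t'.1 - t'.2)) := by
  rw [mem_Tri] at ht
  have h1 := choose_taylor t.1 J d (by omega) (x - α * z) (α * z)
  have h2 := choose_taylor t.2 0 d (by omega) (y - α * z) (α * z)
  rw [sub_add_cancel] at h1 h2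
  simp only [Nat.choose_zero_right, Nat.cast_one, one_mul, mul_one, Nat.sub_zero] at h2
  rw [h1, h2, Finset.sum_mul_sum, ← Finset.sum_product', Finset.sum_mul]
  symm
  apply Finset.sum_subset_zero_on_sdiff
  · exact Finset.filter_subset _ _
  · intro t' h'
    rw [Finset.mem_sdiff, mem_Tri] at h'
    have : t.1 < t'.1 ∨ t.2 < t'.2 := by omega
    rcases this with h | h <;> rw [Nat.choose_eq_zero_of_lt h] <;> simp
  · intro t' h'
    rw [mem_Tri] at h'
    by_cases h3 : t'.1 ≤ t.1
    · by_cases h4 : t'.2 ≤ t.2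
      · have : d - t'.1 - t'.2 = (t.1 - t'.1) + (t.2 - t'.2) + (d - t.1 - t.2) := by omega
        rw [this, pow_add, pow_add, pow_add, mul_pow, mul_pow]
        push_cast
        ring
      · rw [Nat.choose_eq_zero_of_lt (show t.2 < t'.2 by omega)]; simp
    · rw [Nat.choose_eq_zero_of_lt (show t.1 < t'.1 by omega)]; simp

lemma multi_taylor {R : Type*} [CommRing R] {m : ℕ} (d J : Fin m → ℕ) (Bal : Finset (Fin m → ℕ × ℕ))
    (hBal : Bal ⊆ Fintype.piFinset (fun i => Tri (d i))) (p : (Fin m → ℕ × ℕ) → R)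
    (α : R) (x y z : Fin m → R) :
    ∑ t ∈ Bal, p t * ∏ i, (((t i).1.choose (J i) : R) * x i ^ ((t i).1 - J i) * y i ^ (t i).2 *
      z i ^ (d i - (t i).1 - (t i).2)) =
    ∑ t' ∈ Fintype.piFinset (fun i => Tri (d i)),
      (∑ t ∈ Bal, p t * ((mbin t t' : R) * α ^ (ex t t'))) *
      ∏ i, (((t' i).1.choose (J i) : R) * (x i - α * z i) ^ ((t' i).1 - J i) *
        (y i - α * z i) ^ (t' i).2 * z i ^ (d i - (t' i).1 - (t' i).2)) := by
  simp_rw [Finset.sum_mul]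
  rw [Finset.sum_comm]
  apply Finset.sum_congr rfl
  intro t ht
  have h1 : ∀ i, t i ∈ Tri (d i) := fun i => Fintype.mem_piFinset.1 (hBal ht) i
  rw [Finset.prod_congr rfl (fun i _ => single_taylor (d i) (J i) (t i) (h1 i) α (x i) (y i) (z i)),
    Finset.prod_univ_sum, Finset.mul_sum]
  apply Finset.sum_congr rfl
  intro t' _
  rw [Finset.prod_mul_distrib, Finset.prod_mul_distrib, Finset.prod_pow_eq_pow_sum]
  unfold mbin ex
  push_cast
  ring

end AB

namespace AB
open MvPolynomial

/-- linear form in the pair of variables attached to i -/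
noncomputable def lf {m : ℕ} {R : Type*} [CommRing R] (c : Fin m → Fin 2 → R) (i : Fin m) :
    MvPolynomial (Fin m × Fin 2) R := ∑ k : Fin 2, C (c i k) * X (i, k)

lemma lf_n1 {m : ℕ} (c : Fin m → Fin 2 → ℝ) (i : Fin m) (B : ℝ) (h : ∀ k, |c i k| ≤ B) :
    n1 (lf c i) ≤ 2 * B := by
  unfold lf
  refine (n1_sum_le _ _).trans ?_
  have : ∀ k ∈ (Finset.univ : Finset (Fin 2)), n1 (C (c i k) * X (i, k) : MvPolynomial (Fin m × Fin 2) ℝ) ≤ B := by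
    intro k _
    rw [C_mul_X_eq_monomial]
    exact (n1_monomial_le _ _).trans (h k)
  refine (Finset.sum_le_sum this).trans ?_
  simp

lemma lf_sub {m : ℕ} {R : Type*} [CommRing R] (c c' : Fin m → Fin 2 → R) (α : R) (i : Fin m) :
    lf c i - C α * lf c' i = lf (fun i k => c i k - α * c' i k) i := by
  unfold lf
  rw [Finset.mul_sum, ← Finset.sum_sub_distrib]
  apply Finset.sum_congr rfl
  intro k _
  rw [map_sub, map_mul]
  ring

lemma lf_scale {m : ℕ} (c : Fin m → Fin 2 → ℤ) (e : Fin m → ℕ) (q : ℕ) (hq : 2 ≤ q) (i : Fin m) :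
    map (Int.castRingHom ℝ) (lf c i) = C ((q : ℝ) ^ (e i)) * lf (fun i k => (c i k : ℝ) / (q : ℝ) ^ (e i)) i := by
  unfold lf
  rw [map_sum, Finset.mul_sum]
  apply Finset.sum_congr rfl
  intro k _
  have : (q : ℝ) ^ (e i) ≠ 0 := pow_ne_zero _ (by positivity)
  rw [map_mul, map_C, map_X, ← mul_assoc, ← map_mul, mul_div_cancel₀ _ this]
  rfl

/-- the auxiliary polynomial -/
noncomputable def GJ {R : Type*} [CommRing R] {m : ℕ} (d J : Fin m → ℕ) (Bal : Finset (Fin m → ℕ × ℕ))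
    (p : (Fin m → ℕ × ℕ) → ℤ) (x y z : Fin m → R) : R :=
  ∑ t ∈ Bal, (p t : R) * ∏ i, (((t i).1.choose (J i) : R) * x i ^ ((t i).1 - J i) * y i ^ (t i).2 *
      z i ^ (d i - (t i).1 - (t i).2))

lemma GJ_int {m : ℕ} (d J : Fin m → ℕ) (Bal : Finset (Fin m → ℕ × ℕ))
    (p : (Fin m → ℕ × ℕ) → ℤ) (q : ℕ) (hq : 2 ≤ q) (e f : Fin m → ℕ) (X Y Z : Fin m → Fin 2 → ℤ) (E : ℕ)
    (hE : ∀ t ∈ Bal, ∑ i, (e i * (t i).1 + f i * (t i).2) ≤ E) :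
    ∃ H : MvPolynomial (Fin m × Fin 2) ℤ, map (Int.castRingHom ℝ) H = C ((q : ℝ) ^ E) *
      GJ d J Bal p (lf fun i k => (X i k : ℝ) / (q : ℝ) ^ (e i)) (lf fun i k => (Y i k : ℝ) / (q : ℝ) ^ (f i))
        (lf fun i k => (Z i k : ℝ)) := by
  refine ⟨∑ t ∈ Bal, C (p t * (q : ℤ) ^ (E - ∑ i, (e i * ((t i).1 - J i) + f i * (t i).2))) *
    ∏ i, (((t i).1.choose (J i) : MvPolynomial (Fin m × Fin 2) ℤ) * lf X i ^ ((t i).1 - J i) * lf Y i ^ (t i).2 *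
      lf Z i ^ (d i - (t i).1 - (t i).2)), ?_⟩
  rw [map_sum, GJ, Finset.mul_sum]
  apply Finset.sum_congr rfl
  intro t ht
  have h1 : ∑ i, (e i * ((t i).1 - J i) + f i * (t i).2) ≤ E := by
    refine le_trans ?_ (hE t ht)
    apply Finset.sum_le_sum
    intro i _
    have := Nat.mul_le_mul_left (e i) (Nat.sub_le (t i).1 (J i))
    omega
  have hZ : ∀ i, map (Int.castRingHom ℝ) (lf Z i) = lf (fun i k => (Z i k : ℝ)) i := by
    intro i
    have := lf_scale Z (fun _ => 0) q hq i
    simpa using this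
  rw [map_mul, map_C, map_prod]
  simp only [map_mul, map_pow, map_natCast, lf_scale X e q hq, lf_scale Y f q hq, hZ, map_intCast,
    eq_intCast]
  have h2 : (q : ℝ) ^ E = (q : ℝ) ^ (E - ∑ i, (e i * ((t i).1 - J i) + f i * (t i).2)) *
      ∏ i, ((q : ℝ) ^ (e i * ((t i).1 - J i)) * (q : ℝ) ^ (f i * (t i).2)) := by
    simp_rw [← pow_add]
    rw [Finset.prod_pow_eq_pow_sum, ← pow_add, Nat.sub_add_cancel h1]
  have h3 : (C ((q:ℝ) ^ E) : MvPolynomial (Fin m × Fin 2) ℝ) =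
      C (q : ℝ) ^ (E - ∑ i, (e i * ((t i).1 - J i) + f i * (t i).2)) *
      ∏ i, (C (q : ℝ) ^ (e i * ((t i).1 - J i)) * C (q : ℝ) ^ (f i * (t i).2)) := by
    rw [h2]
    simp only [map_mul, map_pow, map_prod]
  simp only [map_pow, map_natCast] at h3
  rw [h3, mul_assoc, mul_assoc]
  rw [show ∀ (a b c d : MvPolynomial (Fin m × Fin 2) ℝ), a * (b * (c * d)) = c * (a * (b * d)) by intros; ring]
  congr 2
  · rw [← Finset.prod_mul_distrib]
    apply Finset.prod_congr rfl
    intro i _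
    rw [mul_pow, mul_pow, pow_mul, pow_mul]
    ring

lemma int_vanish {σ : Type*} (H : MvPolynomial σ ℤ) (h : n1 (map (Int.castRingHom ℝ) H) < 1) : H = 0 := by
  ext A
  have h1 := (norm_coeff_le_n1 (map (Int.castRingHom ℝ) H) A).trans_lt h
  rw [coeff_map, eq_intCast, Real.norm_eq_abs] at h1
  rw [coeff_zero]
  have h2 : |coeff A H| < 1 := by exact_mod_cast h1
  exact Int.abs_lt_one_iff.1 h2

lemma term_bound {m : ℕ} (s d J : Fin m → ℕ) (t : Fin m → ℕ × ℕ) (ht : ∀ i, (t i).1 + (t i).2 ≤ d i)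
    (γx γy γz : ℝ) (x y z : Fin m → MvPolynomial (Fin m × Fin 2) ℝ)
    (hx : ∀ i, n1 (x i) ≤ 2 * Real.exp (γx * s i)) (hy : ∀ i, n1 (y i) ≤ 2 * Real.exp (γy * s i))
    (hz : ∀ i, n1 (z i) ≤ 2 * Real.exp (γz * s i)) :
    n1 (∏ i, (((t i).1.choose (J i) : MvPolynomial (Fin m × Fin 2) ℝ) * x i ^ ((t i).1 - J i) * y i ^ (t i).2 *
      z i ^ (d i - (t i).1 - (t i).2))) ≤ 4 ^ (∑ i, d i) *
      Real.exp (γx * (wt s (fun i => (t i).1) - wt s J) + γy * wt s (fun i => (t i).2) +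
        γz * wt s (fun i => d i - (t i).1 - (t i).2)) := by
  by_cases hJ : ∃ i, (t i).1 < J i
  · obtain ⟨i, hi⟩ := hJ
    rw [Finset.prod_eq_zero (Finset.mem_univ i), n1_zero]
    · positivity
    · rw [Nat.choose_eq_zero_of_lt hi]; simp
  · push Not at hJ
    refine (n1_prod_le _ _).trans ?_
    have h1 : γx * (wt s (fun i => (t i).1) - wt s J) + γy * wt s (fun i => (t i).2) +
        γz * wt s (fun i => d i - (t i).1 - (t i).2) =
        ∑ i, ((((t i).1 - J i : ℕ) : ℝ) * (γx * s i) + ((t i).2 : ℝ) * (γy * s i) +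
          ((d i - (t i).1 - (t i).2 : ℕ) : ℝ) * (γz * s i)) := by
      unfold wt
      rw [← Finset.sum_sub_distrib, Finset.mul_sum, Finset.mul_sum, Finset.mul_sum,
        ← Finset.sum_add_distrib, ← Finset.sum_add_distrib]
      apply Finset.sum_congr rfl
      intro i _
      rw [Nat.cast_sub (hJ i)]
      ring
    rw [h1, Real.exp_sum, ← Finset.prod_pow_eq_pow_sum, ← Finset.prod_mul_distrib]
    apply Finset.prod_le_prod (fun i _ => n1_nonneg _)
    intro i _
    have hc : n1 (((t i).1.choose (J i) : ℕ) : MvPolynomial (Fin m × Fin 2) ℝ) ≤ 2 ^ (t i).1 := by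
      have := n1_C_le (σ := Fin m × Fin 2) (((t i).1.choose (J i) : ℕ) : ℝ)
      rw [map_natCast] at this
      refine this.trans ?_
      rw [Real.norm_natCast]
      exact_mod_cast Nat.choose_le_two_pow _ _
    have hp : ∀ (P : MvPolynomial (Fin m × Fin 2) ℝ) (γ : ℝ) (n : ℕ), n1 P ≤ 2 * Real.exp γ →
        n1 (P ^ n) ≤ 2 ^ n * Real.exp (n * γ) := by
      intro P γ n h
      refine (n1_pow_le _ _).trans ((pow_le_pow_left₀ (n1_nonneg _) h n).trans ?_)
      rw [mul_pow, ← Real.exp_nat_mul]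
    have h2 : n1 (((t i).1.choose (J i) : MvPolynomial (Fin m × Fin 2) ℝ) * x i ^ ((t i).1 - J i) * y i ^ (t i).2 *
      z i ^ (d i - (t i).1 - (t i).2)) ≤ 2 ^ (t i).1 *
        (2 ^ ((t i).1 - J i) * Real.exp (((t i).1 - J i : ℕ) * (γx * s i))) *
        (2 ^ (t i).2 * Real.exp ((t i).2 * (γy * s i))) *
        (2 ^ (d i - (t i).1 - (t i).2) * Real.exp ((d i - (t i).1 - (t i).2 : ℕ) * (γz * s i))) := by
      refine (n1_mul_le _ _).trans (mul_le_mul ?_ (hp _ _ _ (hz i)) (n1_nonneg _) (by positivity))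
      refine (n1_mul_le _ _).trans (mul_le_mul ?_ (hp _ _ _ (hy i)) (n1_nonneg _) (by positivity))
      exact (n1_mul_le _ _).trans (mul_le_mul hc (hp _ _ _ (hx i)) (n1_nonneg _) (by positivity))
    refine h2.trans ?_
    rw [Real.exp_add, Real.exp_add]
    have h3 : (2:ℝ) ^ (t i).1 * 2 ^ ((t i).1 - J i) * 2 ^ (t i).2 * 2 ^ (d i - (t i).1 - (t i).2) ≤ 4 ^ (d i) := by
      rw [← pow_add, ← pow_add, ← pow_add, show (4:ℝ) = 2 ^ 2 by norm_num, ← pow_mul]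
      apply pow_le_pow_right₀ (by norm_num)
      have := ht i
      omega
    have h4 := mul_le_mul_of_nonneg_right h3 (show 0 ≤ Real.exp (((t i).1 - J i : ℕ) * (γx * s i)) *
      Real.exp ((t i).2 * (γy * s i)) * Real.exp ((d i - (t i).1 - (t i).2 : ℕ) * (γz * s i)) by positivity)
    refine le_trans (le_of_eq ?_) h4
    ring

lemma wt_bounds {m : ℕ} (s d : Fin m → ℕ) (D ε : ℝ) (hsd : ∀ i, (s i : ℝ) * d i = D)
    (t : Fin m → ℕ × ℕ) (ht : t ∈ BalS s d D ε) :
    |wt s (fun i => (t i).1) - m * D / 3| ≤ 2 * ε * (m * D) ∧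
    |wt s (fun i => (t i).2) - m * D / 3| ≤ 2 * ε * (m * D) ∧
    |wt s (fun i => d i - (t i).1 - (t i).2) - m * D / 3| ≤ 2 * ε * (m * D) := by
  unfold BalS at ht
  rw [Finset.mem_filter] at ht
  obtain ⟨h0, h1, h2, h3⟩ := ht
  have h4 : wt s (fun i => (t i).1) + wt s (fun i => (t i).2) + wt s (fun i => d i - (t i).1 - (t i).2) = m * D := by
    unfold wt
    rw [← Finset.sum_add_distrib, ← Finset.sum_add_distrib]
    rw [Finset.sum_congr rfl (g := fun _ => D)]
    · simp
    · intro i _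
      have h5 := mem_Tri.1 (Fintype.mem_piFinset.1 h0 i)
      have h6 : (t i).1 + (t i).2 + (d i - (t i).1 - (t i).2) = d i := by omega
      rw [← hsd i, ← mul_add, ← mul_add]
      congr 1
      exact_mod_cast h6
  have h7 : 0 ≤ ε * (m * D) := by linarith
  refine ⟨?_, ?_, ?_⟩ <;> rw [abs_le] <;> constructor <;> linarith

lemma wt_nonneg {m : ℕ} (s u : Fin m → ℕ) : 0 ≤ wt s u :=
  Finset.sum_nonneg fun _ _ => by positivity

lemma mul_dev (γ u v M : ℝ) (h : |u - v| ≤ M) : γ * u ≤ γ * v + |γ| * M := by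
  have : γ * (u - v) ≤ |γ| * M := (le_abs_self _).trans (by
    rw [abs_mul]; exact mul_le_mul_of_nonneg_left h (abs_nonneg _))
  linarith

lemma coef_bound {m : ℕ} (d : Fin m → ℕ) (α : ℝ) (C : ℝ) (hC : 1 ≤ C) (Bal : Finset (Fin m → ℕ × ℕ))
    (hBal : Bal ⊆ Fintype.piFinset (fun i => Tri (d i))) (p : (Fin m → ℕ × ℕ) → ℤ)
    (hp : ∀ t, |(p t : ℝ)| ≤ (8 * C) ^ (∑ i, d i)) (t' : Fin m → ℕ × ℕ) :
    |∑ t ∈ Bal, (p t : ℝ) * ((mbin t t' : ℝ) * α ^ (ex t t'))| ≤ (64 * C * (max 1 |α|)) ^ (∑ i, d i) := by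
  have hmem : ∀ t ∈ Bal, ∀ i, (t i).1 + (t i).2 ≤ d i := by
    intro t ht i
    have := Fintype.mem_piFinset.1 (hBal ht) i
    exact mem_Tri.1 this
  refine (Finset.abs_sum_le_sum_abs _ _).trans ?_
  have h1 : ∀ t ∈ Bal, |(p t : ℝ) * ((mbin t t' : ℝ) * α ^ (ex t t'))| ≤
      (8 * C) ^ (∑ i, d i) * (2 ^ (∑ i, d i) * (max 1 |α|) ^ (∑ i, d i)) := by
    intro t ht
    rw [abs_mul, abs_mul]
    apply mul_le_mul (hp t) _ (by positivity) (by positivity)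
    apply mul_le_mul _ _ (by positivity) (by positivity)
    · rw [Nat.abs_cast]
      exact_mod_cast mbin_le d t t' (hmem t ht)
    · rw [abs_pow]
      calc |α| ^ (ex t t') ≤ (max 1 |α|) ^ (ex t t') := pow_le_pow_left₀ (abs_nonneg _) (le_max_right _ _) _
        _ ≤ _ := pow_le_pow_right₀ (le_max_left _ _) (ex_le d t t' (hmem t ht))
  refine (Finset.sum_le_sum h1).trans ?_
  rw [Finset.sum_const, nsmul_eq_mul]
  have h2 : (Bal.card : ℝ) ≤ 4 ^ (∑ i, d i) := by
    exact_mod_cast (Finset.card_le_card hBal).trans (T_card_le d)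
  refine (mul_le_mul_of_nonneg_right h2 (by positivity)).trans (le_of_eq ?_)
  rw [← mul_pow, ← mul_pow, ← mul_pow]
  congr 1
  ring

lemma vanish {m : ℕ} (s d : Fin m → ℕ) (D ε : ℝ) (hm : 0 < m) (hD : 0 < D) (hε : 0 < ε)
    (hsd : ∀ i, (s i : ℝ) * d i = D) (α C₀ : ℝ) (hC : 1 ≤ C₀)
    (p : (Fin m → ℕ × ℕ) → ℤ) (hp : ∀ t, |(p t : ℝ)| ≤ (8 * C₀) ^ (∑ i, d i))
    (hp0 : ∀ t' ∈ (Fintype.piFinset (fun i => Tri (d i))) \ BalS s d D ε,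
      ∑ t ∈ BalS s d D ε, (p t : ℝ) * ((mbin t t' : ℝ) * α ^ (ex t t')) = 0)
    (q : ℕ) (hq : 2 ≤ q) (e f : Fin m → ℕ) (X Y Z : Fin m → Fin 2 → ℤ)
    (ηx ηy γx γy γz : ℝ) (hηx : 0 ≤ ηx) (hηy : 0 ≤ ηy)
    (he : ∀ i, (e i : ℝ) * Real.log q ≤ ηx * s i) (hf : ∀ i, (f i : ℝ) * Real.log q ≤ ηy * s i)
    (hX : ∀ i k, |(X i k : ℝ) / (q : ℝ) ^ (e i) - α * Z i k| ≤ Real.exp (γx * s i))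
    (hY : ∀ i k, |(Y i k : ℝ) / (q : ℝ) ^ (f i) - α * Z i k| ≤ Real.exp (γy * s i))
    (hZ : ∀ i k, |(Z i k : ℝ)| ≤ Real.exp (γz * s i))
    (hsmall : ((∑ i, d i : ℕ) : ℝ) * Real.log (1024 * C₀ * max 1 |α|) <
      m * D * (-(γx + γy + γz + ηx + ηy) / 3 - 3 * ε * (|γx| + |γy| + |γz| + ηx + ηy)))
    (J : Fin m → ℕ) (hJ : wt s J ≤ ε * D) :
    GJ d J (BalS s d D ε) p (lf fun i k => (X i k : ℝ) / (q : ℝ) ^ (e i))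
      (lf fun i k => (Y i k : ℝ) / (q : ℝ) ^ (f i)) (lf fun i k => (Z i k : ℝ)) = 0 := by
  set N := ∑ i, d i with hN
  have hL : 0 < Real.log q := Real.log_pos (by exact_mod_cast (show 1 < q by omega))
  have hq0 : (0:ℝ) < q := by positivity
  have hmR : (1:ℝ) ≤ m := by exact_mod_cast hm
  have hM : 0 < m * D := by positivity
  set E := ⌊(ηx + ηy) * (m * D * (1 / 3 + 2 * ε)) / Real.log q⌋₊ with hE
  have hEle : (E : ℝ) * Real.log q ≤ (ηx + ηy) * (m * D * (1 / 3 + 2 * ε)) := by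
    rw [← le_div_iff₀ hL]
    exact Nat.floor_le (by positivity)
  have hBT : BalS s d D ε ⊆ Fintype.piFinset (fun i => Tri (d i)) := Finset.filter_subset _ _
  obtain ⟨H, hH⟩ := GJ_int d J (BalS s d D ε) p q hq e f X Y Z E (by
    intro t ht
    apply Nat.le_floor
    rw [le_div_iff₀ hL]
    obtain ⟨b1, b2, b3⟩ := wt_bounds s d D ε hsd t ht
    have b1 := (abs_le.1 b1).2
    have b2 := (abs_le.1 b2).2
    have h1 : ((∑ i, (e i * (t i).1 + f i * (t i).2) : ℕ) : ℝ) * Real.log q ≤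
        ηx * wt s (fun i => (t i).1) + ηy * wt s (fun i => (t i).2) := by
      unfold wt
      push_cast
      rw [Finset.sum_mul, Finset.mul_sum, Finset.mul_sum, ← Finset.sum_add_distrib]
      apply Finset.sum_le_sum
      intro i _
      have h2 := mul_le_mul_of_nonneg_right (he i) (Nat.cast_nonneg (α := ℝ) (t i).1)
      have h3 := mul_le_mul_of_nonneg_right (hf i) (Nat.cast_nonneg (α := ℝ) (t i).2)
      linarith
    have h2 := mul_le_mul_of_nonneg_left b1 hηx
    have h3 := mul_le_mul_of_nonneg_left b2 hηy
    linarith)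
  set G := GJ d J (BalS s d D ε) p (lf fun i k => (X i k : ℝ) / (q : ℝ) ^ (e i))
      (lf fun i k => (Y i k : ℝ) / (q : ℝ) ^ (f i)) (lf fun i k => (Z i k : ℝ)) with hG
  set U := m * D * ((γx + γy + γz) / 3 + 3 * ε * (|γx| + |γy| + |γz|)) with hU
  have hGn : n1 G ≤ (1024 * C₀ * max 1 |α|) ^ N * Real.exp U := by
    rw [hG]
    unfold GJ
    have mt := multi_taylor d J (BalS s d D ε) hBT
      (fun t => ((p t : ℤ) : MvPolynomial (Fin m × Fin 2) ℝ)) (MvPolynomial.C α)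
      (lf fun i k => (X i k : ℝ) / (q : ℝ) ^ (e i))
      (lf fun i k => (Y i k : ℝ) / (q : ℝ) ^ (f i)) (lf fun i k => (Z i k : ℝ))
    simp only [lf_sub] at mt
    rw [mt]
    refine (n1_sum_le _ _).trans ?_
    have hterm : ∀ t' ∈ Fintype.piFinset (fun i => Tri (d i)),
      n1 ((∑ t ∈ BalS s d D ε, ((p t : ℤ) : MvPolynomial (Fin m × Fin 2) ℝ) * ((mbin t t' : MvPolynomial (Fin m × Fin 2) ℝ) * MvPolynomial.C α ^ (ex t t'))) *
      ∏ i, (((t' i).1.choose (J i) : MvPolynomial (Fin m × Fin 2) ℝ) *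
        (lf (fun i k => (X i k : ℝ) / (q : ℝ) ^ (e i) - α * Z i k) i) ^ ((t' i).1 - J i) *
        (lf (fun i k => (Y i k : ℝ) / (q : ℝ) ^ (f i) - α * Z i k) i) ^ (t' i).2 *
          (lf (fun i k => (Z i k : ℝ)) i) ^ (d i - (t' i).1 - (t' i).2))) ≤
      (64 * C₀ * max 1 |α|) ^ N * (4 ^ N * Real.exp U) := by
      intro t' ht'
      have hcC : (∑ t ∈ BalS s d D ε, ((p t : ℤ) : MvPolynomial (Fin m × Fin 2) ℝ) * ((mbin t t' : MvPolynomial (Fin m × Fin 2) ℝ) * MvPolynomial.C α ^ (ex t t')))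
          = MvPolynomial.C (∑ t ∈ BalS s d D ε, (p t : ℝ) * ((mbin t t' : ℝ) * α ^ (ex t t'))) := by
        simp only [map_sum, map_mul, map_pow, map_intCast, map_natCast]
      rw [hcC]
      by_cases hb : t' ∈ BalS s d D ε
      · refine (n1_mul_le _ _).trans (mul_le_mul ?_ ?_ (n1_nonneg _) (by positivity))
        · exact (n1_C_le _).trans (coef_bound d α C₀ hC _ hBT p hp t')
        · refine (term_bound s d J t' (fun i => mem_Tri.1 (Fintype.mem_piFinset.1 ht' i)) γx γy γz _ _ _
            (fun i => lf_n1 _ _ _ (hX i)) (fun i => lf_n1 _ _ _ (hY i)) (fun i => lf_n1 _ _ _ (hZ i))).trans ?_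
          apply mul_le_mul_of_nonneg_left _ (by positivity)
          apply Real.exp_le_exp.2
          obtain ⟨b1, b2, b3⟩ := wt_bounds s d D ε hsd t' hb
          have c1 : |wt s (fun i => (t' i).1) - wt s J - m * D / 3| ≤ 3 * ε * (m * D) := by
            have := wt_nonneg s J
            have h5 : ε * D ≤ ε * (m * D) := by
              apply mul_le_mul_of_nonneg_left _ hε.le
              nlinarith
            rw [abs_le] at b1 ⊢
            constructor <;> linarith
          have c2 := b2.trans (show 2 * ε * (m * D) ≤ 3 * ε * (m * D) by nlinarith [mul_pos hε hM])
          have c3 := b3.trans (show 2 * ε * (m * D) ≤ 3 * ε * (m * D) by nlinarith [mul_pos hε hM])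
          have d1 := mul_dev γx _ _ _ c1
          have d2 := mul_dev γy _ _ _ c2
          have d3 := mul_dev γz _ _ _ c3
          rw [hU]
          linarith
      · rw [hp0 t' (Finset.mem_sdiff.2 ⟨ht', hb⟩), MvPolynomial.C_0, zero_mul, n1_zero]
        positivity
    refine (Finset.sum_le_sum hterm).trans ?_
    rw [Finset.sum_const, nsmul_eq_mul]
    have h2 : ((Fintype.piFinset (fun i => Tri (d i))).card : ℝ) ≤ 4 ^ N := by
      exact_mod_cast T_card_le d
    refine (mul_le_mul_of_nonneg_right h2 (by positivity)).trans (le_of_eq ?_)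
    rw [← mul_assoc, ← mul_assoc, ← mul_pow, ← mul_pow]
    congr 2
    ring
  have hK1 : 0 < 1024 * C₀ * max 1 |α| := by positivity
  have hlt : n1 (map (Int.castRingHom ℝ) H) < 1 := by
    rw [hH]
    refine (n1_mul_le _ _).trans_lt ?_
    have h1 : n1 (MvPolynomial.C ((q:ℝ) ^ E) : MvPolynomial (Fin m × Fin 2) ℝ) ≤ Real.exp (E * Real.log q) := by
      refine (n1_C_le _).trans ?_
      rw [Real.exp_nat_mul, Real.exp_log hq0, Real.norm_of_nonneg (by positivity)]
    refine (mul_le_mul h1 hGn (n1_nonneg _) (by positivity)).trans_lt ?_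
    have h2 : (1024 * C₀ * max 1 |α|) ^ N = Real.exp (N * Real.log (1024 * C₀ * max 1 |α|)) := by
      rw [Real.exp_nat_mul, Real.exp_log hK1]
    rw [h2, ← Real.exp_add, ← Real.exp_add]
    apply Real.exp_lt_one_iff.2
    have h3 : (ηx + ηy) * (m * D * (1 / 3 + 2 * ε)) ≤ m * D * ((ηx + ηy) / 3 + 3 * ε * (ηx + ηy)) := by
      have : 0 ≤ (ηx + ηy) * (m * D * ε) := by positivity
      nlinarith
    rw [hU]
    nlinarith
  have hH0 := int_vanish H hlt
  rw [hH0, map_zero] at hH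
  have h4 : (MvPolynomial.C ((q:ℝ) ^ E) : MvPolynomial (Fin m × Fin 2) ℝ) ≠ 0 := by
    rw [Ne, MvPolynomial.C_eq_zero]
    positivity
  exact (mul_eq_zero.1 hH.symm).resolve_left h4

end AB

namespace AB
open MvPolynomial

lemma GJ_map {R S : Type*} [CommRing R] [CommRing S] (φ : R →+* S) {m : ℕ} (d J : Fin m → ℕ)
    (Bal : Finset (Fin m → ℕ × ℕ)) (p : (Fin m → ℕ × ℕ) → ℤ) (x y z : Fin m → R) :
    φ (GJ d J Bal p x y z) = GJ d J Bal p (fun i => φ (x i)) (fun i => φ (y i)) (fun i => φ (z i)) := by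
  unfold GJ
  simp only [map_sum, map_mul, map_prod, map_pow, map_natCast, map_intCast]

lemma eval_hom {m : ℕ} (y z : Fin m → Fin 2 → ℝ) (hΔ : ∀ i, y i 0 * z i 1 - y i 1 * z i 0 ≠ 0) :
    ∃ φ : MvPolynomial (Fin m × Fin 2) ℝ →ₐ[ℝ] MvPolynomial (Fin m) ℝ,
      (∀ i, φ (lf y i) = X i) ∧ ∀ i, φ (lf z i) = 1 := by
  refine ⟨aeval (fun ik => if ik.2 = 0 then
      C (1 / (y ik.1 0 * z ik.1 1 - y ik.1 1 * z ik.1 0)) * (X ik.1 * C (z ik.1 1) - C (y ik.1 1))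
    else C (1 / (y ik.1 0 * z ik.1 1 - y ik.1 1 * z ik.1 0)) * (C (y ik.1 0) - X ik.1 * C (z ik.1 0))), ?_, ?_⟩
  all_goals
    intro i
    have h1 : (C (1 / (y i 0 * z i 1 - y i 1 * z i 0)) : MvPolynomial (Fin m) ℝ) *
        (C (y i 0) * C (z i 1) - C (y i 1) * C (z i 0)) = 1 := by
      rw [← map_mul, ← map_mul, ← map_sub, ← map_mul, one_div, inv_mul_cancel₀ (hΔ i), C_1]
    unfold lf
    simp only [Fin.sum_univ_two, map_add, map_mul, aeval_X, algHom_C, algebraMap_eq]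
    simp only [if_true, one_ne_zero, if_false]
  · linear_combination (X i) * h1
  · linear_combination h1

/-- the exponent as finsupp -/
noncomputable def aF {m : ℕ} (t : Fin m → ℕ × ℕ) : Fin m →₀ ℕ := Finsupp.equivFunOnFinite.symm (fun i => (t i).1)
/-- the exponent as finsupp -/
noncomputable def bF {m : ℕ} (t : Fin m → ℕ × ℕ) : Fin m →₀ ℕ := Finsupp.equivFunOnFinite.symm (fun i => (t i).2)

lemma aF_apply {m : ℕ} (t : Fin m → ℕ × ℕ) (i : Fin m) : aF t i = (t i).1 := rfl
lemma bF_apply {m : ℕ} (t : Fin m → ℕ × ℕ) (i : Fin m) : bF t i = (t i).2 := rfl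

set_option maxHeartbeats 1000000 in
lemma reduce {m : ℕ} (d : Fin m → ℕ) (Bal : Finset (Fin m → ℕ × ℕ))
    (hBal : Bal ⊆ Fintype.piFinset (fun i => Tri (d i))) (p : (Fin m → ℕ × ℕ) → ℤ)
    (C₀ : ℝ) (hC : 1 ≤ C₀) (hp : ∀ t, |(p t : ℝ)| ≤ (8 * C₀) ^ (∑ i, d i)) (hne : ∃ t ∈ Bal, p t ≠ 0) :
    ∃ R : MvPolynomial (Fin m) ℤ, R ≠ 0 ∧ (∀ i, R.degreeOf i ≤ d i) ∧ n1 R ≤ (32 * C₀) ^ (∑ i, d i) ∧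
      ∀ (θ : Fin m → ℝ) (ξ : Fin m → ℚ) (J : Fin m →₀ ℕ),
        GJ d J Bal p (fun i => (C (θ i) * X i + C (ξ i : ℝ) : MvPolynomial (Fin m) ℝ)) (fun i => X i) (fun _ => 1) = 0 →
        aeval ξ (hd J R) = 0 := by
  obtain ⟨ts, hts, hmin⟩ := Finset.exists_min_image (Bal.filter (fun t => p t ≠ 0)) (fun t => ∑ i, (t i).2)
    (by obtain ⟨t, h1, h2⟩ := hne; exact ⟨t, Finset.mem_filter.2 ⟨h1, h2⟩⟩)
  rw [Finset.mem_filter] at hts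
  have hmem : ∀ t ∈ Bal, ∀ i, (t i).1 + (t i).2 ≤ d i := by
    intro t ht i
    have := Fintype.mem_piFinset.1 (hBal ht) i
    exact mem_Tri.1 this
  refine ⟨∑ t ∈ Bal.filter (fun t => bF t = bF ts), monomial (aF t) (p t), ?_, ?_, ?_, ?_⟩
  · intro h0
    have h1 := congrArg (coeff (aF ts)) h0
    rw [coeff_sum, coeff_zero] at h1
    rw [Finset.sum_eq_single ts] at h1
    · rw [coeff_monomial, if_pos rfl] at h1
      exact hts.2 h1
    · intro t ht hne
      rw [coeff_monomial, if_neg]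
      intro h2
      apply hne
      rw [Finset.mem_filter] at ht
      funext i
      have e1 := DFunLike.congr_fun h2 i
      have e2 := DFunLike.congr_fun ht.2 i
      exact Prod.ext e1 e2
    · intro h3
      exact (h3 (by simp only [Finset.mem_filter, hts.1, and_self])).elim
  · intro i
    refine (degreeOf_sum_le _ _ _).trans (Finset.sup_le ?_)
    intro t ht
    rw [Finset.mem_filter] at ht
    by_cases h0 : p t = 0
    · simp [h0]
    · rw [degreeOf_monomial_eq _ _ h0, aF_apply]
      have := hmem t ht.1 i
      omega
  · refine (n1_sum_le _ _).trans ?_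
    have h1 : ∀ t ∈ Bal.filter (fun t => bF t = bF ts), n1 (monomial (aF t) (p t)) ≤ (8 * C₀) ^ (∑ i, d i) := by
      intro t _
      refine (n1_monomial_le _ _).trans ?_
      rw [Int.norm_eq_abs]
      exact hp t
    refine (Finset.sum_le_sum h1).trans ?_
    rw [Finset.sum_const, nsmul_eq_mul]
    have h2 : ((Bal.filter (fun t => bF t = bF ts)).card : ℝ) ≤ 4 ^ (∑ i, d i) := by
      exact_mod_cast (Finset.card_le_card ((Finset.filter_subset _ _).trans hBal)).trans (T_card_le d)
    refine (mul_le_mul_of_nonneg_right h2 (by positivity)).trans (le_of_eq ?_)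
    rw [← mul_pow]
    congr 1
    ring
  · intro θ ξ J h0
    have hcast : Function.Injective (algebraMap ℚ ℝ) := (algebraMap ℚ ℝ).injective
    apply hcast
    rw [map_zero]
    have h1 := congrArg (coeff (bF ts)) h0
    rw [coeff_zero] at h1
    rw [← h1]
    unfold GJ
    rw [coeff_sum, map_sum, map_sum, map_sum, Finset.sum_filter]
    apply Finset.sum_congr rfl
    intro t ht
    have hfac : ((p t : ℤ) : MvPolynomial (Fin m) ℝ) * ∏ i, (((t i).1.choose (J i) : MvPolynomial (Fin m) ℝ) *
        (C (θ i) * X i + C (ξ i : ℝ)) ^ ((t i).1 - J i) * X i ^ (t i).2 * 1 ^ (d i - (t i).1 - (t i).2)) =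
        (((p t : ℤ) : MvPolynomial (Fin m) ℝ) * ∏ i, (((t i).1.choose (J i) : MvPolynomial (Fin m) ℝ) *
        (C (θ i) * X i + C (ξ i : ℝ)) ^ ((t i).1 - J i))) * monomial (bF t) 1 := by
      have : (monomial (bF t) (1:ℝ) : MvPolynomial (Fin m) ℝ) = ∏ i, X i ^ (t i).2 := by
        rw [monomial_eq, C_1, one_mul, Finsupp.prod_fintype]
        · rfl
        · simp
      rw [this, mul_assoc, ← Finset.prod_mul_distrib]
      simp only [one_pow, mul_one]
    rw [hfac, coeff_mul_monomial', mul_one]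
    by_cases hb : bF t = bF ts
    · rw [if_pos hb, if_pos hb.le, hb, tsub_self, hd_monomial, aeval_monomial]
      change _ = constantCoeff _
      simp only [map_mul, map_intCast, map_prod, map_natCast, map_pow, map_add, constantCoeff_C, constantCoeff_X,
        mul_zero, zero_add, eq_intCast, Finset.prod_mul_distrib]
      rw [Finsupp.prod_fintype _ _ (by simp)]
      simp only [mb, map_prod, map_pow, Finsupp.tsub_apply, aF_apply, eq_ratCast, Nat.cast_prod]
      push_cast
      ring
    · rw [if_neg hb]
      split_ifs with hle
      · have hp0 : p t = 0 := by
          by_contra hp0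
          have h2 := hmin t (Finset.mem_filter.2 ⟨ht, hp0⟩)
          apply hb
          have h3 : ∀ i ∈ Finset.univ, (t i).2 ≤ (ts i).2 := fun i _ => hle i
          have h4 : ∑ i, (t i).2 = ∑ i, (ts i).2 := le_antisymm (Finset.sum_le_sum h3) h2
          have h5 := (Finset.sum_eq_sum_iff_of_le h3).1 h4
          exact Finsupp.ext fun i => h5 i (Finset.mem_univ i)
        simp [hp0]
      · simp

lemma liouville_den (α : ℝ) (hirr : Irrational α) (halg : IsAlgebraic ℚ α) (c : ℝ) (hc : 0 < c) :
    ∃ c' > (0:ℝ), ∃ S1 : ℕ, ∀ s : ℕ, S1 ≤ s → ∀ ξ : ℚ, |(ξ:ℝ) - α| ≤ Real.exp (-(c * s)) →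
      c' * s ≤ Real.log ξ.den := by
  have hα' : IsAlgebraic ℤ α := (IsFractionRing.isAlgebraic_iff ℤ ℚ ℝ).2 halg
  obtain ⟨f, f0, fa⟩ := hα'
  have fa' : Polynomial.eval α (f.map (algebraMap ℤ ℝ)) = 0 := by
    rw [Polynomial.eval_map_algebraMap]; exact fa
  obtain ⟨A, hA, h⟩ := Liouville.exists_pos_real_of_irrational_root hirr f0 fa'
  set n := f.natDegree
  obtain ⟨S1, hS1⟩ := exists_nat_ge (2 * Real.log A / c)
  refine ⟨c / (2 * (n + 1)), by positivity, S1, ?_⟩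
  intro s hs ξ hξ
  have hden : 0 < ξ.den := ξ.pos
  have hdenR : (0:ℝ) < ξ.den := by exact_mod_cast hden
  have hden1 : (1:ℝ) ≤ ξ.den := by exact_mod_cast hden
  have h1 := h ξ.num (ξ.den - 1)
  have h2 : (((ξ.den - 1 : ℕ) : ℝ) + 1) = ξ.den := by
    rw [Nat.cast_sub hden]; simp
  rw [h2] at h1
  have h3 : (ξ.num : ℝ) / ξ.den = (ξ : ℝ) := (Rat.cast_def ξ).symm
  rw [h3, abs_sub_comm] at h1
  have h4 : 1 ≤ (ξ.den : ℝ) ^ n * (Real.exp (-(c * s)) * A) := by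
    refine h1.trans ?_
    gcongr
  have h5 := Real.log_le_log one_pos h4
  rw [Real.log_one, Real.log_mul (by positivity) (by positivity), Real.log_mul (by positivity) (by positivity),
    Real.log_exp, Real.log_pow] at h5
  have h6 : 2 * Real.log A / c ≤ s := hS1.trans (by exact_mod_cast hs)
  rw [div_le_iff₀ hc] at h6
  have h7 : 0 ≤ Real.log ξ.den := Real.log_nonneg hden1
  rw [div_mul_eq_mul_div, div_le_iff₀ (by positivity)]
  nlinarith

lemma exists_seq (P : ℕ → Prop) (hP : ∀ S, ∃ s ≥ S, P s) (δ : ℝ) (hδ : 0 < δ) (S0 : ℕ) (m : ℕ) :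
    ∃ s : Fin m → ℕ, (∀ i, S0 ≤ s i ∧ P (s i)) ∧ ∀ i j, i < j → (s j : ℝ) ≤ δ * s i := by
  induction m with
  | zero => exact ⟨Fin.elim0, fun i => i.elim0, fun i => i.elim0⟩
  | succ m ih =>
    obtain ⟨s, h1, h2⟩ := ih
    obtain ⟨B, hB⟩ := exists_nat_ge ((∑ j, (s j : ℝ)) / δ)
    obtain ⟨x, hx, hPx⟩ := hP (max S0 B)
    refine ⟨Fin.cons x s, ?_, ?_⟩
    · intro i
      refine Fin.cases ?_ ?_ i
      · exact ⟨(le_max_left _ _).trans hx, hPx⟩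
      · intro j; simpa using h1 j
    · intro i j
      refine Fin.cases ?_ ?_ i
      · refine Fin.cases ?_ ?_ j
        · intro h; exact absurd h (lt_irrefl _)
        · intro j _
          simp only [Fin.cons_succ, Fin.cons_zero]
          have h3 : (s j : ℝ) ≤ ∑ j, (s j : ℝ) :=
            Finset.single_le_sum (f := fun j => (s j : ℝ)) (fun _ _ => by positivity) (Finset.mem_univ j)
          have h4 : (B : ℝ) ≤ x := by exact_mod_cast (le_max_right _ _).trans hx
          have h5 := hB.trans h4
          rw [div_le_iff₀ hδ] at h5
          linarith
      · intro i
        refine Fin.cases ?_ ?_ j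
        · intro h; exact absurd h (by simp)
        · intro j h
          simp only [Fin.cons_succ]
          exact h2 i j (by simpa using h)

/-- configuration of two integer points on a common rational plane -/
def Config (q : ℕ) (α ηx ηy γx γy γz c : ℝ) (s : ℕ) : Prop :=
  ∃ (e f : ℕ) (X Y Z : Fin 2 → ℤ) (θ : ℝ) (ξ : ℚ),
    (e : ℝ) * Real.log q ≤ ηx * s ∧ (f : ℝ) * Real.log q ≤ ηy * s ∧
    Y 0 * Z 1 - Y 1 * Z 0 ≠ 0 ∧
    (∀ k, |(X k : ℝ) / (q : ℝ) ^ e - α * Z k| ≤ Real.exp (γx * s)) ∧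
    (∀ k, |(Y k : ℝ) / (q : ℝ) ^ f - α * Z k| ≤ Real.exp (γy * s)) ∧
    (∀ k, |(Z k : ℝ)| ≤ Real.exp (γz * s)) ∧
    (∀ k, (X k : ℝ) / (q : ℝ) ^ e = θ * ((Y k : ℝ) / (q : ℝ) ^ f) + ξ * Z k) ∧
    |(ξ : ℝ) - α| ≤ Real.exp (-(c * s))

theorem machine (α : ℝ) (hirr : Irrational α) (halg : IsAlgebraic ℚ α) (q : ℕ) (hq : 2 ≤ q)
    (ηx ηy γx γy γz c : ℝ) (hηx : 0 ≤ ηx) (hηy : 0 ≤ ηy) (hneg : γx + γy + γz + ηx + ηy < 0) (hc : 0 < c)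
    (hinf : ∀ S, ∃ s ≥ S, Config q α ηx ηy γx γy γz c s) : False := by
  obtain ⟨g, w, ℓ, C₀, hℓ, hC, hw⟩ := alpha_lemma α halg
  obtain ⟨c', hc', S1, hS1⟩ := liouville_den α hirr halg c hc
  set σ := -(γx + γy + γz + ηx + ηy) with hσ
  have hσ0 : 0 < σ := by linarith
  set K := |γx| + |γy| + |γz| + ηx + ηy with hK
  have hK0 : 0 ≤ K := by positivity
  set ε := σ / (12 * (K + 1)) with hε
  have hε0 : 0 < ε := by positivity
  have hεK : 3 * ε * K ≤ σ / 4 := by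
    have : ε * (12 * (K + 1)) = σ := div_mul_cancel₀ _ (by positivity)
    nlinarith
  obtain ⟨m, hm⟩ := exists_nat_ge (3 * (2 * (g : ℝ) + 2) / ε ^ 2)
  rw [div_le_iff₀ (by positivity)] at hm
  have hmpos : 0 < m := by
    rcases Nat.eq_zero_or_pos m with h | h
    · rw [h] at hm
      have : (0:ℝ) ≤ g := by positivity
      norm_num at hm
      linarith
    · exact h
  have hmR : (1:ℝ) ≤ m := by exact_mod_cast hmpos
  obtain ⟨δ, hδ, hroth⟩ := roth_lemma m ε hε0
  set K1 := 1024 * C₀ * max 1 |α| with hK1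
  set C5 := Real.log (32 * C₀) with hC5
  have hC5' : 1 ≤ C5 := by
    rw [hC5, Real.le_log_iff_exp_le (by positivity)]
    have := Real.exp_one_lt_d9
    linarith
  obtain ⟨B1, hB1⟩ := exists_nat_gt (12 * Real.log K1 / σ)
  obtain ⟨B2, hB2⟩ := exists_nat_ge (C5 * m / (δ * c'))
  set S0 := B1 + B2 + S1 + 1 with hS0
  obtain ⟨s, hs1, hs2⟩ := exists_seq _ hinf δ hδ S0 m
  have hspos : ∀ i, 0 < s i := fun i => by have := (hs1 i).1; omega
  have hsposR : ∀ i, (0:ℝ) < s i := fun i => by exact_mod_cast hspos i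
  choose e f X Y Z θ ξ he hf hΔ hX hY hZ hpl hξ using fun i => (hs1 i).2
  set D : ℝ := ∏ i, (s i : ℝ) with hD
  have hD0 : 0 < D := Finset.prod_pos fun i _ => hsposR i
  set d : Fin m → ℕ := fun i => ∏ j ∈ Finset.univ.erase i, s j with hd'
  have hsd : ∀ i, (s i : ℝ) * d i = D := by
    intro i
    rw [hD, hd']
    push_cast
    exact Finset.mul_prod_erase Finset.univ (fun j => (s j : ℝ)) (Finset.mem_univ i)
  have hdpos : ∀ i, 0 < d i := fun i => Finset.prod_pos fun j _ => hspos j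
  have hN1 : 1 ≤ ∑ i, d i := by
    have := Finset.single_le_sum (f := d) (fun _ _ => Nat.zero_le _) (Finset.mem_univ ⟨0, hmpos⟩)
    have := hdpos ⟨0, hmpos⟩
    omega
  have hS0N : (S0 : ℝ) * ((∑ i, d i : ℕ) : ℝ) ≤ m * D := by
    push_cast
    rw [Finset.mul_sum]
    calc _ ≤ ∑ i : Fin m, D := by
          apply Finset.sum_le_sum
          intro i _
          rw [← hsd i]
          apply mul_le_mul_of_nonneg_right _ (by positivity)
          exact_mod_cast (hs1 i).1
      _ = _ := by simp
  set N := ∑ i, d i with hN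
  have hNR : (1:ℝ) ≤ N := by exact_mod_cast hN1
  have hB1' : (B1 : ℝ) ≤ S0 := by rw [hS0]; push_cast; linarith [Nat.cast_nonneg (α := ℝ) B2, Nat.cast_nonneg (α := ℝ) S1]
  have hB2' : (B2 : ℝ) ≤ S0 := by rw [hS0]; push_cast; linarith [Nat.cast_nonneg (α := ℝ) B1, Nat.cast_nonneg (α := ℝ) S1]
  obtain ⟨hb1, hb2⟩ := bal_count hmpos s d D ε hdpos hD0 hsd hε0 g hm
  have hBT : BalS s d D ε ⊆ Fintype.piFinset (fun i => Tri (d i)) := Finset.filter_subset _ _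
  obtain ⟨p, hp1, hp2, hp3⟩ := siegel_step d α g w ℓ C₀ hℓ hC hw hN1 (BalS s d D ε) _ hBT hb1 hb2
  have hsmall : (N : ℝ) * Real.log K1 < m * D * (σ / 3 - 3 * ε * K) := by
    have h1 : 12 * Real.log K1 / σ < S0 := hB1.trans_le hB1'
    rw [div_lt_iff₀ hσ0] at h1
    have h2 : (N:ℝ) * (12 * Real.log K1) < N * (S0 * σ) := mul_lt_mul_of_pos_left h1 (by linarith)
    have h3 : N * (S0 * σ) ≤ m * D * σ := by
      have := mul_le_mul_of_nonneg_right hS0N hσ0.le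
      linarith
    have h4 : m * D * (σ / 12) ≤ m * D * (σ / 3 - 3 * ε * K) := by
      apply mul_le_mul_of_nonneg_left _ (by positivity)
      linarith
    linarith
  have hvan := vanish s d D ε hmpos hD0 hε0 hsd α C₀ hC p hp2 hp3 q hq e f X Y Z ηx ηy γx γy γz hηx hηy
    he hf hX hY hZ hsmall
  obtain ⟨R, hR0, hRd, hRn, hRv⟩ := reduce d _ hBT p C₀ hC hp2 hp1
  have hqpos : (0:ℝ) < q := by positivity
  obtain ⟨φ, hφ1, hφ2⟩ := eval_hom (fun i k => (Y i k : ℝ) / (q:ℝ) ^ (f i)) (fun i k => (Z i k : ℝ)) (by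
    intro i
    have h1 : ((Y i 0 * Z i 1 - Y i 1 * Z i 0 : ℤ) : ℝ) ≠ 0 := by exact_mod_cast hΔ i
    push_cast at h1
    have h2 : (Y i 0 : ℝ) / (q:ℝ) ^ (f i) * Z i 1 - (Y i 1 : ℝ) / (q:ℝ) ^ (f i) * Z i 0 =
      ((Y i 0 : ℝ) * Z i 1 - Y i 1 * Z i 0) / (q:ℝ) ^ (f i) := by ring
    rw [h2]
    exact div_ne_zero h1 (by positivity))
  have hφ3 : ∀ i, φ (lf (fun i k => (X i k : ℝ) / (q:ℝ) ^ (e i)) i) =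
      MvPolynomial.C (θ i) * MvPolynomial.X i + MvPolynomial.C (ξ i : ℝ) := by
    intro i
    have h1 : lf (fun i k => (X i k : ℝ) / (q:ℝ) ^ (e i)) i =
        MvPolynomial.C (θ i) * lf (fun i k => (Y i k : ℝ) / (q:ℝ) ^ (f i)) i +
        MvPolynomial.C (ξ i : ℝ) * lf (fun i k => (Z i k : ℝ)) i := by
      unfold lf
      rw [Finset.mul_sum, Finset.mul_sum, ← Finset.sum_add_distrib]
      apply Finset.sum_congr rfl
      intro k _
      simp only [hpl i k, map_add, map_mul]
      ring
    rw [h1, map_add, map_mul, map_mul, hφ1, hφ2, mul_one]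
    simp [algebraMap_eq]
  have hlogden : ∀ i, c' * s i ≤ Real.log (ξ i).den := by
    intro i
    exact hS1 (s i) (by have := (hs1 i).1; omega) (ξ i) (hξ i)
  obtain ⟨J, hJ1, hJ2⟩ := hroth s d D (C5 * N) ξ R hspos hD0 hR0 hRd (fun i => (hsd i).le)
    (by nlinarith)
    (by
      refine hRn.trans (le_of_eq ?_)
      rw [mul_comm C5, Real.exp_nat_mul, hC5, Real.exp_log (by positivity)])
    hs2
    (by
      intro i
      have h1 : C5 * m / (δ * c') ≤ S0 := hB2.trans hB2'
      rw [div_le_iff₀ (by positivity)] at h1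
      have h2 := mul_le_mul_of_nonneg_left (hlogden i) (show 0 ≤ δ * D by positivity)
      refine le_trans ?_ h2
      have h3 : C5 * (S0 * N) ≤ C5 * (m * D) := mul_le_mul_of_nonneg_left hS0N (by linarith)
      have h4 : (C5 * m) * D ≤ (S0 * (δ * c')) * D := mul_le_mul_of_nonneg_right h1 hD0.le
      have hS0pos : (0:ℝ) < S0 := by rw [hS0]; positivity
      have h5 : S0 * (C5 * N) ≤ S0 * (δ * D * c') := by linarith
      have h6 := le_of_mul_le_mul_left h5 hS0pos
      have h7 := mul_le_mul_of_nonneg_left h6 (hsposR i).le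
      linarith)
    (by
      intro i
      have h1 : 0 < Real.log (ξ i).den := lt_of_lt_of_le (mul_pos hc' (hsposR i)) (hlogden i)
      by_contra h2
      have h3 : (ξ i).den = 1 := by have := (ξ i).pos; omega
      rw [h3] at h1
      simp at h1)
  apply hJ2
  apply hRv θ ξ J
  have h1 := congrArg φ (hvan J hJ1)
  rw [map_zero] at h1
  have h2 := GJ_map (φ : MvPolynomial (Fin m × Fin 2) ℝ →+* MvPolynomial (Fin m) ℝ) d J (BalS s d D ε) p
    (lf fun i k => (X i k : ℝ) / (q : ℝ) ^ (e i))
      (lf fun i k => (Y i k : ℝ) / (q : ℝ) ^ (f i)) (lf fun i k => (Z i k : ℝ))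
  simp only [RingHom.coe_coe, hφ1, hφ2, hφ3] at h2
  rw [← h2]
  exact h1

end AB

namespace AB

lemma ridout (α : ℝ) (hirr : Irrational α) (halg : IsAlgebraic ℚ α) (q : ℕ) (hq : 2 ≤ q)
    (ρ κ ε : ℝ) (hρ : 0 ≤ ρ) (hκ : 0 < κ) (hε : 0 < ε) :
    ∃ S : ℕ, ∀ s ≥ S, ∀ r : ℕ, ρ * s ≤ r → (r : ℝ) ≤ (ρ + ε) * s → ∀ w v : ℤ, 0 < w →
      (w : ℝ) ≤ Real.exp (κ * Real.log q * s) →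
      Real.exp (-((κ + 2 * ε) * Real.log q * s)) < |α * (q : ℝ) ^ r * w - v| := by
  have hq0 : (0:ℝ) < q := by positivity
  have hL : 0 < Real.log q := Real.log_pos (by exact_mod_cast (show 1 < q by omega))
  by_contra hcon
  push Not at hcon
  refine machine α hirr halg q hq ((ρ + ε) * Real.log q) 0 (-((ρ + κ + 2 * ε) * Real.log q)) 0
    (κ * Real.log q) ((ρ + κ + 2 * ε) * Real.log q) (by positivity) le_rfl (by nlinarith) (by positivity) ?_
  intro S
  obtain ⟨s, hs, r, hr1, hr2, w, v, hw, hwle, herr⟩ := hcon S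
  refine ⟨s, hs, ?_⟩
  have hwR : (0:ℝ) < w := by exact_mod_cast hw
  have hw1 : (1:ℝ) ≤ w := by exact_mod_cast hw
  have hqr : (0:ℝ) < (q:ℝ) ^ r := by positivity
  have hqrexp : (q:ℝ) ^ r = Real.exp (r * Real.log q) := by rw [Real.exp_nat_mul, Real.exp_log hq0]
  have hX : |(v:ℝ) / (q:ℝ) ^ r - α * w| ≤ Real.exp (-((ρ + κ + 2 * ε) * Real.log q) * s) := by
    have h1 : (v:ℝ) / (q:ℝ) ^ r - α * w = -((α * (q : ℝ) ^ r * w - v) / (q:ℝ) ^ r) := by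
      field_simp
      ring
    rw [h1, abs_neg, abs_div, abs_of_pos hqr, div_le_iff₀ hqr]
    refine herr.trans ?_
    rw [hqrexp, ← Real.exp_add]
    apply Real.exp_le_exp.2
    have := mul_le_mul_of_nonneg_right hr1 hL.le
    nlinarith
  refine ⟨r, 0, ![v, 0], ![round (α * w), 1], ![w, 0], 0, (v : ℚ) / ((q : ℚ) ^ r * w), ?_, ?_, ?_, ?_, ?_, ?_, ?_, ?_⟩
  · have := mul_le_mul_of_nonneg_right hr2 hL.le
    linarith
  · simp
  · simp; omega
  · intro k
    fin_cases k
    · simpa using hX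
    · simp; positivity
  · intro k
    fin_cases k
    · have := abs_sub_round (α * w)
      rw [abs_sub_comm] at this
      simp
      linarith
    · simp
  · intro k
    fin_cases k
    · simp only [Fin.zero_eta, Matrix.cons_val_zero]
      rw [abs_of_pos hwR]
      exact hwle
    · simp; positivity
  · intro k
    fin_cases k
    · simp
      field_simp
    · simp
  · push_cast
    have h1 : (v:ℝ) / ((q:ℝ) ^ r * w) - α = ((v:ℝ) / (q:ℝ) ^ r - α * w) / w := by
      field_simp
    rw [h1, abs_div, abs_of_pos hwR, div_le_iff₀ hwR, ← neg_mul]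
    have := Real.exp_pos (-((ρ + κ + 2 * ε) * Real.log q) * s)
    nlinarith

lemma pigeon (P : ℕ → ℕ → Prop) (K : ℕ) (h : ∀ S, ∃ s ≥ S, ∃ k ≤ K, P k s) :
    ∃ k ≤ K, ∀ S, ∃ s ≥ S, P k s := by
  by_contra hcon
  push Not at hcon
  choose! f hf using hcon
  obtain ⟨s, hs, k, hk, hP⟩ := h (∑ k ∈ Finset.range (K + 1), f k)
  have h1 : f k ≤ ∑ k ∈ Finset.range (K + 1), f k :=
    Finset.single_le_sum (f := f) (fun _ _ => Nat.zero_le _) (Finset.mem_range.2 (by omega))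
  exact hf k hk s (h1.trans hs) hP

set_option maxHeartbeats 1600000 in
lemma no_repeats (α : ℝ) (hα0 : 0 < α) (hα1 : α < 1) (hirr : Irrational α) (halg : IsAlgebraic ℚ α)
    (q : ℕ) (hq : 2 ≤ q) (M : ℕ) (κ : ℝ) (hκ : 0 < κ) (hκ1 : κ ≤ 1)
    (hinf : ∀ S : ℕ, ∃ s ≥ S, ∃ r : ℕ, r ≤ M * s ∧ ∃ p : ℤ,
      |α * (q:ℝ) ^ r * ((q:ℝ) ^ s - 1) - p| ≤ Real.exp (-(2 * κ * Real.log q * s))) : False := by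
  have hq0 : (0:ℝ) < q := by positivity
  have hL : 0 < Real.log q := Real.log_pos (by exact_mod_cast (show 1 < q by omega))
  set ε := κ / 8 with hε
  have hε0 : 0 < ε := by positivity
  obtain ⟨k, hk, hk2⟩ := pigeon (fun k s => ∃ r : ℕ, (k * ε) * s ≤ r ∧ (r:ℝ) ≤ (k * ε + ε) * s ∧ ∃ p : ℤ,
      |α * (q:ℝ) ^ r * ((q:ℝ) ^ s - 1) - p| ≤ Real.exp (-(2 * κ * Real.log q * s))) ⌊(M : ℝ) / ε⌋₊ (by
    intro S
    obtain ⟨s, hs, r, hr, p, hp⟩ := hinf (S + 1)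
    have hs0 : (0:ℝ) < s := by exact_mod_cast (show 0 < s by omega)
    have hrR : (r:ℝ) ≤ M * s := by exact_mod_cast hr
    refine ⟨s, by omega, ⌊(r:ℝ) / (s * ε)⌋₊, ?_, r, ?_, ?_, p, hp⟩
    · apply Nat.floor_le_floor
      rw [div_le_div_iff₀ (by positivity) hε0]
      nlinarith
    · have := Nat.floor_le (show 0 ≤ (r:ℝ) / (s * ε) by positivity)
      rw [le_div_iff₀ (by positivity)] at this
      linarith
    · have := Nat.lt_floor_add_one ((r:ℝ) / (s * ε))
      rw [div_lt_iff₀ (by positivity)] at this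
      linarith)
  set ρ := (k:ℝ) * ε with hρ
  have hρ0 : 0 ≤ ρ := by positivity
  obtain ⟨S1, hS1⟩ := ridout α hirr halg q hq ρ κ ε hρ0 hκ hε0
  obtain ⟨S2, hS2⟩ := exists_nat_ge (1 / (ε * Real.log q))
  refine machine α hirr halg q hq ((ρ + ε + 1) * Real.log q) ((ρ + ε) * Real.log q)
    (-((κ - 3 * ε + ρ + 1) * Real.log q)) (-((κ + ρ) * Real.log q)) ((κ + 2 * ε) * Real.log q)
    ((1 - ε) * Real.log q) (by positivity) (by positivity) (by nlinarith)
    (mul_pos (by linarith) hL) ?_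
  intro S
  obtain ⟨s, hs, r, hr1, hr2, p, hp⟩ := hk2 (S + S1 + S2)
  refine ⟨s, by omega, ?_⟩
  have hsS2 : (S2:ℝ) ≤ s := by exact_mod_cast (show S2 ≤ s by omega)
  have h2exp : 2 ≤ Real.exp (ε * Real.log q * s) := by
    have h1 := hS2.trans hsS2
    rw [div_le_iff₀ (by positivity)] at h1
    have := Real.add_one_le_exp (ε * Real.log q * s)
    linarith
  set β := α * (q:ℝ) ^ r with hβ
  have hqr : (0:ℝ) < (q:ℝ) ^ r := by positivity
  have hqrs : (0:ℝ) < (q:ℝ) ^ (r + s) := by positivity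
  have hqexp : ∀ n : ℕ, (q:ℝ) ^ n = Real.exp (n * Real.log q) := by
    intro n; rw [Real.exp_nat_mul, Real.exp_log hq0]
  have hs0 : (0:ℝ) ≤ s := by positivity
  have hdir : ∀ κ' : ℝ, 0 ≤ κ' → ∃ a : ℚ, (a.den : ℝ) ≤ Real.exp (κ' * Real.log q * s) ∧
      |β * a.den - a.num| < Real.exp (-(κ' * Real.log q * s)) := by
    intro κ' hκ'
    have hQ1 : 1 ≤ Real.exp (κ' * Real.log q * s) := Real.one_le_exp (by positivity)
    obtain ⟨a, ha1, ha2⟩ := Real.exists_rat_abs_sub_le_and_den_le β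
      (Nat.floor_pos.2 hQ1)
    refine ⟨a, ?_, ?_⟩
    · exact le_trans (by exact_mod_cast ha2) (Nat.floor_le (by positivity))
    · have hden : (0:ℝ) < a.den := by exact_mod_cast a.pos
      have h1 : β * a.den - a.num = (β - a) * a.den := by
        rw [sub_mul]
        congr 1
        exact_mod_cast (Rat.mul_den_eq_num a).symm
      rw [h1, abs_mul, abs_of_pos hden]
      calc _ ≤ 1 / ((⌊Real.exp (κ' * Real.log q * s)⌋₊ + 1) * (a.den:ℝ)) * a.den :=
            mul_le_mul_of_nonneg_right ha1 hden.le
        _ = 1 / ((⌊Real.exp (κ' * Real.log q * s)⌋₊ : ℝ) + 1) := by field_simp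
        _ < 1 / Real.exp (κ' * Real.log q * s) :=
            one_div_lt_one_div_of_lt (by positivity) (Nat.lt_floor_add_one _)
        _ = _ := by rw [Real.exp_neg, one_div]
  obtain ⟨a1, ha1, hb1⟩ := hdir κ hκ.le
  obtain ⟨a2, ha2, hb2⟩ := hdir (κ + 2 * ε) (by positivity)
  have hrid := hS1 s (by omega) r hr1 hr2 a1.den a1.num (by exact_mod_cast a1.pos) (by exact_mod_cast ha1)
  have hne : a1 ≠ a2 := by
    rintro rfl
    rw [← hβ] at hrid
    exact absurd hrid (not_lt.2 (by exact_mod_cast hb2.le))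
  have hmon : Real.exp (κ * Real.log q * s) ≤ Real.exp ((κ + 2 * ε) * Real.log q * s) := by
    apply Real.exp_le_exp.2
    have : 0 ≤ 2 * ε * Real.log q * s := by positivity
    linarith
  have hmon' : Real.exp (-((κ + 2 * ε) * Real.log q * s)) ≤ Real.exp (-(κ * Real.log q * s)) := by
    apply Real.exp_le_exp.2
    have : 0 ≤ 2 * ε * Real.log q * s := by positivity
    linarith
  -- uniform facts for both points
  have hpt : ∀ a : ℚ, (a.den : ℝ) ≤ Real.exp ((κ + 2 * ε) * Real.log q * s) →
      |β * a.den - a.num| ≤ Real.exp (-(κ * Real.log q * s)) →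
      |((a.num + p * a.den : ℤ) : ℝ) / (q:ℝ) ^ (r + s) - α * a.den| ≤
        Real.exp (-((κ - 3 * ε + ρ + 1) * Real.log q) * s) ∧
      |(a.num : ℝ) / (q:ℝ) ^ r - α * a.den| ≤ Real.exp (-((κ + ρ) * Real.log q) * s) := by
    intro a h1 h2
    have hden : (0:ℝ) < a.den := by exact_mod_cast a.pos
    constructor
    · have h3 : ((a.num + p * a.den : ℤ) : ℝ) / (q:ℝ) ^ (r + s) - α * a.den =
          -((β * a.den - a.num) + a.den * (β * ((q:ℝ) ^ s - 1) - p)) / (q:ℝ) ^ (r + s) := by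
        rw [hβ, pow_add]
        push_cast
        field_simp
        ring
      rw [h3, abs_div, abs_neg, abs_of_pos hqrs, div_le_iff₀ hqrs]
      have h4 : |(a.den:ℝ) * (β * ((q:ℝ) ^ s - 1) - p)| ≤ Real.exp (-((κ - 2 * ε) * Real.log q * s)) := by
        rw [abs_mul, abs_of_pos hden]
        refine (mul_le_mul h1 hp (abs_nonneg _) (by positivity)).trans ?_
        rw [← Real.exp_add]
        apply Real.exp_le_exp.2
        linarith
      have h5 : Real.exp (-(κ * Real.log q * s)) ≤ Real.exp (-((κ - 2 * ε) * Real.log q * s)) := by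
        apply Real.exp_le_exp.2
        have : 0 ≤ 2 * ε * Real.log q * s := by positivity
        linarith
      calc _ ≤ Real.exp (-((κ - 2 * ε) * Real.log q * s)) + Real.exp (-((κ - 2 * ε) * Real.log q * s)) :=
            (abs_add_le _ _).trans (add_le_add (h2.trans h5) h4)
        _ ≤ Real.exp (ε * Real.log q * s) * Real.exp (-((κ - 2 * ε) * Real.log q * s)) := by
            have := Real.exp_pos (-((κ - 2 * ε) * Real.log q * s))
            nlinarith
        _ ≤ _ := by
            rw [hqexp, ← Real.exp_add, ← Real.exp_add]
            apply Real.exp_le_exp.2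
            push_cast
            have := mul_le_mul_of_nonneg_right hr1 hL.le
            linarith
    · have h3 : (a.num : ℝ) / (q:ℝ) ^ r - α * a.den = -((β * a.den - a.num) / (q:ℝ) ^ r) := by
        rw [hβ]
        field_simp
        ring
      rw [h3, abs_neg, abs_div, abs_of_pos hqr, div_le_iff₀ hqr]
      refine h2.trans ?_
      rw [hqexp, ← Real.exp_add]
      apply Real.exp_le_exp.2
      have := mul_le_mul_of_nonneg_right hr1 hL.le
      linarith
  have hden2 := ha1.trans hmon
  obtain ⟨hx1, hy1⟩ := hpt a1 hden2 hb1.le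
  obtain ⟨hx2, hy2⟩ := hpt a2 ha2 (hb2.le.trans hmon')
  refine ⟨r + s, r, ![a1.num + p * a1.den, a2.num + p * a2.den], ![a1.num, a2.num], ![a1.den, a2.den],
    1 / (q:ℝ) ^ s, (p:ℚ) / (q:ℚ) ^ (r + s), ?_, ?_, ?_, ?_, ?_, ?_, ?_, ?_⟩
  · push_cast
    have := mul_le_mul_of_nonneg_right hr2 hL.le
    linarith
  · have := mul_le_mul_of_nonneg_right hr2 hL.le
    linarith
  · simp only [Matrix.cons_val_zero, Matrix.cons_val_one]
    rw [sub_ne_zero]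
    exact fun h => hne (Rat.eq_iff_mul_eq_mul.2 h)
  · intro k
    fin_cases k
    · simpa using hx1
    · simpa using hx2
  · intro k
    fin_cases k
    · simpa using hy1
    · simpa using hy2
  · intro k
    fin_cases k
    · simpa using hden2
    · simpa using ha2
  · intro k
    have hgen : ∀ a : ℚ, ((a.num + p * a.den : ℤ) : ℝ) / (q:ℝ) ^ (r + s) =
        1 / (q:ℝ) ^ s * ((a.num : ℝ) / (q:ℝ) ^ r) + (((p:ℚ) / (q:ℚ) ^ (r + s) : ℚ) : ℝ) * ((a.den : ℤ) : ℝ) := by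
      intro a
      push_cast
      rw [pow_add]
      field_simp
    fin_cases k
    · exact hgen a1
    · exact hgen a2
  · push_cast
    have h1 : (p:ℝ) / (q:ℝ) ^ (r + s) - α = -((β * ((q:ℝ) ^ s - 1) - p) + β) / (q:ℝ) ^ (r + s) := by
      rw [hβ, pow_add]
      field_simp
      ring
    rw [h1, abs_div, abs_neg, abs_of_pos hqrs, div_le_iff₀ hqrs]
    have h2 : |β * ((q:ℝ) ^ s - 1) - p| ≤ (q:ℝ) ^ r := by
      refine hp.trans ?_
      have : Real.exp (-(2 * κ * Real.log q * s)) ≤ 1 := Real.exp_le_one_iff.2 (by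
        have : 0 ≤ 2 * κ * Real.log q * s := by positivity
        linarith)
      exact this.trans (one_le_pow₀ (by exact_mod_cast (show 1 ≤ q by omega)))
    have h3 : |β| ≤ (q:ℝ) ^ r := by
      rw [hβ, abs_of_pos (by positivity)]
      nlinarith
    calc _ ≤ (q:ℝ) ^ r + (q:ℝ) ^ r := (abs_add_le _ _).trans (add_le_add h2 h3)
      _ ≤ Real.exp (ε * Real.log q * s) * (q:ℝ) ^ r := by nlinarith
      _ = _ := by
        rw [hqexp, hqexp, ← Real.exp_add, ← Real.exp_add]
        congr 1
        push_cast
        ring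

end AB

namespace AB

/-- recursion for the truncations -/
lemma floor_rec (q : ℕ) (hq : 2 ≤ q) (x : ℝ) (hx : 0 ≤ x) (k : ℕ) :
    ⌊x * (q:ℝ) ^ (k + 1)⌋₊ = q * ⌊x * (q:ℝ) ^ k⌋₊ + qdigit q x k := by
  have hq0 : (q:ℝ) ≠ 0 := by positivity
  have h1 : ⌊x * (q:ℝ) ^ k⌋₊ = ⌊x * (q:ℝ) ^ (k + 1)⌋₊ / q := by
    rw [← Nat.floor_div_natCast]
    congr 1
    rw [pow_succ]
    field_simp
  have h2 : qdigit q x k = ⌊x * (q:ℝ) ^ (k + 1)⌋₊ % q := by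
    unfold qdigit
    rw [Int.floor_toNat]
  rw [h1, h2]
  exact (Nat.div_add_mod _ _).symm

lemma floor_agree (q : ℕ) (hq : 2 ≤ q) (x : ℝ) (hx : 0 ≤ x) (r t h : ℕ)
    (hag : ∀ i < h, qdigit q x (r + i) = qdigit q x (t + i)) :
    ⌊x * (q:ℝ) ^ (r + h)⌋₊ + q ^ h * ⌊x * (q:ℝ) ^ t⌋₊ =
      ⌊x * (q:ℝ) ^ (t + h)⌋₊ + q ^ h * ⌊x * (q:ℝ) ^ r⌋₊ := by
  induction h with
  | zero => simp [add_comm]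
  | succ h ih =>
    have ih' := ih (fun i hi => hag i (by omega))
    have h0 := hag h (by omega)
    rw [← add_assoc, ← add_assoc, floor_rec q hq x hx, floor_rec q hq x hx, h0, pow_succ]
    have : q * (⌊x * (q:ℝ) ^ (r + h)⌋₊ + q ^ h * ⌊x * (q:ℝ) ^ t⌋₊) =
      q * (⌊x * (q:ℝ) ^ (t + h)⌋₊ + q ^ h * ⌊x * (q:ℝ) ^ r⌋₊) := by rw [ih']
    linarith

lemma agree_approx (q : ℕ) (hq : 2 ≤ q) (x : ℝ) (hx : 0 ≤ x) (r s h : ℕ)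
    (hag : ∀ i < h, qdigit q x (r + i) = qdigit q x (r + s + i)) :
    ∃ p : ℤ, |x * (q:ℝ) ^ r * ((q:ℝ) ^ s - 1) - p| ≤ ((q:ℝ) ^ h)⁻¹ := by
  have h1 := floor_agree q hq x hx r (r + s) h hag
  refine ⟨(⌊x * (q:ℝ) ^ (r + s)⌋₊ : ℤ) - (⌊x * (q:ℝ) ^ r⌋₊ : ℤ), ?_⟩
  have hq0 : (0:ℝ) < (q:ℝ) := by positivity
  have hqh : (0:ℝ) < (q:ℝ) ^ h := by positivity
  have h2 : (⌊x * (q:ℝ) ^ (r + h)⌋₊ : ℝ) + (q:ℝ) ^ h * ⌊x * (q:ℝ) ^ (r + s)⌋₊ =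
      ⌊x * (q:ℝ) ^ (r + s + h)⌋₊ + (q:ℝ) ^ h * ⌊x * (q:ℝ) ^ r⌋₊ := by exact_mod_cast h1
  have a1 := Nat.floor_le (show 0 ≤ x * (q:ℝ) ^ (r + h) by positivity)
  have a2 := Nat.lt_floor_add_one (x * (q:ℝ) ^ (r + h))
  have b1 := Nat.floor_le (show 0 ≤ x * (q:ℝ) ^ (r + s + h) by positivity)
  have b2 := Nat.lt_floor_add_one (x * (q:ℝ) ^ (r + s + h))
  rw [← one_div, le_div_iff₀ hqh, ← abs_of_pos hqh, ← abs_mul]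
  have h3 : (x * (q:ℝ) ^ r * ((q:ℝ) ^ s - 1) -
      (((⌊x * (q:ℝ) ^ (r + s)⌋₊ : ℤ) - (⌊x * (q:ℝ) ^ r⌋₊ : ℤ) : ℤ) : ℝ)) * (q:ℝ) ^ h =
      (x * (q:ℝ) ^ (r + s + h) - ⌊x * (q:ℝ) ^ (r + s + h)⌋₊) -
      (x * (q:ℝ) ^ (r + h) - ⌊x * (q:ℝ) ^ (r + h)⌋₊) := by
    push_cast
    have e1 : x * (q:ℝ) ^ (r + s + h) = x * (q:ℝ) ^ r * (q:ℝ) ^ s * (q:ℝ) ^ h := by ring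
    have e2 : x * (q:ℝ) ^ (r + h) = x * (q:ℝ) ^ r * (q:ℝ) ^ h := by ring
    linear_combination -e1 + e2 - h2
  rw [h3, abs_le]
  constructor <;> linarith

/-- pigeonhole for words -/
lemma word_repeat (q : ℕ) (hq : 2 ≤ q) (x : ℝ) (n N : ℕ) (hN : qComplexity q x n ≤ N) :
    ∃ r t : ℕ, r < t ∧ t ≤ N ∧ ∀ i < n, qdigit q x (r + i) = qdigit q x (t + i) := by
  have hfin : {w : Fin n → ℕ | ∃ k : ℕ, ∀ i : Fin n, qdigit q x (k + (i : ℕ)) = w i}.Finite := by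
    refine (Set.Finite.pi' (fun _ : Fin n => Set.finite_Iio q)).subset ?_
    rintro w ⟨k, hk⟩ i
    rw [← hk i]
    exact Nat.mod_lt _ (by omega)
  have hcard : hfin.toFinset.card < (Finset.range (N + 1)).card := by
    rw [Finset.card_range, ← Set.ncard_eq_toFinset_card _ hfin]
    exact Nat.lt_succ_of_le hN
  obtain ⟨a, ha, b, hb, hab, he⟩ := Finset.exists_ne_map_eq_of_card_lt_of_maps_to hcard
    (f := fun k (i : Fin n) => qdigit q x (k + (i:ℕ))) (by
      intro k _
      simp only [Set.Finite.coe_toFinset, Set.mem_ofPred_eq]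
      exact ⟨k, fun i => rfl⟩)
  simp only [Finset.mem_range] at ha hb
  have he' : ∀ i < n, qdigit q x (a + i) = qdigit q x (b + i) := fun i hi => congrFun he ⟨i, hi⟩
  rcases lt_or_gt_of_ne hab with h | h
  · exact ⟨a, b, h, by omega, he'⟩
  · exact ⟨b, a, h, by omega, fun i hi => (he' i hi).symm⟩

lemma word_square (q : ℕ) (hq : 2 ≤ q) (x : ℝ) (n C : ℕ) (hC : 1 ≤ C) (hn : 1 ≤ n)
    (hN : qComplexity q x n ≤ C * n) :
    ∃ r S : ℕ, n ≤ 4 * S ∧ S ≤ C * n ∧ r ≤ C * n ∧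
      ∀ i < n - n / 2, qdigit q x (r + i) = qdigit q x (r + S + i) := by
  obtain ⟨r, t, hrt, ht, he⟩ := word_repeat q hq x n (C * n) hN
  obtain ⟨s, rfl⟩ := Nat.exists_eq_add_of_lt hrt
  have hCn : n ≤ C * n := Nat.le_mul_of_pos_left n hC
  by_cases hs : n ≤ 2 * (s + 1)
  · exact ⟨r, s + 1, by omega, by omega, by omega, fun i hi => he i (by omega)⟩
  · have hj : ∀ j i : ℕ, i + j * (s + 1) < n + (s + 1) → 
        qdigit q x (r + i) = qdigit q x (r + j * (s + 1) + i) := by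
      intro j
      induction j with
      | zero => intro i _; simp
      | succ j ih =>
        intro i hi
        have hi' : i + j * (s + 1) < n := by
          rw [Nat.succ_mul] at hi; omega
        rw [ih i (by omega)]
        have := he (i + j * (s + 1)) hi'
        rw [Nat.succ_mul]
        convert this using 2 <;> ring
    have h1 := Nat.div_mul_le_self n (2 * (s + 1))
    have h2 := Nat.lt_div_mul_add (a := n) (b := 2 * (s + 1)) (by omega)
    have h3 : 1 ≤ n / (2 * (s + 1)) := (Nat.one_le_div_iff (by omega)).2 (by omega)
    set j := n / (2 * (s + 1)) with hjd
    have h4 : j * (2 * (s + 1)) = 2 * (j * (s + 1)) := by ring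
    have h5 : s + 1 ≤ j * (s + 1) := Nat.le_mul_of_pos_left _ h3
    refine ⟨r, j * (s + 1), by omega, by omega, by omega, fun i hi => hj j i (by omega)⟩

end AB

/-- **Adamczewski–Bugeaud**: if `x ∈ (0,1)` is an irrational algebraic number, then for every
base `q ≥ 2` the complexity function `p` of its base-`q` digit sequence satisfies
`liminf p n / n = +∞`. -/
theorem adamczewski_bugeaud_complexity (x : ℝ) (hx : x ∈ Set.Ioo (0 : ℝ) 1)
    (hirr : Irrational x) (halg : IsAlgebraic ℚ x) :
    ∀ q : ℕ, 2 ≤ q →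
      Filter.liminf
        (fun n : ℕ => (((qComplexity q x n : ℝ) / (n : ℝ) : ℝ) : EReal)) Filter.atTop = ⊤ := by
  intro q hq
  refine Filter.Tendsto.liminf_eq ?_
  rw [EReal.tendsto_nhds_top_iff_real]
  intro y
  by_contra hcon
  rw [Filter.not_eventually] at hcon
  obtain ⟨C, hC⟩ := exists_nat_ge (max y 1)
  have hC1 : (1:ℝ) ≤ C := (le_max_right _ _).trans hC
  have hC1' : 1 ≤ C := by exact_mod_cast hC1
  have hq0 : (0:ℝ) < q := by positivity
  have hL : 0 < Real.log q := Real.log_pos (by exact_mod_cast (show 1 < q by omega))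
  refine AB.no_repeats x hx.1 hx.2 hirr halg q hq (4 * C) (1 / (4 * C)) (by positivity) ?_ ?_
  · rw [div_le_one (by positivity)]; linarith
  · intro S
    obtain ⟨n, hn, hfn⟩ := (Filter.frequently_atTop.1 hcon) (4 * S + 1)
    have hn0 : (0:ℝ) < n := by exact_mod_cast (show 0 < n by omega)
    have hp : qComplexity q x n ≤ C * n := by
      rw [not_lt, EReal.coe_le_coe_iff, div_le_iff₀ hn0] at hfn
      have : (qComplexity q x n : ℝ) ≤ C * n :=
        hfn.trans (mul_le_mul_of_nonneg_right ((le_max_left _ _).trans hC) hn0.le)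
      exact_mod_cast this
    obtain ⟨r, T, h1, h2, h3, h4⟩ := AB.word_square q hq x n C hC1' (by omega) hp
    refine ⟨T, by omega, r, ?_, ?_⟩
    · calc r ≤ C * n := h3
        _ ≤ C * (4 * T) := Nat.mul_le_mul_left _ h1
        _ = _ := by ring
    · obtain ⟨p, hp⟩ := AB.agree_approx q hq x hx.1.le r T _ h4
      refine ⟨p, hp.trans ?_⟩
      have hqe : (q:ℝ) ^ (n - n / 2) = Real.exp ((n - n / 2 : ℕ) * Real.log q) := by
        rw [Real.exp_nat_mul, Real.exp_log hq0]
      rw [hqe, ← Real.exp_neg]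
      apply Real.exp_le_exp.2
      have h5 : (n:ℝ) ≤ 2 * ((n - n / 2 : ℕ) : ℝ) := by
        exact_mod_cast (show n ≤ 2 * (n - n / 2) by omega)
      have h6 : (T:ℝ) ≤ C * n := by exact_mod_cast h2
      have h7 : 2 * (1 / (4 * (C:ℝ))) * Real.log q * T ≤ (n / 2) * Real.log q := by
        have : 2 * (1 / (4 * (C:ℝ))) * Real.log q * T = (T / C) / 2 * Real.log q := by
          field_simp; ring
        rw [this]
        have h8 : (T:ℝ) / C ≤ n := by rw [div_le_iff₀ (by positivity)]; linarith
        exact mul_le_mul_of_nonneg_right (by linarith) hL.le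
      have h9 := mul_le_mul_of_nonneg_right h5 hL.le
      linarith
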